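/- Let m ∈ ℝ, t ∈ [0,1] and ℏ ∈ (0,1]. For every amplitude a ∈ BS^m_{f,t}(ℝ^{3n}) there exists a symbol b^t ∈ S^m_f(ℝ^{2n}) such that Op_ℏ(a)u = Op^t_ℏ(b^t)u for every u ∈ C_c^∞(ℝⁿ). Moreover, the map a ↦ b^t is linear and continuous: for every N ∈ ℕ there exist C > 0 and N' ∈ ℕ, independent of a and of ℏ ∈ (0,1], such that |b^t|_{S^m_f, N} ≤ C |a|_{BS^m_{f,t}, N'}. -/

import Mathlib

open MeasureTheory Finset

noncomputable section

/-- Points of `ℝⁿ` (with `n = d + 1`) split as `q = (r, θ) ∈ ℝ × ℝ^d`. -/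
abbrev Q (d : ℕ) : Type := ℝ × (Fin d → ℝ)

/-- The coordinate direction `∂_r`. -/
def eR (d : ℕ) : Q d := ((1 : ℝ), 0)

/-- The coordinate direction `∂_{θ_i}`. -/
def eTh (d : ℕ) (i : Fin d) : Q d := ((0 : ℝ), Pi.single i 1)

/-- Directional derivative of a complex-valued function. -/
def dirD {E : Type*} [NormedAddCommGroup E] [NormedSpace ℝ E]
    (v : E) (g : E → ℂ) : E → ℂ :=
  fun x => fderiv ℝ g x v

/-- Multiindices `α = (α₀, α')` split as in the paper. -/
abbrev MIdx (d : ℕ) : Type := ℕ × (Fin d → ℕ)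

/-- `|α| = α₀ + |α'|`. -/
def deg {d : ℕ} (α : MIdx d) : ℕ := α.1 + ∑ i, α.2 i

/-- `|α'|`, the angular part of a multiindex. -/
def degA {d : ℕ} (α : MIdx d) : ℕ := ∑ i, α.2 i

/-- `∂_q^α` acting on functions on `ℝⁿ = ℝ × ℝ^d`. -/
def mderiv1 {d : ℕ} (α : MIdx d) (g : Q d → ℂ) : Q d → ℂ :=
  (dirD (eR d))^[α.1] <|
    (List.finRange d).foldr (fun i h => (dirD (eTh d i))^[α.2 i] h) g

/-- `∂_q^α ∂_p^β` acting on functions on phase space. -/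
def mderiv2 {d : ℕ} (α β : MIdx d) (g : Q d × Q d → ℂ) : Q d × Q d → ℂ :=
  (dirD ((eR d, 0) : Q d × Q d))^[α.1] <|
  (List.finRange d).foldr (fun i h => (dirD ((eTh d i, 0) : Q d × Q d))^[α.2 i] h) <|
  (dirD (((0 : Q d), eR d) : Q d × Q d))^[β.1] <|
  (List.finRange d).foldr (fun i h => (dirD (((0 : Q d), eTh d i) : Q d × Q d))^[β.2 i] h) g

/-- `∂_q^α ∂_p^β ∂_{q'}^γ` acting on amplitudes `a(q, p, q')`. -/
def mderiv3 {d : ℕ} (α β γ : MIdx d) (g : Q d × Q d × Q d → ℂ) : Q d × Q d × Q d → ℂ :=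
  (dirD ((eR d, 0, 0) : Q d × Q d × Q d))^[α.1] <|
  (List.finRange d).foldr (fun i h => (dirD ((eTh d i, 0, 0) : Q d × Q d × Q d))^[α.2 i] h) <|
  (dirD (((0 : Q d), eR d, 0) : Q d × Q d × Q d))^[β.1] <|
  (List.finRange d).foldr (fun i h => (dirD (((0 : Q d), eTh d i, 0) : Q d × Q d × Q d))^[β.2 i] h) <|
  (dirD (((0 : Q d), (0 : Q d), eR d) : Q d × Q d × Q d))^[γ.1] <|
  (List.finRange d).foldr (fun i h => (dirD (((0 : Q d), (0 : Q d), eTh d i) : Q d × Q d × Q d))^[γ.2 i] h) g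

/-- `⟨p⟩ = (1 + ρ² + |η|²)^{1/2}`. -/
def brP {d : ℕ} (p : Q d) : ℝ := Real.sqrt (1 + p.1 ^ 2 + ∑ i, (p.2 i) ^ 2)

/-- `⟨ρ ⊕ f(r)⁻¹ η⟩` evaluated at a phase-space point. -/
def brF {d : ℕ} (f : ℝ → ℝ) (x : Q d × Q d) : ℝ :=
  Real.sqrt (1 + x.2.1 ^ 2 + ∑ i, (x.2.2 i / f x.1.1) ^ 2)

/-- The standing assumption on `f : ℝ → [1, ∞)`: smooth, `f ≥ 1`, and all derivatives
of `log f` of order `≥ 1` are bounded. -/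
def GoodF (f : ℝ → ℝ) : Prop :=
  ContDiff ℝ (⊤ : ℕ∞) f ∧ (∀ r, 1 ≤ f r) ∧
    ∀ j : ℕ, 1 ≤ j → ∃ C : ℝ, ∀ r, |iteratedDeriv j (fun s => Real.log (f s)) r| ≤ C

/-- Membership in the symbol class `S^m_f(ℝ^{2n})`. -/
def IsSymbol {d : ℕ} (f : ℝ → ℝ) (m : ℝ) (a : Q d × Q d → ℂ) : Prop :=
  ContDiff ℝ (⊤ : ℕ∞) a ∧
    ∀ α β : MIdx d, ∃ C : ℝ, ∀ x : Q d × Q d,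
      ‖mderiv2 α β a x‖ ≤ C * f x.1.1 ^ ((degA α : ℝ) - (degA β : ℝ)) * brF f x ^ (m - (deg β : ℝ))

/-- The finite set of multiindices of length `≤ N`. -/
def idxSet (d N : ℕ) : Finset (MIdx d) :=
  ((Finset.range (N + 1)) ×ˢ Fintype.piFinset fun _ : Fin d => Finset.range (N + 1)).filter
    fun α => deg α ≤ N

/-- The seminorm `|a|_{S^m_f, N}`. -/
def symNorm {d : ℕ} (f : ℝ → ℝ) (m : ℝ) (N : ℕ) (a : Q d × Q d → ℂ) : ℝ :=
  ∑ α ∈ idxSet d N, ∑ β ∈ idxSet d N,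
    if deg α + deg β ≤ N then
      ⨆ x : Q d × Q d,
        f x.1.1 ^ (-(degA α : ℝ) + (degA β : ℝ)) * brF f x ^ (-m + (deg β : ℝ)) *
          ‖mderiv2 α β a x‖
    else 0

/-- `p · q`. -/
def qdot {d : ℕ} (p q : Q d) : ℝ := p.1 * q.1 + ∑ i, p.2 i * q.2 i

/-- The oscillating factor `e^{i p · v / ℏ}`. -/
def ephase {d : ℕ} (ℏ : ℝ) (p v : Q d) : ℂ :=
  Complex.exp (Complex.I * Complex.ofReal (qdot p v) / Complex.ofReal ℏ)

/-- The quantization `Op^t_ℏ(a)` of a symbol, acting on functions (trivialized half-densities). -/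
def Op {d : ℕ} (ℏ t : ℝ) (a : Q d × Q d → ℂ) (u : Q d → ℂ) : Q d → ℂ :=
  fun q => ((2 * Real.pi * ℏ) ^ (d + 1) : ℝ)⁻¹ •
    ∫ p : Q d, ∫ q' : Q d,
      a (t • q + (1 - t) • q', p) * ephase ℏ p (q - q') * u q'

/-- Membership in `C_c^∞(ℝⁿ)`. -/
def IsCc {d : ℕ} (u : Q d → ℂ) : Prop := ContDiff ℝ (⊤ : ℕ∞) u ∧ HasCompactSupport u

/-- The `L²` inner product `⟨w, v⟩ = ∫ w \bar v`. -/
def l2inner {d : ℕ} (w v : Q d → ℂ) : ℂ := ∫ q : Q d, w q * (starRingEnd ℂ) (v q)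

/-- The `L²` norm. -/
def l2norm {d : ℕ} (u : Q d → ℂ) : ℝ := (∫ q : Q d, ‖u q‖ ^ 2) ^ (1 / 2 : ℝ)

/-- `Σ_{|β| ≤ N} sup |∂^β u|`. -/
def ckNorm {d : ℕ} (N : ℕ) (u : Q d → ℂ) : ℝ :=
  ∑ β ∈ idxSet d N, ⨆ q : Q d, ‖mderiv1 β u q‖

/-- `⟨ρ ⊕ f(tr + (1-t)r')⁻¹ η⟩` evaluated at a point `(q, p, q')`. -/
def brFA {d : ℕ} (f : ℝ → ℝ) (t : ℝ) (x : Q d × Q d × Q d) : ℝ :=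
  Real.sqrt (1 + x.2.1.1 ^ 2 + ∑ i, (x.2.1.2 i / f (t * x.1.1 + (1 - t) * x.2.2.1)) ^ 2)

/-- Membership in the amplitude class `BS^m_{f,t}(ℝ^{3n})`. -/
def IsAmp {d : ℕ} (f : ℝ → ℝ) (m t : ℝ) (a : Q d × Q d × Q d → ℂ) : Prop :=
  ContDiff ℝ (⊤ : ℕ∞) a ∧
    ∀ α β γ : MIdx d, ∃ C : ℝ, ∀ x : Q d × Q d × Q d,
      ‖mderiv3 α β γ a x‖ ≤
        C * f (t * x.1.1 + (1 - t) * x.2.2.1) ^ ((degA α : ℝ) - (degA β : ℝ) + (degA γ : ℝ)) *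
          brFA f t x ^ (m - (deg β : ℝ))

/-- The seminorm `|a|_{BS^m_{f,t}, N}`. -/
def ampNorm {d : ℕ} (f : ℝ → ℝ) (m t : ℝ) (N : ℕ) (a : Q d × Q d × Q d → ℂ) : ℝ :=
  ∑ α ∈ idxSet d N, ∑ β ∈ idxSet d N, ∑ γ ∈ idxSet d N,
    if deg α + deg β + deg γ ≤ N then
      ⨆ x : Q d × Q d × Q d,
        f (t * x.1.1 + (1 - t) * x.2.2.1) ^ (-(degA α : ℝ) + (degA β : ℝ) - (degA γ : ℝ)) *
          brFA f t x ^ (-m + (deg β : ℝ)) * ‖mderiv3 α β γ a x‖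
    else 0

/-- The quantization of an amplitude `a(q, p, q')`. -/
def OpAmp {d : ℕ} (ℏ : ℝ) (a : Q d × Q d × Q d → ℂ) (u : Q d → ℂ) : Q d → ℂ :=
  fun q => ((2 * Real.pi * ℏ) ^ (d + 1) : ℝ)⁻¹ •
    ∫ p : Q d, ∫ q' : Q d, a (q, p, q') * ephase ℏ p (q - q') * u q'

/-!
In the coordinates `w = t q + (1 - t) q'`, `v = q - q'`, an amplitude `g(w, v, p)` and the symbol
`b(w, p) = (2π)⁻ⁿ ∬ e^{i z · v} g(w, v, p + ℏ z) dv dz`, an oscillatory integral, define the same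
operator: after replacing `p` by `ℏ p` one may take `ℏ = 1`, for `g` compactly supported in `(v, p)`
this is Fourier inversion in `(v, p)`, and the general case follows by truncating `g` and passing
to the limit on both sides by dominated convergence.

The base point `w` is only a parameter of `b`. The symplectic rescaling `v_θ ↦ v_θ / f(r)`,
`z_θ ↦ f(r) z_θ` at fixed `w = (r, θ)` preserves the phase and the measure and turns the weights of
the amplitude class into those with `f = 1`, where repeated integration by parts makes the integral
absolutely convergent, with the loss in `⟨p + ℏ z⟩^m` absorbed by Peetre's inequality.
-/

open Filter Topology
open scoped ContDiff

/-! ### Directional derivatives -/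

section DirectionalDerivative

variable {E F J : Type*} [NormedAddCommGroup E] [NormedSpace ℝ E]
  [NormedAddCommGroup F] [NormedSpace ℝ F] {D : J → E} {g h : E → ℂ}

@[fun_prop]
lemma contDiff_dirD (hg : ContDiff ℝ ∞ g) (v : E) : ContDiff ℝ ∞ (dirD v g) :=
  (hg.fderiv_right (m := ∞) (by simp)).clm_apply contDiff_const

lemma differentiable_of_contDiff_infty {G : E → F} (hG : ContDiff ℝ ∞ G) : Differentiable ℝ G :=
  hG.differentiable (by simp)

@[simp]
lemma dirD_const (v : E) (c : ℂ) : dirD v (fun _ => c) = 0 := by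
  funext x
  simp [dirD]

lemma dirD_add (hg : ContDiff ℝ ∞ g) (hh : ContDiff ℝ ∞ h) (v : E) :
    dirD v (g + h) = dirD v g + dirD v h := by
  funext x
  simp [dirD, fderiv_add (differentiable_of_contDiff_infty hg x)
    (differentiable_of_contDiff_infty hh x)]

lemma dirD_sub (hg : ContDiff ℝ ∞ g) (hh : ContDiff ℝ ∞ h) (v : E) :
    dirD v (g - h) = dirD v g - dirD v h := by
  funext x
  simp [dirD, fderiv_sub (differentiable_of_contDiff_infty hg x)
    (differentiable_of_contDiff_infty hh x)]

lemma dirD_mul (hg : ContDiff ℝ ∞ g) (hh : ContDiff ℝ ∞ h) (v : E) :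
    dirD v (g * h) = dirD v g * h + g * dirD v h := by
  funext x
  simp [dirD, fderiv_mul (differentiable_of_contDiff_infty hg x)
    (differentiable_of_contDiff_infty hh x)]
  ring

lemma dirD_const_smul (hg : ContDiff ℝ ∞ g) (c : ℂ) (v : E) : dirD v (c • g) = c • dirD v g := by
  funext x
  simp [dirD, fderiv_const_smul (differentiable_of_contDiff_infty hg x)]

lemma dirD_comm (hg : ContDiff ℝ ∞ g) (v w : E) : dirD v (dirD w g) = dirD w (dirD v g) := by
  funext x
  have hdiff : DifferentiableAt ℝ (fderiv ℝ g) x :=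
    differentiable_of_contDiff_infty (hg.fderiv_right (m := ∞) (by simp)) x
  have second (a b : E) :
      fderiv ℝ (fun y => fderiv ℝ g y a) x b = fderiv ℝ (fderiv ℝ g) x b a := by
    simp [fderiv_clm_apply hdiff (differentiableAt_const a)]
  have hsymm : IsSymmSndFDerivAt ℝ g x := hg.contDiffAt.isSymmSndFDerivAt <| by
    rw [minSmoothness_of_isRCLikeNormedField]
    exact WithTop.coe_le_coe.2 (le_top : (2 : ℕ∞) ≤ ⊤)
  change fderiv ℝ (fun y => fderiv ℝ g y w) x v = fderiv ℝ (fun y => fderiv ℝ g y v) x w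
  rw [second, second, hsymm v w]

lemma dirD_sum_smul {K : Type*} (s : Finset K) (g : E → ℂ) (c : K → ℝ) (v : K → E) :
    dirD (∑ k ∈ s, c k • v k) g = ∑ k ∈ s, (c k : ℂ) • dirD (v k) g := by
  funext x
  simp [dirD]

lemma dirD_comp_affine {g : F → ℂ} (hg : ContDiff ℝ ∞ g) (L : E →L[ℝ] F) (y : F) (v : E) :
    dirD v (fun x => g (y + L x)) = fun x => dirD (L v) g (y + L x) := by
  funext x
  have hL : HasFDerivAt (fun x => y + L x) L x := L.hasFDerivAt.const_add y
  have hcomp : HasFDerivAt (fun x => g (y + L x)) ((fderiv ℝ g (y + L x)).comp L) x :=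
    (differentiable_of_contDiff_infty hg (y + L x)).hasFDerivAt.comp x hL
  simp [dirD, hcomp.fderiv]

lemma contDiff_comp_affine {g : F → ℂ} (hg : ContDiff ℝ ∞ g) (L : E →L[ℝ] F) (y : F) :
    ContDiff ℝ ∞ fun x => g (y + L x) :=
  hg.comp (contDiff_const.add L.contDiff)

lemma dirD_eventuallyEq {x : E} (e : g =ᶠ[𝓝 x] h) (v : E) : dirD v g =ᶠ[𝓝 x] dirD v h := by
  filter_upwards [e.fderiv (𝕜 := ℝ)] with y hy
  simp [dirD, hy]

lemma tsupport_dirD_subset (g : E → ℂ) (v : E) : tsupport (dirD v g) ⊆ tsupport g := by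
  refine closure_minimal (fun x hx => support_fderiv_subset ℝ fun h0 => hx ?_) isClosed_closure
  simp [dirD, h0]

lemma hasCompactSupport_dirD (hg : HasCompactSupport g) (v : E) : HasCompactSupport (dirD v g) :=
  hg.of_isClosed_subset isClosed_closure (tsupport_dirD_subset g v)

/-- The iterated directional derivative `∂_{D j₁} ⋯ ∂_{D jₖ} g` along the word `j₁ ⋯ jₖ`. -/
def iterDirD (D : J → E) (l : List J) (g : E → ℂ) : E → ℂ := l.foldr (fun j => dirD (D j)) g

@[simp] lemma iterDirD_nil (D : J → E) (g : E → ℂ) : iterDirD D [] g = g := rfl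

@[simp] lemma iterDirD_cons (D : J → E) (j : J) (l : List J) (g : E → ℂ) :
    iterDirD D (j :: l) g = dirD (D j) (iterDirD D l g) := rfl

lemma iterDirD_append (D : J → E) (l l' : List J) (g : E → ℂ) :
    iterDirD D (l ++ l') g = iterDirD D l (iterDirD D l' g) := by
  simp [iterDirD]

@[fun_prop]
lemma contDiff_iterDirD (hg : ContDiff ℝ ∞ g) (l : List J) : ContDiff ℝ ∞ (iterDirD D l g) := by
  induction l with
  | nil => exact hg
  | cons j l ih => exact contDiff_dirD ih _

lemma iterDirD_perm (hg : ContDiff ℝ ∞ g) {l l' : List J} (hl : l.Perm l') :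
    iterDirD D l g = iterDirD D l' g := by
  induction hl with
  | nil => rfl
  | cons j _ ih => rw [iterDirD_cons, iterDirD_cons, ih]
  | swap i j l =>
    simp only [iterDirD_cons]
    exact dirD_comm (contDiff_iterDirD hg l) _ _
  | trans _ _ ih ih' => rw [ih, ih']

end DirectionalDerivative

/-! ### Weighted bounds on iterated derivatives -/

section DerivBound

variable {E F J K : Type*} [NormedAddCommGroup E] [NormedSpace ℝ E]
  [NormedAddCommGroup F] [NormedSpace ℝ F]

/-- `DerivBound D κ N B G` says that every derivative of `G` along at most `N` of the directions
`D j` is bounded by `B`, each differentiation along `D j` costing a further factor `κ j`. Symbol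
estimates are of this shape, with `κ` recording the gain or loss in each coordinate. -/
def DerivBound (D : J → E) (κ : J → E → ℝ) (N : ℕ) (B : E → ℝ) (G : E → ℂ) : Prop :=
  ∀ l : List J, l.length ≤ N → ∀ x, ‖iterDirD D l G x‖ ≤ B x * (l.map fun j => κ j x).prod

variable {D : J → E} {κ : J → E → ℝ} {N : ℕ} {B B' : E → ℝ} {G H : E → ℂ}

namespace DerivBound

lemma norm_le (hG : DerivBound D κ N B G) (x : E) : ‖G x‖ ≤ B x := by
  simpa using hG [] (Nat.zero_le N) x

lemma nonneg (hG : DerivBound D κ N B G) (x : E) : 0 ≤ B x :=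
  (norm_nonneg _).trans (hG.norm_le x)

lemma of_le {M : ℕ} (hG : DerivBound D κ N B G) (hM : M ≤ N) : DerivBound D κ M B G :=
  fun l hl => hG l (hl.trans hM)

lemma mono (hG : DerivBound D κ N B G) (hκ : ∀ j x, 0 ≤ κ j x) (hB : ∀ x, B x ≤ B' x) :
    DerivBound D κ N B' G := fun l hl x =>
  (hG l hl x).trans <| mul_le_mul_of_nonneg_right (hB x) <|
    List.prod_nonneg fun _ hs => by
      obtain ⟨j, -, rfl⟩ := List.mem_map.1 hs
      exact hκ j x

lemma zero_iff : DerivBound D κ 0 B G ↔ ∀ x, ‖G x‖ ≤ B x := by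
  refine ⟨norm_le, fun h l hl x => ?_⟩
  obtain rfl := List.length_eq_zero_iff.1 (Nat.le_zero.1 hl)
  simpa using h x

lemma succ_iff : DerivBound D κ (N + 1) B G ↔ (∀ x, ‖G x‖ ≤ B x) ∧
    ∀ j, DerivBound D κ N (fun x => B x * κ j x) (dirD (D j) G) := by
  constructor
  · refine fun h => ⟨h.norm_le, fun j l hl x => ?_⟩
    have hword := h (l ++ [j]) (by simpa using hl) x
    rw [iterDirD_append] at hword
    simpa [mul_assoc, mul_comm (κ j x)] using hword
  · rintro ⟨h0, h1⟩ l hl x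
    rcases List.eq_nil_or_concat' l with rfl | ⟨l', j, rfl⟩
    · simpa using h0 x
    · have hword := h1 j l' (by simpa using hl) x
      rw [iterDirD_append]
      simpa [mul_assoc, mul_comm (κ j x)] using hword

lemma dirD (hG : DerivBound D κ (N + 1) B G) (j : J) :
    DerivBound D κ N (fun x => B x * κ j x) (dirD (D j) G) :=
  (succ_iff.1 hG).2 j

lemma add (hG : ContDiff ℝ ∞ G) (hH : ContDiff ℝ ∞ H) (bG : DerivBound D κ N B G)
    (bH : DerivBound D κ N B' H) : DerivBound D κ N (fun x => B x + B' x) (G + H) := by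
  intro l hl x
  have split : iterDirD D l (G + H) = iterDirD D l G + iterDirD D l H := by
    clear hl
    induction l with
    | nil => rfl
    | cons j l ih =>
      simp only [iterDirD_cons, ih]
      exact dirD_add (contDiff_iterDirD hG l) (contDiff_iterDirD hH l) _
  rw [split, add_mul]
  exact (norm_add_le _ _).trans (add_le_add (bG l hl x) (bH l hl x))

lemma const_smul (hG : ContDiff ℝ ∞ G) (bG : DerivBound D κ N B G) (c : ℂ) :
    DerivBound D κ N (fun x => ‖c‖ * B x) (c • G) := by
  intro l hl x
  have pull : iterDirD D l (c • G) = c • iterDirD D l G := by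
    clear hl
    induction l with
    | nil => rfl
    | cons j l ih =>
      simp only [iterDirD_cons, ih]
      exact dirD_const_smul (contDiff_iterDirD hG l) c _
  rw [pull, Pi.smul_apply, norm_smul, mul_assoc]
  exact mul_le_mul_of_nonneg_left (bG l hl x) (norm_nonneg c)

lemma sub (hG : ContDiff ℝ ∞ G) (hH : ContDiff ℝ ∞ H) (bG : DerivBound D κ N B G)
    (bH : DerivBound D κ N B' H) : DerivBound D κ N (fun x => B x + B' x) (G - H) := by
  have hsub : G - H = G + (-1 : ℂ) • H := by simp [sub_eq_add_neg]
  rw [hsub]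
  simpa only [norm_neg, norm_one, one_mul] using
    add (H := (-1 : ℂ) • H) hG (hH.const_smul (-1 : ℂ)) bG (bH.const_smul hH (-1))

lemma zero_fun (hB : ∀ x, 0 ≤ B x) (hκ : ∀ j x, 0 ≤ κ j x) : DerivBound D κ N B 0 := by
  induction N generalizing B with
  | zero => exact zero_iff.2 fun x => by simpa using hB x
  | succ N ih =>
    refine succ_iff.2 ⟨fun x => by simpa using hB x, fun j => ?_⟩
    have hzero : _root_.dirD (D j) (0 : E → ℂ) = 0 := dirD_const _ 0
    rw [hzero]
    exact ih fun x => mul_nonneg (hB x) (hκ j x)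

lemma sum {s : Finset K} {B : K → E → ℝ} {G : K → E → ℂ} (hκ : ∀ j x, 0 ≤ κ j x)
    (hG : ∀ k ∈ s, ContDiff ℝ ∞ (G k)) (bG : ∀ k ∈ s, DerivBound D κ N (B k) (G k)) :
    DerivBound D κ N (fun x => ∑ k ∈ s, B k x) (∑ k ∈ s, G k) := by
  classical
  induction s using Finset.induction_on with
  | empty => exact zero_fun (by simp) hκ
  | insert a s ha ih =>
    simp only [Finset.sum_insert ha, Finset.forall_mem_insert] at hG bG ⊢
    have hsum : ContDiff ℝ ∞ (∑ k ∈ s, G k) := by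
      simpa only [← Finset.sum_apply] using ContDiff.sum hG.2
    exact add hG.1 hsum bG.1 (ih hG.2 bG.2)

lemma mul (hκ : ∀ j x, 0 ≤ κ j x) (hG : ContDiff ℝ ∞ G) (hH : ContDiff ℝ ∞ H)
    (bG : DerivBound D κ N B G) (bH : DerivBound D κ N B' H) :
    DerivBound D κ N (fun x => 2 ^ N * (B x * B' x)) (G * H) := by
  induction N generalizing B B' G H with
  | zero =>
    refine zero_iff.2 fun x => ?_
    simpa using mul_le_mul (bG.norm_le x) (bH.norm_le x) (norm_nonneg _) (bG.nonneg x)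
  | succ N ih =>
    refine succ_iff.2 ⟨fun x => ?_, fun j => ?_⟩
    · have hle : ‖(G * H) x‖ ≤ B x * B' x := by
        simpa using mul_le_mul (bG.norm_le x) (bH.norm_le x) (norm_nonneg _) (bG.nonneg x)
      exact hle.trans (le_mul_of_one_le_left (mul_nonneg (bG.nonneg x) (bH.nonneg x))
        (one_le_pow₀ one_le_two))
    · rw [dirD_mul hG hH]
      have leibniz := add ((contDiff_dirD hG _).mul hH) (hG.mul (contDiff_dirD hH _))
        (ih (contDiff_dirD hG _) hH (bG.dirD j) (bH.of_le N.le_succ))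
        (ih hG (contDiff_dirD hH _) (bG.of_le N.le_succ) (bH.dirD j))
      refine leibniz.mono hκ fun x => le_of_eq ?_
      ring

lemma comp_affine [Fintype K] {D' : K → F} {κ' : K → F → ℝ} {B : F → ℝ} {G : F → ℂ}
    (hκ : ∀ j x, 0 ≤ κ j x) (L : E →L[ℝ] F) (y : F) (c : J → K → ℝ)
    (hL : ∀ j, L (D j) = ∑ k, c j k • D' k)
    (hc : ∀ j x, ∑ k, |c j k| * κ' k (y + L x) ≤ κ j x) (hG : ContDiff ℝ ∞ G)
    (bG : DerivBound D' κ' N B G) :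
    DerivBound D κ N (fun x => B (y + L x)) (fun x => G (y + L x)) := by
  induction N generalizing B G with
  | zero => exact zero_iff.2 fun x => bG.norm_le _
  | succ N ih =>
    refine succ_iff.2 ⟨fun x => bG.norm_le _, fun j => ?_⟩
    have hcomp (k : K) : ContDiff ℝ ∞ fun x => _root_.dirD (D' k) G (y + L x) :=
      contDiff_comp_affine (contDiff_dirD hG _) L y
    have chain : _root_.dirD (D j) (fun x => G (y + L x)) =
        ∑ k, (c j k : ℂ) • fun x => _root_.dirD (D' k) G (y + L x) := by
      rw [dirD_comp_affine hG, hL, dirD_sum_smul]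
      funext x
      simp
    rw [chain]
    refine (sum hκ (fun k _ => (hcomp k).const_smul (c j k : ℂ)) fun k _ =>
      (ih (contDiff_dirD hG _) (bG.dirD k)).const_smul (hcomp k) (c j k : ℂ)).mono hκ fun x => ?_
    calc ∑ k, ‖(c j k : ℂ)‖ * (B (y + L x) * κ' k (y + L x))
        = B (y + L x) * ∑ k, |c j k| * κ' k (y + L x) := by
          rw [Finset.mul_sum]
          refine Finset.sum_congr rfl fun k _ => ?_
          rw [Complex.norm_real, Real.norm_eq_abs]
          ring
      _ ≤ B (y + L x) * κ j x := mul_le_mul_of_nonneg_left (hc j x) (bG.nonneg _)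

lemma comp_affine_of_smul [Finite K] {D' : K → F} {κ' : K → F → ℝ} {B : F → ℝ} {G : F → ℂ}
    (hκ : ∀ j x, 0 ≤ κ j x) (L : E →L[ℝ] F) (y : F) (c : J → ℝ) (σ : J → K)
    (hL : ∀ j, L (D j) = c j • D' (σ j))
    (hc : ∀ j x, |c j| * κ' (σ j) (y + L x) ≤ κ j x) (hG : ContDiff ℝ ∞ G)
    (bG : DerivBound D' κ' N B G) :
    DerivBound D κ N (fun x => B (y + L x)) (fun x => G (y + L x)) := by
  classical
  have := Fintype.ofFinite K
  refine comp_affine hκ L y (fun j => Pi.single (σ j) (c j)) (fun j => ?_) (fun j x => ?_) hG bG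
  · simp [hL, Pi.single_apply, ite_smul]
  · refine le_trans (le_of_eq ?_) (hc j x)
    simp [Pi.single_apply, apply_ite abs, ite_mul]

lemma weight_mono {κ' : J → E → ℝ} {A : E → ℝ} (hG : DerivBound D κ N B G)
    (hκ : ∀ j x, 0 ≤ κ j x) (hκ' : ∀ j x, 0 ≤ κ' j x) (hA : ∀ x, 1 ≤ A x)
    (h : ∀ j x, κ j x ≤ A x * κ' j x) :
    DerivBound D κ' N (fun x => A x ^ N * B x) G := by
  intro l hl x
  have prod_le : (l.map fun j => κ j x).prod ≤ A x ^ l.length * (l.map fun j => κ' j x).prod := by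
    clear hl
    induction l with
    | nil => simp
    | cons j l ih =>
      simp only [List.map_cons, List.prod_cons, List.length_cons]
      calc _ ≤ A x * κ' j x * (A x ^ l.length * (l.map fun j => κ' j x).prod) :=
            mul_le_mul (h j x) ih (List.prod_nonneg (by simpa using fun j _ => hκ j x))
              ((hκ j x).trans (h j x))
        _ = _ := by ring
  have prod_nonneg : 0 ≤ (l.map fun j => κ' j x).prod :=
    List.prod_nonneg (by simpa using fun j _ => hκ' j x)
  calc _ ≤ B x * (l.map fun j => κ j x).prod := hG l hl x
    _ ≤ B x * (A x ^ l.length * (l.map fun j => κ' j x).prod) :=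
      mul_le_mul_of_nonneg_left prod_le (hG.nonneg x)
    _ ≤ B x * (A x ^ N * (l.map fun j => κ' j x).prod) := by
      have := hG.nonneg x
      have := pow_le_pow_right₀ (hA x) hl
      gcongr
    _ = _ := by ring

end DerivBound

end DerivBound

/-! ### Integration by parts against an oscillating factor -/

section Regularization

variable {E X J : Type*} [NormedAddCommGroup E] [NormedSpace ℝ E]
  [NormedAddCommGroup X] [NormedSpace ℝ X]

/-- One integration by parts: the pair `s = (m, v)` of a multiplier and a direction acts by
`G ↦ m (G - ∂_v G)`. -/
def regStep (s : (E → ℂ) × E) (G : E → ℂ) : E → ℂ := s.1 * (G - dirD s.2 G)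

/-- Repeated integration by parts along a list of multipliers and directions. -/
def regularize (l : List ((E → ℂ) × E)) (G : E → ℂ) : E → ℂ := l.foldr regStep G

/-- `IsPhaseStep e (m, v)` holds when `m (1 + ∂_v)` fixes the phase factor `e`, so that integrating
by parts in `∫ e G` replaces `G` by `m (G - ∂_v G)`. -/
structure IsPhaseStep (e : E → ℂ) (s : (E → ℂ) × E) : Prop where
  contDiff : ContDiff ℝ ∞ s.1
  dirD_eq_zero : dirD s.2 s.1 = 0
  fixes : s.1 * (e + dirD s.2 e) = e

/-- `IsTameStep D (m, v)` holds when `v` is one of the directions `D j` and all derivatives of the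
smooth multiplier `m` along the `D j` are bounded by multiples of `|m|`. -/
structure IsTameStep (D : J → E) (s : (E → ℂ) × E) : Prop where
  contDiff : ContDiff ℝ ∞ s.1
  exists_direction : ∃ j, D j = s.2
  derivBound : ∀ N, ∃ K, 0 ≤ K ∧ DerivBound D 1 N (fun x => K * ‖s.1 x‖) s.1

variable {D : J → E} {l : List ((E → ℂ) × E)} {s : (E → ℂ) × E} {e G H : E → ℂ}

@[simp] lemma regularize_nil (G : E → ℂ) : regularize [] G = G := rfl

@[simp] lemma regularize_cons (s : (E → ℂ) × E) (l : List ((E → ℂ) × E)) (G : E → ℂ) :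
    regularize (s :: l) G = regStep s (regularize l G) := rfl

lemma contDiff_regStep (hs : ContDiff ℝ ∞ s.1) (hG : ContDiff ℝ ∞ G) :
    ContDiff ℝ ∞ (regStep s G) :=
  hs.mul (hG.sub (contDiff_dirD hG _))

lemma contDiff_regularize (hl : ∀ s ∈ l, ContDiff ℝ ∞ s.1) (hG : ContDiff ℝ ∞ G) :
    ContDiff ℝ ∞ (regularize l G) := by
  induction l with
  | nil => exact hG
  | cons s l ih =>
    rw [List.forall_mem_cons] at hl
    exact contDiff_regStep hl.1 (ih hl.2)

lemma regularize_eventuallyEq {x : E} (h : G =ᶠ[𝓝 x] H) :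
    regularize l G =ᶠ[𝓝 x] regularize l H := by
  induction l with
  | nil => exact h
  | cons s l ih =>
    filter_upwards [ih, dirD_eventuallyEq ih s.2] with y hy hy'
    simp [regStep, hy, hy']

lemma tsupport_regularize_subset (l : List ((E → ℂ) × E)) (G : E → ℂ) :
    tsupport (regularize l G) ⊆ tsupport G := by
  induction l with
  | nil => exact subset_rfl
  | cons s l ih =>
    refine (closure_minimal (fun x hx => ?_) isClosed_closure).trans ih
    by_contra hn
    refine hx ?_
    have hdir : dirD s.2 (regularize l G) x = 0 :=
      image_eq_zero_of_notMem_tsupport fun h => hn (tsupport_dirD_subset _ _ h)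
    simp [regStep, image_eq_zero_of_notMem_tsupport hn, hdir]

lemma hasCompactSupport_regularize (l : List ((E → ℂ) × E)) (hG : HasCompactSupport G) :
    HasCompactSupport (regularize l G) :=
  hG.of_isClosed_subset isClosed_closure (tsupport_regularize_subset l G)

lemma dirD_regularize {v : E} (hl : ∀ s ∈ l, ContDiff ℝ ∞ s.1) (hv : ∀ s ∈ l, dirD v s.1 = 0)
    (hG : ContDiff ℝ ∞ G) : dirD v (regularize l G) = regularize l (dirD v G) := by
  induction l with
  | nil => rfl
  | cons s l ih =>
    rw [List.forall_mem_cons] at hl hv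
    have hreg := contDiff_regularize hl.2 hG
    have hdiff : ContDiff ℝ ∞ (regularize l G - dirD s.2 (regularize l G)) :=
      hreg.sub (contDiff_dirD hreg _)
    rw [regularize_cons, regStep, dirD_mul hl.1 hdiff, hv.1,
      dirD_sub hreg (contDiff_dirD hreg _), dirD_comm hreg, ih hl.2 hv.2]
    simp [regStep]

lemma exists_derivBound_regularize (hl : ∀ s ∈ l, IsTameStep D s) (N : ℕ) :
    ∃ K, 0 ≤ K ∧ ∀ (B : E → ℝ) (G : E → ℂ), ContDiff ℝ ∞ G → DerivBound D 1 (N + l.length) B G →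
      DerivBound D 1 N (fun x => K * ((l.map fun s => ‖s.1 x‖).prod * B x)) (regularize l G) := by
  induction l generalizing N with
  | nil => exact ⟨1, zero_le_one, fun B G _ bG => by simpa using bG⟩
  | cons s l ih =>
    rw [List.forall_mem_cons] at hl
    obtain ⟨K, hK, bound⟩ := ih hl.2 (N + 1)
    obtain ⟨hs, ⟨j, hj⟩, tame⟩ := hl.1
    obtain ⟨K', hK', bs⟩ := tame N
    refine ⟨2 ^ N * (K' * (K + K)), by positivity, fun B G hG bG => ?_⟩
    have hreg : ContDiff ℝ ∞ (regularize l G) :=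
      contDiff_regularize (fun s hs => (hl.2 s hs).contDiff) hG
    have breg := bound B G hG (by convert bG using 1; simp; ring)
    have bdiff := (breg.of_le N.le_succ).sub hreg (contDiff_dirD hreg (D j)) (breg.dirD j)
    rw [regularize_cons, regStep, ← hj]
    refine (bs.mul (fun _ _ => zero_le_one) hs (hreg.sub (contDiff_dirD hreg _)) bdiff).mono
      (fun _ _ => zero_le_one) fun x => le_of_eq ?_
    simp only [Pi.one_apply, List.map_cons, List.prod_cons]
    ring

/-- The integrations by parts with constant multipliers `s.1` along the directions `D s.2`. -/
def constSteps (D : J → E) (l : List (ℂ × J)) : List ((E → ℂ) × E) :=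
  l.map fun s => (fun _ => s.1, D s.2)

lemma contDiff_of_mem_constSteps {l : List (ℂ × J)} : ∀ s ∈ constSteps D l, ContDiff ℝ ∞ s.1 := by
  intro s hs
  obtain ⟨s', -, rfl⟩ := List.mem_map.1 hs
  exact contDiff_const

lemma derivBound_regularize_constSteps (l : List (ℂ × J)) {N : ℕ} {B : E → ℝ}
    (hG : ContDiff ℝ ∞ G) (bG : DerivBound D 1 (N + l.length) B G) :
    DerivBound D 1 N (fun x => 2 ^ l.length * (l.map fun s => ‖s.1‖).prod * B x)
      (regularize (constSteps D l) G) := by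
  induction l generalizing N with
  | nil => simpa [constSteps] using bG
  | cons s l ih =>
    have hreg := contDiff_regularize (contDiff_of_mem_constSteps (D := D) (l := l)) hG
    have breg := ih (N := N + 1) (by convert bG using 1; simp; ring)
    have bdiff := (breg.of_le N.le_succ).sub hreg (contDiff_dirD hreg (D s.2)) (breg.dirD s.2)
    refine (bdiff.const_smul (hreg.sub (contDiff_dirD hreg _)) s.1).mono
      (fun _ _ => zero_le_one) fun x => le_of_eq ?_
    simp only [Pi.one_apply, List.map_cons, List.prod_cons, List.length_cons, pow_succ]
    ring

section Slice

/-- The steps `l` acting in the second variable of `X × E`. -/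
def liftSteps (X : Type*) [NormedAddCommGroup X] (l : List ((E → ℂ) × E)) :
    List ((X × E → ℂ) × (X × E)) :=
  l.map fun s => (fun z => s.1 z.2, (0, s.2))

lemma contDiff_of_mem_liftSteps (hl : ∀ s ∈ l, ContDiff ℝ ∞ s.1) :
    ∀ s ∈ liftSteps X l, ContDiff ℝ ∞ s.1 := by
  intro s hs
  obtain ⟨s', hs', rfl⟩ := List.mem_map.1 hs
  exact (hl s' hs').comp contDiff_snd

lemma dirD_of_mem_liftSteps (hl : ∀ s ∈ l, ContDiff ℝ ∞ s.1) (v : X) :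
    ∀ s ∈ liftSteps X l, dirD (v, (0 : E)) s.1 = 0 := by
  intro s hs
  obtain ⟨s', hs', rfl⟩ := List.mem_map.1 hs
  have chain := dirD_comp_affine (hl s' hs') (ContinuousLinearMap.snd ℝ X E) 0 (v, (0 : E))
  simp only [zero_add, ContinuousLinearMap.coe_snd'] at chain
  rw [chain]
  funext z
  simp [dirD]

lemma dirD_slice {G : X × E → ℂ} (hG : ContDiff ℝ ∞ G) (x : X) (v : E) :
    dirD v (fun y => G (x, y)) = fun y => dirD (0, v) G (x, y) := by
  simpa using dirD_comp_affine hG (ContinuousLinearMap.inr ℝ X E) (x, 0) v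

lemma regularize_slice (hl : ∀ s ∈ l, ContDiff ℝ ∞ s.1) {G : X × E → ℂ} (hG : ContDiff ℝ ∞ G)
    (x : X) : regularize l (fun y => G (x, y)) = fun y => regularize (liftSteps X l) G (x, y) := by
  induction l with
  | nil => rfl
  | cons s l ih =>
    rw [List.forall_mem_cons] at hl
    have hreg : ContDiff ℝ ∞ (regularize (liftSteps X l) G) :=
      contDiff_regularize (contDiff_of_mem_liftSteps hl.2) hG
    funext y
    simp only [regularize_cons, ih hl.2, regStep, dirD_slice hreg, Pi.mul_apply, Pi.sub_apply]
    rfl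

end Slice

section Integral

variable [MeasureSpace E] [BorelSpace E] [FiniteDimensional ℝ E]
  [Measure.IsAddHaarMeasure (volume : Measure E)]

lemma integral_mul_regStep (he : ContDiff ℝ ∞ e) (hs : IsPhaseStep e s) (hG : ContDiff ℝ ∞ G)
    (hGc : HasCompactSupport G) : ∫ x, e x * regStep s G x = ∫ x, e x * G x := by
  set P := s.1 * G with hP
  have hPsm : ContDiff ℝ ∞ P := hs.contDiff.mul hG
  have hPc : HasCompactSupport P := hGc.mul_left
  have dirP : dirD s.2 P = s.1 * dirD s.2 G := by
    rw [hP, dirD_mul hs.contDiff hG, hs.dirD_eq_zero]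
    simp
  have int_dirP : Integrable fun x => dirD s.2 P x * e x :=
    ((contDiff_dirD hPsm _).mul he).continuous.integrable_of_hasCompactSupport
      (hasCompactSupport_dirD hPc _).mul_right
  have int_P_dir : Integrable fun x => P x * dirD s.2 e x :=
    (hPsm.mul (contDiff_dirD he _)).continuous.integrable_of_hasCompactSupport hPc.mul_right
  have int_P : Integrable fun x => P x * e x :=
    (hPsm.mul he).continuous.integrable_of_hasCompactSupport hPc.mul_right
  have by_parts : ∫ x, P x * dirD s.2 e x = -∫ x, dirD s.2 P x * e x :=
    integral_mul_fderiv_eq_neg_fderiv_mul_of_integrable (𝕜 := ℂ) int_dirP int_P_dir int_P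
      (fun x _ => differentiable_of_contDiff_infty hPsm x)
      (fun x _ => differentiable_of_contDiff_infty he x)
  have expand (x : E) : e x * G x = P x * e x + P x * dirD s.2 e x := by
    have fixes := congrFun hs.fixes x
    simp only [Pi.mul_apply, Pi.add_apply] at fixes
    simp only [hP, Pi.mul_apply]
    linear_combination -G x * fixes
  have expand_step (x : E) : e x * regStep s G x = P x * e x - dirD s.2 P x * e x := by
    rw [dirP]
    simp only [regStep, hP, Pi.mul_apply, Pi.sub_apply]
    ring
  simp_rw [expand, expand_step]
  rw [integral_add int_P int_P_dir, integral_sub int_P int_dirP, by_parts, sub_eq_add_neg]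

lemma integral_mul_regularize (he : ContDiff ℝ ∞ e) (hl : ∀ s ∈ l, IsPhaseStep e s)
    (hG : ContDiff ℝ ∞ G) (hGc : HasCompactSupport G) :
    ∫ x, e x * regularize l G x = ∫ x, e x * G x := by
  induction l with
  | nil => rfl
  | cons s l ih =>
    rw [List.forall_mem_cons] at hl
    rw [regularize_cons, integral_mul_regStep he hl.1
      (contDiff_regularize (fun s hs => (hl.2 s hs).contDiff) hG)
      (hasCompactSupport_regularize l hGc), ih hl.2]

end Integral

end Regularization

/-! ### The multipliers `(1 + iℓ)⁻¹` -/

section PhaseMultiplier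

variable {E J : Type*} [NormedAddCommGroup E] [NormedSpace ℝ E]

/-- The multiplier `(1 + iℓ)⁻¹` of an integration by parts in a direction along which the phase has
derivative `ℓ`. -/
def phaseMultiplier (ℓ : E →L[ℝ] ℝ) : E → ℂ := fun x => (1 + Complex.I * (ℓ x : ℂ))⁻¹

lemma one_add_I_mul_ne_zero (s : ℝ) : 1 + Complex.I * (s : ℂ) ≠ 0 := fun h => by
  simpa using congrArg Complex.re h

lemma norm_one_add_I_mul (s : ℝ) : ‖1 + Complex.I * (s : ℂ)‖ = √(1 + s ^ 2) := by
  simp [Complex.norm_def, Complex.normSq_apply, sq]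

lemma one_le_norm_one_add_I_mul (s : ℝ) : 1 ≤ ‖1 + Complex.I * (s : ℂ)‖ := by
  rw [norm_one_add_I_mul]
  exact Real.one_le_sqrt.2 (le_add_of_nonneg_right (sq_nonneg s))

lemma contDiff_one_add_I_mul (ℓ : E →L[ℝ] ℝ) :
    ContDiff ℝ ∞ fun x => 1 + Complex.I * (ℓ x : ℂ) :=
  contDiff_const.add (contDiff_const.mul (Complex.ofRealCLM.contDiff.comp ℓ.contDiff))

lemma contDiff_phaseMultiplier (ℓ : E →L[ℝ] ℝ) : ContDiff ℝ ∞ (phaseMultiplier ℓ) :=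
  (contDiff_one_add_I_mul ℓ).inv fun _ => one_add_I_mul_ne_zero _

lemma norm_phaseMultiplier_le_one (ℓ : E →L[ℝ] ℝ) (x : E) : ‖phaseMultiplier ℓ x‖ ≤ 1 := by
  rw [phaseMultiplier, norm_inv]
  exact inv_le_one_of_one_le₀ (one_le_norm_one_add_I_mul _)

lemma dirD_phaseMultiplier (ℓ : E →L[ℝ] ℝ) (v : E) : dirD v (phaseMultiplier ℓ) =
    (-Complex.I * (ℓ v : ℂ)) • (phaseMultiplier ℓ * phaseMultiplier ℓ) := by
  funext x
  have hden : HasFDerivAt (fun y => 1 + Complex.I * (ℓ y : ℂ))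
      (Complex.I • Complex.ofRealCLM.comp ℓ) x :=
    (((Complex.ofRealCLM.comp ℓ).hasFDerivAt (x := x)).const_mul Complex.I).const_add 1
  have hinv := (hasDerivAt_inv (one_add_I_mul_ne_zero (ℓ x))).comp_hasFDerivAt x hden
  have hfderiv : fderiv ℝ (phaseMultiplier ℓ) x = _ := hinv.fderiv
  simp only [dirD, hfderiv, phaseMultiplier, Pi.smul_apply, Pi.mul_apply, smul_eq_mul,
    _root_.smul_apply, ContinuousLinearMap.comp_apply, Complex.ofRealCLM_apply]
  rw [sq, mul_inv]
  ring

lemma dirD_phaseMultiplier_eq_zero {ℓ : E →L[ℝ] ℝ} {v : E} (h : ℓ v = 0) :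
    dirD v (phaseMultiplier ℓ) = 0 := by
  simp [dirD_phaseMultiplier, h]

lemma exists_derivBound_phaseMultiplier {D : J → E} {ℓ : E →L[ℝ] ℝ} (hD : ∀ j, |ℓ (D j)| ≤ 1)
    (N : ℕ) : ∃ K, 0 ≤ K ∧ DerivBound D 1 N (fun x => K * ‖phaseMultiplier ℓ x‖)
      (phaseMultiplier ℓ) := by
  have hsm := contDiff_phaseMultiplier ℓ
  have hone (j : J) (x : E) : 0 ≤ (1 : J → E → ℝ) j x := zero_le_one
  induction N with
  | zero => exact ⟨1, zero_le_one, DerivBound.zero_iff.2 fun x => by simp⟩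
  | succ N ih =>
    obtain ⟨K, hK, bound⟩ := ih
    refine ⟨max 1 (2 ^ N * (K * K)), by positivity, DerivBound.succ_iff.2
      ⟨fun x => le_mul_of_one_le_left (norm_nonneg _) (le_max_left _ _), fun j => ?_⟩⟩
    rw [dirD_phaseMultiplier]
    refine ((bound.mul hone hsm hsm bound).const_smul (hsm.mul hsm) _).mono hone fun x => ?_
    have hcoef : ‖-Complex.I * (ℓ (D j) : ℂ)‖ ≤ 1 := by simpa using hD j
    have hle := norm_phaseMultiplier_le_one ℓ x
    calc ‖-Complex.I * (ℓ (D j) : ℂ)‖ *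
          (2 ^ N * (K * ‖phaseMultiplier ℓ x‖ * (K * ‖phaseMultiplier ℓ x‖)))
        ≤ 1 * (2 ^ N * (K * ‖phaseMultiplier ℓ x‖ * (K * 1))) := by gcongr
      _ = 2 ^ N * (K * K) * ‖phaseMultiplier ℓ x‖ := by ring
      _ ≤ max 1 (2 ^ N * (K * K)) * ‖phaseMultiplier ℓ x‖ * 1 := by
        rw [mul_one]
        gcongr
        exact le_max_right _ _

end PhaseMultiplier

/-! ### Coordinates and the phase `e^{i z · v}` -/

section Phase

variable {d : ℕ}

instance (d : ℕ) : Measure.IsAddHaarMeasure (volume : Measure (Q d)) :=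
  Measure.prod.instIsAddHaarMeasure volume volume

instance (d : ℕ) : Measure.IsAddHaarMeasure (volume : Measure (Q d × Q d)) :=
  Measure.prod.instIsAddHaarMeasure volume volume

/-- Indices of the coordinates of `ℝ × ℝ^d`: `none` for the radial one, `some i` for the angular
ones. -/
abbrev Coord (d : ℕ) : Type := Option (Fin d)

/-- The unit vector of a coordinate of `ℝ × ℝ^d`. -/
def coordVec : Coord d → Q d
  | none => eR d
  | some i => eTh d i

/-- A coordinate of `ℝ × ℝ^d` as a linear functional. -/
def coordFun : Coord d → Q d →L[ℝ] ℝ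
  | none => ContinuousLinearMap.fst ℝ ℝ (Fin d → ℝ)
  | some i => (ContinuousLinearMap.proj i).comp (ContinuousLinearMap.snd ℝ ℝ (Fin d → ℝ))

@[simp] lemma coordFun_none (q : Q d) : coordFun none q = q.1 := rfl

@[simp] lemma coordFun_some (i : Fin d) (q : Q d) : coordFun (some i) q = q.2 i := rfl

lemma coordFun_coordVec (j k : Coord d) : coordFun j (coordVec k) = if j = k then 1 else 0 := by
  cases j <;> cases k <;> simp [coordVec, eR, eTh, Pi.single_apply]

lemma abs_coordFun_coordVec_le (j k : Coord d) : |coordFun j (coordVec k)| ≤ 1 := by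
  rw [coordFun_coordVec]
  split_ifs <;> simp

lemma sum_coordFun_smul_coordVec (q : Q d) : ∑ j, coordFun j q • coordVec j = q := by
  rw [Fintype.sum_option]
  ext i
  · simp [coordVec, eR, eTh, Prod.fst_sum]
  · simp [coordVec, eR, eTh, Prod.snd_sum, Pi.single_apply]

lemma qdot_eq_sum (p q : Q d) : qdot p q = ∑ j, coordFun j p * coordFun j q := by
  rw [Fintype.sum_option]
  simp [qdot]

/-- The coordinate directions of `ℝⁿ × ℝⁿ`. -/
def pairVec : Coord d ⊕ Coord d → Q d × Q d :=
  Sum.elim (fun j => (coordVec j, 0)) fun j => (0, coordVec j)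

/-- The coordinate of `ℝⁿ × ℝⁿ` dual to a given one under the pairing `(v, z) ↦ z · v`. -/
def dualCoord : Coord d ⊕ Coord d → Q d × Q d →L[ℝ] ℝ :=
  Sum.elim (fun j => (coordFun j).comp (ContinuousLinearMap.snd ℝ (Q d) (Q d)))
    fun j => (coordFun j).comp (ContinuousLinearMap.fst ℝ (Q d) (Q d))

lemma abs_dualCoord_pairVec_le (c c' : Coord d ⊕ Coord d) : |dualCoord c (pairVec c')| ≤ 1 := by
  cases c <;> cases c' <;> simp [dualCoord, pairVec, abs_coordFun_coordVec_le]

lemma dualCoord_pairVec_self (c : Coord d ⊕ Coord d) : dualCoord c (pairVec c) = 0 := by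
  cases c <;> simp [dualCoord, pairVec]

/-- The phase factor `(v, z) ↦ e^{i z · v}`. -/
def phase (y : Q d × Q d) : ℂ := Complex.exp (Complex.I * (qdot y.2 y.1 : ℂ))

lemma norm_phase (y : Q d × Q d) : ‖phase y‖ = 1 := by
  rw [phase, mul_comm]
  exact Complex.norm_exp_ofReal_mul_I _

lemma qdot_eq_sum_dualCoord : (fun y : Q d × Q d => qdot y.2 y.1) =
    fun y => ∑ j, dualCoord (.inl j) y * dualCoord (.inr j) y :=
  funext fun _ => qdot_eq_sum _ _

lemma contDiff_phase : ContDiff ℝ ∞ (phase : Q d × Q d → ℂ) := by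
  have hdot : ContDiff ℝ ∞ fun y : Q d × Q d => qdot y.2 y.1 := by
    rw [qdot_eq_sum_dualCoord]
    exact ContDiff.sum fun j _ => (dualCoord (.inl j)).contDiff.mul (dualCoord (.inr j)).contDiff
  exact (contDiff_const.mul (Complex.ofRealCLM.contDiff.comp hdot)).cexp

lemma dirD_phase (c : Coord d ⊕ Coord d) (y : Q d × Q d) :
    dirD (pairVec c) phase y = Complex.I * (dualCoord c y : ℂ) * phase y := by
  have hdot : HasFDerivAt (fun y : Q d × Q d => qdot y.2 y.1)
      (∑ j, (coordFun j y.2 • dualCoord (.inr j) + coordFun j y.1 • dualCoord (.inl j))) y := by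
    rw [qdot_eq_sum_dualCoord]
    exact HasFDerivAt.fun_sum fun j _ =>
      ((dualCoord (.inl j)).hasFDerivAt (x := y)).mul ((dualCoord (.inr j)).hasFDerivAt (x := y))
  have hphase : fderiv ℝ phase y = _ :=
    ((Complex.ofRealCLM.hasFDerivAt.comp y hdot).const_mul Complex.I).cexp.fderiv
  have heval : (∑ j, (coordFun j y.2 • dualCoord (.inr j) + coordFun j y.1 • dualCoord (.inl j)))
      (pairVec c) = dualCoord c y := by
    rcases c with (_ | i) | (_ | i) <;> simp [dualCoord, pairVec, coordFun_coordVec]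
  rw [dirD, hphase, _root_.smul_apply, _root_.smul_apply, ContinuousLinearMap.comp_apply, heval]
  simp only [phase, Function.comp_apply, Complex.ofRealCLM_apply, smul_eq_mul]
  ring

/-- The integration by parts along one coordinate of `ℝⁿ × ℝⁿ`, gaining decay in the dual one. -/
def phaseStep (c : Coord d ⊕ Coord d) : (Q d × Q d → ℂ) × (Q d × Q d) :=
  (phaseMultiplier (dualCoord c), pairVec c)

lemma isPhaseStep_phaseStep (c : Coord d ⊕ Coord d) : IsPhaseStep phase (phaseStep c) where
  contDiff := contDiff_phaseMultiplier _
  dirD_eq_zero := dirD_phaseMultiplier_eq_zero (dualCoord_pairVec_self c)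
  fixes := by
    funext y
    have := one_add_I_mul_ne_zero (dualCoord c y)
    simp only [phaseStep, Pi.mul_apply, Pi.add_apply, dirD_phase, phaseMultiplier]
    field_simp

lemma isTameStep_phaseStep (c : Coord d ⊕ Coord d) : IsTameStep pairVec (phaseStep c) where
  contDiff := contDiff_phaseMultiplier _
  exists_direction := ⟨c, rfl⟩
  derivBound := exists_derivBound_phaseMultiplier fun _ => abs_dualCoord_pairVec_le _ _

/-- The list of integrations by parts gaining `k` powers of decay in each coordinate of `z` and two
in each coordinate of `v`. -/
def phaseSteps (d k : ℕ) : List ((Q d × Q d → ℂ) × (Q d × Q d)) :=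
  (List.replicate k (univ.toList.map fun j : Coord d => phaseStep (.inl j))).flatten ++
    (List.replicate 2 (univ.toList.map fun j : Coord d => phaseStep (.inr j))).flatten

lemma exists_eq_phaseStep_of_mem {k : ℕ} {s} (hs : s ∈ phaseSteps d k) :
    ∃ c, s = phaseStep c := by
  simp only [phaseSteps, List.mem_append, List.mem_flatten, List.mem_replicate] at hs
  rcases hs with ⟨l, ⟨_, rfl⟩, hs⟩ | ⟨l, ⟨_, rfl⟩, hs⟩ <;>
  · obtain ⟨j, _, rfl⟩ := List.mem_map.1 hs
    exact ⟨_, rfl⟩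

lemma isPhaseStep_of_mem {k : ℕ} : ∀ s ∈ phaseSteps d k, IsPhaseStep phase s := fun s hs => by
  obtain ⟨c, rfl⟩ := exists_eq_phaseStep_of_mem hs
  exact isPhaseStep_phaseStep c

lemma contDiff_of_mem_phaseSteps {k : ℕ} : ∀ s ∈ phaseSteps d k, ContDiff ℝ ∞ s.1 :=
  fun s hs => (isPhaseStep_of_mem s hs).contDiff

/-- The product `∏ⱼ |1 + i pⱼ| = ∏ⱼ (1 + pⱼ²)^{1/2}`, a weight comparable to a power of `⟨p⟩`. -/
def prodBracket (p : Q d) : ℝ := ∏ j, ‖1 + Complex.I * (coordFun j p : ℂ)‖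

lemma one_le_prodBracket (p : Q d) : 1 ≤ prodBracket p :=
  Finset.one_le_prod fun _ _ => one_le_norm_one_add_I_mul _

lemma prodBracket_pos (p : Q d) : 0 < prodBracket p := zero_lt_one.trans_le (one_le_prodBracket p)

@[fun_prop]
lemma continuous_prodBracket : Continuous (prodBracket : Q d → ℝ) := by
  unfold prodBracket
  fun_prop

lemma integrable_prodBracket_sq_inv : Integrable fun p : Q d => (prodBracket p ^ 2)⁻¹ := by
  have hprod (p : Q d) :
      (prodBracket p ^ 2)⁻¹ = (1 + p.1 ^ 2)⁻¹ * ∏ i, (1 + p.2 i ^ 2)⁻¹ := by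
    have hsq (s : ℝ) : ‖1 + Complex.I * (s : ℂ)‖ ^ 2 = 1 + s ^ 2 := by
      rw [norm_one_add_I_mul, Real.sq_sqrt (by positivity)]
    rw [prodBracket, ← Finset.prod_pow, Fintype.prod_option]
    simp only [hsq, coordFun_none, coordFun_some, mul_inv, Finset.prod_inv_distrib]
  simp_rw [hprod]
  exact Integrable.mul_prod (f := fun s : ℝ => (1 + s ^ 2)⁻¹) integrable_inv_one_add_sq <|
    Integrable.fintype_prod (f := fun _ (s : ℝ) => (1 + s ^ 2)⁻¹) fun _ => integrable_inv_one_add_sq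

/-- The integrable weight `⟨v⟩⁻² ⟨z⟩⁻²` on `ℝⁿ × ℝⁿ`, for the product brackets. -/
def pairWeight (y : Q d × Q d) : ℝ := (prodBracket y.1 ^ 2)⁻¹ * (prodBracket y.2 ^ 2)⁻¹

lemma pairWeight_nonneg (y : Q d × Q d) : 0 ≤ pairWeight y := by
  unfold pairWeight
  positivity

lemma integrable_pairWeight : Integrable (pairWeight : Q d × Q d → ℝ) :=
  Integrable.mul_prod (f := fun p : Q d => (prodBracket p ^ 2)⁻¹) integrable_prodBracket_sq_inv
    integrable_prodBracket_sq_inv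

lemma prod_norm_inv_one_add_I_mul (p : Q d) : (univ.toList.map fun j : Coord d =>
    ‖(1 + Complex.I * (coordFun j p : ℂ))⁻¹‖).prod = (prodBracket p)⁻¹ := by
  rw [Finset.prod_map_toList]
  simp only [norm_inv, Finset.prod_inv_distrib, prodBracket]

lemma prod_norm_phaseSteps (k : ℕ) (y : Q d × Q d) :
    ((phaseSteps d k).map fun s => ‖s.1 y‖).prod =
      (prodBracket y.2 ^ k)⁻¹ * (prodBracket y.1 ^ 2)⁻¹ := by
  simp only [phaseSteps, List.map_append, List.prod_append, List.map_flatten, List.map_replicate,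
    List.prod_flatten, List.prod_replicate, List.map_map]
  exact (congrArg₂ (· ^ k * · ^ 2) (prod_norm_inv_one_add_I_mul y.2)
    (prod_norm_inv_one_add_I_mul y.1)).trans (by simp only [inv_pow])

/-- The number of derivatives entering `regularize (phaseSteps d k)`. -/
def numSteps (d k : ℕ) : ℕ := (phaseSteps d k).length

lemma exists_norm_regularize_le {M k : ℕ} (hk : M + 2 ≤ k) :
    ∃ K, 0 ≤ K ∧ ∀ (C : ℝ) (G : Q d × Q d → ℂ), 0 ≤ C → ContDiff ℝ ∞ G →
      DerivBound pairVec 1 (numSteps d k) (fun y => C * prodBracket y.2 ^ M) G →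
      ∀ y, ‖regularize (phaseSteps d k) G y‖ ≤ K * C * pairWeight y := by
  have tame : ∀ s ∈ phaseSteps d k, IsTameStep pairVec s := fun s hs => by
    obtain ⟨c, rfl⟩ := exists_eq_phaseStep_of_mem hs
    exact isTameStep_phaseStep c
  obtain ⟨K, hK, bound⟩ := exists_derivBound_regularize tame 0
  refine ⟨K, hK, fun C G hC hG bG y => ?_⟩
  have hv := prodBracket_pos y.1
  have hz := prodBracket_pos y.2
  have decay : (prodBracket y.2 ^ k)⁻¹ * prodBracket y.2 ^ M ≤ (prodBracket y.2 ^ 2)⁻¹ := by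
    rw [inv_mul_le_iff₀ (by positivity), ← div_eq_mul_inv, le_div_iff₀ (by positivity), ← pow_add]
    exact pow_le_pow_right₀ (one_le_prodBracket _) hk
  calc ‖regularize (phaseSteps d k) G y‖
      ≤ K * ((prodBracket y.2 ^ k)⁻¹ * (prodBracket y.1 ^ 2)⁻¹ * (C * prodBracket y.2 ^ M)) := by
        rw [← prod_norm_phaseSteps]
        exact (bound _ G hG (by simpa [numSteps] using bG)).norm_le y
    _ = K * C * ((prodBracket y.1 ^ 2)⁻¹ * ((prodBracket y.2 ^ k)⁻¹ * prodBracket y.2 ^ M)) := by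
        ring
    _ ≤ K * C * pairWeight y := by
        unfold pairWeight
        gcongr

end Phase

/-! ### Cutoff sequences -/

section Cutoff

variable {E F J : Type*} [NormedAddCommGroup E] [NormedSpace ℝ E]
  [NormedAddCommGroup F] [NormedSpace ℝ F]

/-- A sequence of smooth compactly supported functions, each of whose derivatives is bounded
uniformly in the sequence, which is eventually equal to `1` near every point. -/
structure IsCutoffSeq (χ : ℕ → E → ℂ) : Prop where
  contDiff : ∀ n, ContDiff ℝ ∞ (χ n)
  hasCompactSupport : ∀ n, HasCompactSupport (χ n)
  exists_bound : ∀ l : List E, ∃ K, ∀ n x, ‖iterDirD id l (χ n) x‖ ≤ K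
  eventually_eq_one : ∀ x, ∀ᶠ n in atTop, χ n =ᶠ[𝓝 x] 1

lemma iterDirD_comp_affine {g : F → ℂ} (hg : ContDiff ℝ ∞ g) (D : J → E) (L : E →L[ℝ] F) (y : F)
    (l : List J) : iterDirD D l (fun x => g (y + L x)) =
      fun x => iterDirD id (l.map fun j => L (D j)) g (y + L x) := by
  induction l with
  | nil => rfl
  | cons j l ih =>
    simp only [iterDirD_cons, List.map_cons, ih]
    exact dirD_comp_affine (contDiff_iterDirD hg _) L y _

lemma iterDirD_map_smul {g : E → ℂ} (hg : ContDiff ℝ ∞ g) (s : ℝ) (l : List E) :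
    iterDirD id (l.map (s • ·)) g = ((s ^ l.length : ℝ) : ℂ) • iterDirD id l g := by
  induction l with
  | nil => simp
  | cons v l ih =>
    simp only [List.map_cons, iterDirD_cons, ih, id]
    rw [dirD_const_smul (contDiff_iterDirD hg l)]
    funext x
    simp only [dirD, Pi.smul_apply, map_smul, smul_eq_mul, Complex.real_smul, List.length_cons,
      pow_succ, Complex.ofReal_mul]
    ring

lemma hasCompactSupport_iterDirD {g : E → ℂ} (hg : HasCompactSupport g) (D : J → E) (l : List J) :
    HasCompactSupport (iterDirD D l g) := by
  induction l with
  | nil => exact hg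
  | cons j l ih => exact hasCompactSupport_dirD ih _

lemma IsCutoffSeq.comp_affineEquiv {χ : ℕ → F → ℂ} (hχ : IsCutoffSeq χ) (L : E ≃L[ℝ] F) (y : F) :
    IsCutoffSeq fun n x => χ n (y + L x) where
  contDiff n := contDiff_comp_affine (hχ.contDiff n) (L : E →L[ℝ] F) y
  hasCompactSupport n := (hχ.hasCompactSupport n).comp_homeomorph
    (L.toHomeomorph.trans (Homeomorph.addLeft y))
  exists_bound l := by
    obtain ⟨K, hK⟩ := hχ.exists_bound (l.map fun v => L v)
    refine ⟨K, fun n x => ?_⟩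
    have chain := iterDirD_comp_affine (hχ.contDiff n) id (L : E →L[ℝ] F) y l
    simp only [ContinuousLinearEquiv.coe_coe] at chain
    rw [chain]
    exact hK n _
  eventually_eq_one x := by
    have hcont : ContinuousAt (fun x => y + L x) x := by fun_prop
    filter_upwards [hχ.eventually_eq_one (y + L x)] with n hn
    exact hcont.eventually hn

lemma exists_derivBound_of_forall_bound [Finite J] {ι : Type*} {D : J → E} {g : ι → E → ℂ}
    (hg : ∀ l : List J, ∃ K, ∀ i x, ‖iterDirD D l (g i) x‖ ≤ K) (N : ℕ) :
    ∃ K, 0 ≤ K ∧ ∀ i, DerivBound D 1 N (fun _ => K) (g i) := by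
  choose K hK using hg
  obtain ⟨B, hB⟩ := ((List.finite_length_le J N).image K).bddAbove
  refine ⟨max B 0, le_max_right _ _, fun i l hl x => ?_⟩
  have hle : K l ≤ max B 0 := (hB (Set.mem_image_of_mem K hl)).trans (le_max_left _ _)
  simpa using (hK l i x).trans hle

lemma exists_derivBound_of_hasCompactSupport [Finite J] (D : J → E) {g : E → ℂ}
    (hg : ContDiff ℝ ∞ g) (hgc : HasCompactSupport g) (N : ℕ) :
    ∃ K, 0 ≤ K ∧ DerivBound D 1 N (fun _ => K) g := by
  obtain ⟨K, hK, bound⟩ := exists_derivBound_of_forall_bound (ι := Unit) (g := fun _ => g)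
    (fun l => ((hasCompactSupport_iterDirD hgc D l).exists_bound_of_continuous
      (contDiff_iterDirD hg l).continuous).imp fun _ hK _ => hK) N
  exact ⟨K, hK, bound ()⟩

lemma IsCutoffSeq.exists_derivBound [Finite J] {χ : ℕ → E → ℂ} (hχ : IsCutoffSeq χ) (D : J → E)
    (N : ℕ) : ∃ K, 0 ≤ K ∧ ∀ n, DerivBound D 1 N (fun _ => K) (χ n) := by
  refine exists_derivBound_of_forall_bound (fun l => ?_) N
  obtain ⟨K, hK⟩ := hχ.exists_bound (l.map D)
  refine ⟨K, fun n x => ?_⟩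
  have hword := iterDirD_comp_affine (hχ.contDiff n) D (ContinuousLinearMap.id ℝ E) 0 l
  simp only [ContinuousLinearMap.id_apply, zero_add] at hword
  rw [hword]
  exact hK n x

variable (E) [FiniteDimensional ℝ E]

/-- A fixed smooth bump function, equal to `1` on the unit ball. -/
def bump : ContDiffBump (0 : E) := ⟨1, 2, one_pos, one_lt_two⟩

/-- The dilates `x ↦ bump (x / (n + 1))`. -/
def cutoff (n : ℕ) (x : E) : ℂ := ((bump E (((n : ℝ) + 1)⁻¹ • x) : ℝ) : ℂ)

lemma isCutoffSeq_cutoff : IsCutoffSeq (cutoff E) := by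
  have hsm : ContDiff ℝ ∞ fun x => ((bump E x : ℝ) : ℂ) :=
    Complex.ofRealCLM.contDiff.comp (bump E).contDiff
  have hcs : HasCompactSupport fun x => ((bump E x : ℝ) : ℂ) :=
    (bump E).hasCompactSupport.comp_left (g := fun s : ℝ => (s : ℂ)) Complex.ofReal_zero
  have hpos (n : ℕ) : (0 : ℝ) < ((n : ℝ) + 1)⁻¹ := by positivity
  have hle_one (n : ℕ) : ((n : ℝ) + 1)⁻¹ ≤ 1 :=
    inv_le_one_of_one_le₀ (le_add_of_nonneg_left n.cast_nonneg)
  refine ⟨fun n => hsm.comp (contDiff_const_smul _), fun n =>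
    hcs.comp_homeomorph (Homeomorph.smulOfNeZero _ (hpos n).ne'), fun l => ?_, fun x => ?_⟩
  · obtain ⟨K, hK⟩ := (hasCompactSupport_iterDirD hcs id l).exists_bound_of_continuous
      (contDiff_iterDirD hsm l).continuous
    refine ⟨K, fun n x => ?_⟩
    have dilate := iterDirD_comp_affine hsm id
      (((n : ℝ) + 1)⁻¹ • ContinuousLinearMap.id ℝ E) 0 l
    simp only [zero_add, _root_.smul_apply, ContinuousLinearMap.id_apply, id,
      iterDirD_map_smul hsm] at dilate
    unfold cutoff
    rw [dilate]
    beta_reduce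
    rw [Pi.smul_apply, norm_smul, Complex.norm_real, norm_pow, Real.norm_eq_abs,
      abs_of_pos (hpos n)]
    exact (mul_le_of_le_one_left (norm_nonneg _) (pow_le_one₀ (hpos n).le (hle_one n))).trans (hK _)
  · obtain ⟨n₀, hn₀⟩ := exists_nat_ge (‖x‖ + 1)
    filter_upwards [eventually_ge_atTop n₀] with n hn
    filter_upwards [Metric.ball_mem_nhds x one_pos] with y hy
    have hy_le : ‖y‖ ≤ n + 1 := by
      have htri := norm_le_norm_add_norm_sub' y x
      have hcast : (n₀ : ℝ) ≤ n := by exact_mod_cast hn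
      rw [mem_ball_iff_norm] at hy
      linarith
    rw [cutoff, (bump E).one_of_mem_closedBall]
    · simp
    · rw [mem_closedBall_zero_iff, norm_smul, norm_inv, Real.norm_eq_abs,
        abs_of_pos (by positivity)]
      exact (inv_mul_le_iff₀ (by positivity)).2 (by simpa [bump] using hy_le)

end Cutoff

/-! ### Oscillatory integrals -/

section OscillatoryIntegral

variable {d : ℕ} {M k : ℕ} {C : ℝ} {χ : ℕ → Q d × Q d → ℂ} {G H : Q d × Q d → ℂ}

/-- The oscillatory integral `∫ e^{i z · v} G(v, z) dv dz`, defined as the limit of its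
truncations. -/
def oscInt (G : Q d × Q d → ℂ) : ℂ :=
  limUnder atTop fun n => ∫ y, phase y * (cutoff (Q d × Q d) n * G) y

/-- Smooth functions, with sufficiently many derivatives of at most some polynomial growth in `z`,
for which the oscillatory integral converges. -/
def IsOscAmplitude (G : Q d × Q d → ℂ) : Prop :=
  ContDiff ℝ ∞ G ∧ ∃ (M : ℕ) (C : ℝ), 0 ≤ C ∧
    DerivBound pairVec 1 (numSteps d (M + 2)) (fun y => C * prodBracket y.2 ^ M) G

lemma continuous_phase_mul_regularize (k : ℕ) (hG : ContDiff ℝ ∞ G) :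
    Continuous fun y => phase y * regularize (phaseSteps d k) G y :=
  contDiff_phase.continuous.mul (contDiff_regularize contDiff_of_mem_phaseSteps hG).continuous

lemma tendsto_integral_cutoff_mul (hχ : IsCutoffSeq χ) (hk : M + 2 ≤ k) (hC : 0 ≤ C)
    (hG : ContDiff ℝ ∞ G)
    (bG : DerivBound pairVec 1 (numSteps d k) (fun y => C * prodBracket y.2 ^ M) G) :
    Tendsto (fun n => ∫ y, phase y * (χ n * G) y) atTop
      (𝓝 (∫ y, phase y * regularize (phaseSteps d k) G y)) := by
  obtain ⟨K, hK, bχ⟩ := hχ.exists_derivBound pairVec (numSteps d k)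
  obtain ⟨K', _, bound⟩ := exists_norm_regularize_le (d := d) hk
  have hsm (n : ℕ) : ContDiff ℝ ∞ (χ n * G) := (hχ.contDiff n).mul hG
  have hone (j : Coord d ⊕ Coord d) (y : Q d × Q d) :
      0 ≤ (1 : Coord d ⊕ Coord d → Q d × Q d → ℝ) j y := zero_le_one
  have btrunc (n : ℕ) : DerivBound pairVec 1 (numSteps d k)
      (fun y => 2 ^ numSteps d k * (K * C) * prodBracket y.2 ^ M) (χ n * G) :=
    ((bχ n).mul hone (hχ.contDiff n) hG bG).mono hone fun y => le_of_eq (by ring)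
  have by_parts (n : ℕ) : ∫ y, phase y * (χ n * G) y =
      ∫ y, phase y * regularize (phaseSteps d k) (χ n * G) y :=
    (integral_mul_regularize contDiff_phase isPhaseStep_of_mem (hsm n)
      (hχ.hasCompactSupport n).mul_right).symm
  simp_rw [by_parts]
  refine tendsto_integral_of_dominated_convergence _
    (fun n => (continuous_phase_mul_regularize k (hsm n)).aestronglyMeasurable)
    (integrable_pairWeight.const_mul (K' * (2 ^ numSteps d k * (K * C))))
    (fun n => .of_forall fun y => ?_) (.of_forall fun y => ?_)
  · rw [norm_mul, norm_phase, one_mul]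
    exact bound _ _ (by positivity) (hsm n) (btrunc n) y
  · refine tendsto_const_nhds.congr' ?_
    filter_upwards [hχ.eventually_eq_one y] with n hn
    have heq : χ n * G =ᶠ[𝓝 y] G := by
      filter_upwards [hn] with y' hy'
      simp [hy']
    rw [(regularize_eventuallyEq heq).eq_of_nhds]

lemma oscInt_eq_integral (hk : M + 2 ≤ k) (hC : 0 ≤ C) (hG : ContDiff ℝ ∞ G)
    (bG : DerivBound pairVec 1 (numSteps d k) (fun y => C * prodBracket y.2 ^ M) G) :
    oscInt G = ∫ y, phase y * regularize (phaseSteps d k) G y :=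
  (tendsto_integral_cutoff_mul (isCutoffSeq_cutoff _) hk hC hG bG).limUnder_eq

lemma exists_norm_oscInt_le (d M : ℕ) : ∃ K, 0 ≤ K ∧ ∀ (C : ℝ) (G : Q d × Q d → ℂ), 0 ≤ C →
    ContDiff ℝ ∞ G →
    DerivBound pairVec 1 (numSteps d (M + 2)) (fun y => C * prodBracket y.2 ^ M) G →
    ‖oscInt G‖ ≤ K * C := by
  obtain ⟨K, hK, bound⟩ := exists_norm_regularize_le (d := d) (le_refl (M + 2))
  refine ⟨K * ∫ y : Q d × Q d, pairWeight y, mul_nonneg hK (integral_nonneg pairWeight_nonneg),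
    fun C G hC hG bG => ?_⟩
  rw [oscInt_eq_integral le_rfl hC hG bG]
  calc ‖∫ y, phase y * regularize (phaseSteps d (M + 2)) G y‖
      ≤ ∫ y : Q d × Q d, K * C * pairWeight y :=
        norm_integral_le_of_norm_le (integrable_pairWeight.const_mul _) <| .of_forall fun y => by
          rw [norm_mul, norm_phase, one_mul]
          exact bound C G hC hG bG y
    _ = K * (∫ y : Q d × Q d, pairWeight y) * C := by
        rw [integral_const_mul]
        ring

namespace IsOscAmplitude

lemma tendsto_oscInt (hG : IsOscAmplitude G) (hχ : IsCutoffSeq χ) :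
    Tendsto (fun n => ∫ y, phase y * (χ n * G) y) atTop (𝓝 (oscInt G)) := by
  obtain ⟨hsm, M, C, hC, bG⟩ := hG
  rw [oscInt_eq_integral le_rfl hC hsm bG]
  exact tendsto_integral_cutoff_mul hχ le_rfl hC hsm bG

lemma oscInt_add (hG : IsOscAmplitude G) (hH : IsOscAmplitude H) :
    oscInt (G + H) = oscInt G + oscInt H := by
  have hχ := isCutoffSeq_cutoff (Q d × Q d)
  refine Tendsto.limUnder_eq (((hG.tendsto_oscInt hχ).add (hH.tendsto_oscInt hχ)).congr fun n => ?_)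
  have integrable_trunc {G : Q d × Q d → ℂ} (hG : ContDiff ℝ ∞ G) :
      Integrable fun y => phase y * (cutoff (Q d × Q d) n * G) y :=
    (contDiff_phase.mul ((hχ.contDiff n).mul hG)).continuous.integrable_of_hasCompactSupport
      ((hχ.hasCompactSupport n).mul_right.mul_left)
  rw [← integral_add (integrable_trunc hG.1) (integrable_trunc hH.1)]
  simp only [mul_add, Pi.add_apply]

lemma oscInt_const_smul (hG : IsOscAmplitude G) (c : ℂ) : oscInt (c • G) = c * oscInt G := by
  have hχ := isCutoffSeq_cutoff (Q d × Q d)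
  refine Tendsto.limUnder_eq (((hG.tendsto_oscInt hχ).const_mul c).congr fun n => ?_)
  rw [← integral_const_mul]
  simp only [Pi.mul_apply, Pi.smul_apply, smul_eq_mul, mul_left_comm]

end IsOscAmplitude

lemma oscInt_eq_integral_of_hasCompactSupport (hG : ContDiff ℝ ∞ G) (hGc : HasCompactSupport G) :
    oscInt G = ∫ y, phase y * G y := by
  obtain ⟨C, hC, bG⟩ := exists_derivBound_of_hasCompactSupport pairVec hG hGc (numSteps d (0 + 2))
  rw [oscInt_eq_integral (M := 0) le_rfl hC hG (by simpa using bG)]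
  exact integral_mul_regularize contDiff_phase isPhaseStep_of_mem hG hGc

/-- The symplectic dilation `(v, z) ↦ ((v_r, v_θ / l), (z_r, l z_θ))`. -/
def angularScale (d : ℕ) (l : ℝˣ) : (Q d × Q d) ≃L[ℝ] (Q d × Q d) :=
  (ContinuousLinearEquiv.prodCongr (.refl ℝ ℝ) (.smulLeft l⁻¹)).prodCongr
    (ContinuousLinearEquiv.prodCongr (.refl ℝ ℝ) (.smulLeft l))

lemma angularScale_apply (l : ℝˣ) (y : Q d × Q d) : angularScale d l y =
    ((y.1.1, (l : ℝ)⁻¹ • y.1.2), (y.2.1, (l : ℝ) • y.2.2)) := by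
  refine Prod.ext (Prod.ext rfl ?_) rfl
  simp only [← Units.val_inv_eq_inv_val]
  rfl

lemma phase_angularScale (l : ℝˣ) (y : Q d × Q d) : phase (angularScale d l y) = phase y := by
  have hdot : qdot (angularScale d l y).2 (angularScale d l y).1 = qdot y.2 y.1 := by
    simp only [angularScale_apply, qdot, Pi.smul_apply, smul_eq_mul]
    field_simp
  rw [phase, phase, hdot]

lemma measurePreserving_angularScale (l : ℝˣ) : MeasurePreserving (angularScale d l) := by
  refine ⟨(angularScale d l).continuous.measurable, ?_⟩
  have hdet : LinearMap.det (angularScale d l : (Q d × Q d) →ₗ[ℝ] (Q d × Q d)) = 1 := by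
    have hprod : (angularScale d l : (Q d × Q d) →ₗ[ℝ] (Q d × Q d)) =
        (LinearMap.prodMap .id ((l : ℝ)⁻¹ • .id)).prodMap
          (LinearMap.prodMap .id ((l : ℝ) • .id)) :=
      LinearMap.ext fun y => angularScale_apply l y
    rw [hprod]
    simp [LinearMap.det_prodMap]
  have hmap := Measure.map_linearMap_addHaar_eq_smul_addHaar (volume : Measure (Q d × Q d))
    (f := (angularScale d l : (Q d × Q d) →ₗ[ℝ] (Q d × Q d))) (by simp [hdet])
  simpa [hdet] using hmap

lemma oscInt_comp_angularScale (l : ℝˣ) (hG : IsOscAmplitude (G ∘ angularScale d l)) :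
    oscInt (G ∘ angularScale d l) = oscInt G := by
  have hχ := (isCutoffSeq_cutoff (Q d × Q d)).comp_affineEquiv (angularScale d l) 0
  refine (Tendsto.limUnder_eq ((hG.tendsto_oscInt hχ).congr fun n => ?_)).symm
  rw [← (measurePreserving_angularScale l).integral_comp
    (angularScale d l).toHomeomorph.measurableEmbedding fun y =>
      phase y * (cutoff (Q d × Q d) n * G) y]
  simp only [phase_angularScale, Pi.mul_apply, Function.comp_apply, zero_add]

end OscillatoryIntegral

/-! ### Integrals depending smoothly on a parameter -/

section ParametricIntegral

variable {X Y : Type*} [NormedAddCommGroup X] [NormedSpace ℝ X]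
  [NormedAddCommGroup Y] [NormedSpace ℝ Y] {w : Y → ℝ} {H : X × Y → ℂ}

/-- Smooth functions of a parameter `x` and a variable `y`, each of whose `x`-derivatives is
dominated, locally uniformly in `x`, by a multiple of `w y`. -/
structure IsDominated (w : Y → ℝ) (H : X × Y → ℂ) : Prop where
  contDiff : ContDiff ℝ ∞ H
  exists_bound : ∀ l : List X, ∃ φ : X → ℝ, Continuous φ ∧
    ∀ x y, ‖iterDirD (fun v => (v, (0 : Y))) l H (x, y)‖ ≤ φ x * w y

namespace IsDominated

protected lemma dirD (hH : IsDominated w H) (v : X) : IsDominated w (dirD (v, (0 : Y)) H) where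
  contDiff := contDiff_dirD hH.contDiff _
  exists_bound l := by
    obtain ⟨φ, hφ, bound⟩ := hH.exists_bound (l ++ [v])
    exact ⟨φ, hφ, fun x y => iterDirD_append _ l [v] H ▸ bound x y⟩

variable [MeasureSpace Y] [OpensMeasurableSpace Y]

lemma integrable_slice (hH : IsDominated w H) (hw : Integrable w) (x : X) :
    Integrable fun y => H (x, y) := by
  obtain ⟨φ, -, bound⟩ := hH.exists_bound []
  exact (hw.const_mul (φ x)).mono'
    (hH.contDiff.continuous.comp (Continuous.prodMk_right x)).aestronglyMeasurable
    (.of_forall fun y => bound x y)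

variable [FiniteDimensional ℝ X]

lemma exists_integrable_hasFDerivAt_integral (hH : IsDominated w H) (hw : Integrable w)
    (hw0 : ∀ y, 0 ≤ w y) (x : X) :
    Integrable (fun y => (fderiv ℝ H (x, y)).comp (ContinuousLinearMap.inl ℝ X Y)) ∧
      HasFDerivAt (fun x => ∫ y, H (x, y))
        (∫ y, (fderiv ℝ H (x, y)).comp (ContinuousLinearMap.inl ℝ X Y)) x := by
  let b := Module.finBasis ℝ X
  obtain ⟨C, _, opNorm_le⟩ := b.exists_opNorm_le (F := ℂ)
  choose φ hφ bound using fun i => hH.exists_bound [b i]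
  let s : Set X := {x' | ∀ i, φ i x' < |φ i x| + 1}
  have hs : s ∈ 𝓝 x := by
    have hopen : IsOpen s := by
      simp only [s, Set.ofPred_forall]
      exact isOpen_iInter_of_finite fun i => isOpen_lt (hφ i) continuous_const
    exact hopen.mem_nhds fun i => (le_abs_self _).trans_lt (lt_add_one _)
  let major : Y → ℝ := fun y => C * ((∑ i, (|φ i x| + 1)) * w y)
  have hmajor : Integrable major := (hw.const_mul _).const_mul C
  have fderiv_le (x' : X) (hx' : x' ∈ s) (y : Y) :
      ‖(fderiv ℝ H (x', y)).comp (ContinuousLinearMap.inl ℝ X Y)‖ ≤ major y := by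
    have hsum : 0 ≤ ∑ i, (|φ i x| + 1) := sum_nonneg fun i _ => by positivity
    refine opNorm_le (mul_nonneg hsum (hw0 y)) fun i => ?_
    calc ‖fderiv ℝ H (x', y) (b i, 0)‖ ≤ φ i x' * w y := bound i x' y
      _ ≤ (∑ i, (|φ i x| + 1)) * w y := by
        refine mul_le_mul_of_nonneg_right ?_ (hw0 y)
        exact (hx' i).le.trans (single_le_sum (f := fun i => |φ i x| + 1)
          (fun i _ => by positivity) (mem_univ i))
  have hfderiv : Continuous (fderiv ℝ H) := hH.contDiff.continuous_fderiv (by simp)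
  have hmeas : AEStronglyMeasurable
      (fun y => (fderiv ℝ H (x, y)).comp (ContinuousLinearMap.inl ℝ X Y)) :=
    ((hfderiv.comp (Continuous.prodMk_right x)).clm_comp continuous_const).aestronglyMeasurable
  refine ⟨hmajor.mono' hmeas (.of_forall (fderiv_le x (mem_of_mem_nhds hs))),
    hasFDerivAt_integral_of_dominated_of_fderiv_le hs
      (.of_forall fun x' => (hH.integrable_slice hw x').aestronglyMeasurable)
      (hH.integrable_slice hw x) hmeas (.of_forall fun y x' hx' => fderiv_le x' hx' y) hmajor
      (.of_forall fun y x' _ => ?_)⟩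
  exact (differentiable_of_contDiff_infty hH.contDiff (x', y)).hasFDerivAt.comp x'
    (hasFDerivAt_prodMk_left x' y)

lemma dirD_integral (hH : IsDominated w H) (hw : Integrable w) (hw0 : ∀ y, 0 ≤ w y) (v : X) :
    dirD v (fun x => ∫ y, H (x, y)) = fun x => ∫ y, dirD (v, (0 : Y)) H (x, y) := by
  funext x
  obtain ⟨hint, hderiv⟩ := hH.exists_integrable_hasFDerivAt_integral hw hw0 x
  rw [dirD, hderiv.fderiv, ContinuousLinearMap.integral_apply hint]
  rfl

lemma contDiff_integral (hH : IsDominated w H) (hw : Integrable w) (hw0 : ∀ y, 0 ≤ w y) :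
    ContDiff ℝ ∞ fun x => ∫ y, H (x, y) := by
  have differentiable {H : X × Y → ℂ} (hH : IsDominated w H) :
      Differentiable ℝ fun x => ∫ y, H (x, y) := fun x =>
    (hH.exists_integrable_hasFDerivAt_integral hw hw0 x).2.differentiableAt
  refine contDiff_infty.2 fun n => ?_
  induction n generalizing H with
  | zero => exact contDiff_zero.2 (differentiable hH).continuous
  | succ n ih =>
    push_cast
    refine contDiff_succ_iff_fderiv_apply.2 ⟨differentiable hH, by simp, fun v => ?_⟩
    have hderiv := hH.dirD_integral hw hw0 v
    unfold dirD at hderiv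
    rw [hderiv]
    exact ih (hH.dirD v)

end IsDominated

end ParametricIntegral

section ParametricOscillatoryIntegral

variable {d M : ℕ} {X : Type*} [NormedAddCommGroup X] [NormedSpace ℝ X]
  {G : X × (Q d × Q d) → ℂ}

lemma iterDirD_phase_mul_regularize (hG : ContDiff ℝ ∞ G) (k : ℕ) (l : List X) :
    iterDirD (fun v => (v, (0 : Q d × Q d))) l
        (fun z => phase z.2 * regularize (liftSteps X (phaseSteps d k)) G z) =
      fun z => phase z.2 * regularize (liftSteps X (phaseSteps d k))
        (iterDirD (fun v => (v, (0 : Q d × Q d))) l G) z := by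
  induction l with
  | nil => rfl
  | cons v l ih =>
    have hsteps := contDiff_of_mem_liftSteps (X := X) (contDiff_of_mem_phaseSteps (d := d) (k := k))
    have hphase : ContDiff ℝ ∞ fun z : X × (Q d × Q d) => phase z.2 :=
      contDiff_phase.comp contDiff_snd
    have phase_const : dirD (v, (0 : Q d × Q d)) (fun z : X × (Q d × Q d) => phase z.2) = 0 := by
      have chain := dirD_comp_affine contDiff_phase
        (ContinuousLinearMap.snd ℝ X (Q d × Q d)) 0 (v, 0)
      simp only [ContinuousLinearMap.coe_snd', zero_add] at chain
      rw [chain]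
      funext z
      simp [dirD]
    have hl := contDiff_iterDirD (D := fun v => (v, (0 : Q d × Q d))) hG l
    rw [iterDirD_cons, iterDirD_cons, ih]
    refine (dirD_mul hphase (contDiff_regularize hsteps hl) _).trans ?_
    rw [phase_const, zero_mul, zero_add, dirD_regularize hsteps
      (dirD_of_mem_liftSteps contDiff_of_mem_phaseSteps v) hl]
    rfl

/-- Smooth functions `G(x, (v, z))` each of whose derivatives is bounded by `⟨z⟩ ^ M`, locally
uniformly in `x` and uniformly in `v`. -/
structure IsTempered (M : ℕ) (G : X × (Q d × Q d) → ℂ) : Prop where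
  contDiff : ContDiff ℝ ∞ G
  exists_bound : ∀ l : List (X × (Q d × Q d)), ∃ φ : X → ℝ, Continuous φ ∧
    ∀ x y, ‖iterDirD id l G (x, y)‖ ≤ φ x * prodBracket y.2 ^ M

namespace IsTempered

protected lemma dirD (hG : IsTempered M G) (v : X × (Q d × Q d)) : IsTempered M (dirD v G) where
  contDiff := contDiff_dirD hG.contDiff _
  exists_bound l := by
    obtain ⟨φ, hφ, bound⟩ := hG.exists_bound (l ++ [v])
    exact ⟨φ, hφ, fun x y => iterDirD_append id l [v] G ▸ bound x y⟩

lemma contDiff_slice (hG : IsTempered M G) (x : X) : ContDiff ℝ ∞ fun y => G (x, y) :=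
  hG.contDiff.comp (contDiff_prodMk_right x)

lemma exists_derivBound_slice (hG : IsTempered M G) (N : ℕ) :
    ∃ φ : X → ℝ, Continuous φ ∧ ∀ x, 0 ≤ φ x ∧
      DerivBound pairVec 1 N (fun y => φ x * prodBracket y.2 ^ M) fun y => G (x, y) := by
  choose φ hφ bound using fun l : List (Coord d ⊕ Coord d) =>
    hG.exists_bound (l.map fun c => ((0 : X), pairVec c))
  have hfin := List.finite_length_le (Coord d ⊕ Coord d) N
  refine ⟨fun x => ∑ l ∈ hfin.toFinset, |φ l x|, by fun_prop, fun x =>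
    ⟨sum_nonneg fun _ _ => abs_nonneg _, fun l hl y => ?_⟩⟩
  have chain := iterDirD_comp_affine hG.contDiff pairVec
    (ContinuousLinearMap.inr ℝ X (Q d × Q d)) (x, 0) l
  simp only [ContinuousLinearMap.inr_apply, Prod.mk_add_mk, add_zero, zero_add] at chain
  rw [chain]
  have hone : (l.map fun j => (1 : Coord d ⊕ Coord d → Q d × Q d → ℝ) j y).prod = 1 := by simp
  rw [hone, mul_one]
  refine (bound l x y).trans (mul_le_mul_of_nonneg_right ?_ (pow_nonneg (prodBracket_pos _).le _))
  exact (le_abs_self _).trans (single_le_sum (f := fun l => |φ l x|) (fun _ _ => abs_nonneg _)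
    (hfin.mem_toFinset.2 hl))

lemma isOscAmplitude_slice (hG : IsTempered M G) (x : X) : IsOscAmplitude fun y => G (x, y) := by
  obtain ⟨φ, -, bound⟩ := hG.exists_derivBound_slice (numSteps d (M + 2))
  exact ⟨hG.contDiff_slice x, M, φ x, (bound x).1, (bound x).2⟩

lemma oscInt_slice (hG : IsTempered M G) (x : X) : oscInt (fun y => G (x, y)) =
    ∫ y, phase y * regularize (liftSteps X (phaseSteps d (M + 2))) G (x, y) := by
  obtain ⟨φ, -, bound⟩ := hG.exists_derivBound_slice (numSteps d (M + 2))
  rw [oscInt_eq_integral le_rfl (bound x).1 (hG.contDiff_slice x) (bound x).2,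
    regularize_slice contDiff_of_mem_phaseSteps hG.contDiff]

protected lemma iterDirD (hG : IsTempered M G) (l : List X) :
    IsTempered M (iterDirD (fun v => (v, (0 : Q d × Q d))) l G) := by
  induction l with
  | nil => exact hG
  | cons v l ih => exact ih.dirD (v, 0)

lemma isDominated (hG : IsTempered M G) : IsDominated pairWeight fun z : X × (Q d × Q d) =>
    phase z.2 * regularize (liftSteps X (phaseSteps d (M + 2))) G z where
  contDiff := (contDiff_phase.comp contDiff_snd).mul
    (contDiff_regularize (contDiff_of_mem_liftSteps contDiff_of_mem_phaseSteps) hG.contDiff)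
  exists_bound l := by
    obtain ⟨φ, hφ, bound⟩ := (hG.iterDirD l).exists_derivBound_slice (numSteps d (M + 2))
    obtain ⟨K, -, norm_le⟩ := exists_norm_regularize_le (d := d) (M := M) le_rfl
    refine ⟨fun x => K * φ x, hφ.const_mul K, fun x y => ?_⟩
    have slice := congrFun (regularize_slice (contDiff_of_mem_phaseSteps (k := M + 2))
      (hG.iterDirD l).contDiff x) y
    rw [iterDirD_phase_mul_regularize hG.contDiff, norm_mul, norm_phase, one_mul, ← slice]
    exact norm_le _ _ (bound x).1 ((hG.iterDirD l).contDiff_slice x) (bound x).2 y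

variable [FiniteDimensional ℝ X]

lemma contDiff_oscInt (hG : IsTempered M G) : ContDiff ℝ ∞ fun x => oscInt fun y => G (x, y) := by
  simp_rw [hG.oscInt_slice]
  exact hG.isDominated.contDiff_integral integrable_pairWeight pairWeight_nonneg

lemma dirD_oscInt (hG : IsTempered M G) (v : X) : dirD v (fun x => oscInt fun y => G (x, y)) =
    fun x => oscInt fun y => dirD (v, (0 : Q d × Q d)) G (x, y) := by
  simp_rw [hG.oscInt_slice, (hG.dirD (v, 0)).oscInt_slice]
  rw [hG.isDominated.dirD_integral integrable_pairWeight pairWeight_nonneg]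
  have commute := iterDirD_phase_mul_regularize hG.contDiff (M + 2) [v]
  simp only [iterDirD_cons, iterDirD_nil] at commute
  rw [commute]

end IsTempered

end ParametricOscillatoryIntegral

/-! ### Seminorms as bounds along words of coordinate directions -/

section Words

variable {d : ℕ} {E J J' : Type*} [NormedAddCommGroup E] [NormedSpace ℝ E]

lemma iterDirD_map (D : J' → E) (c : J → J') (l : List J) (g : E → ℂ) :
    iterDirD D (l.map c) g = iterDirD (fun j => D (c j)) l g :=
  List.foldr_map ..

lemma iterDirD_replicate (D : J → E) (n : ℕ) (j : J) (g : E → ℂ) :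
    iterDirD D (List.replicate n j) g = (dirD (D j))^[n] g := by
  induction n with
  | zero => rfl
  | succ n ih => rw [Function.iterate_succ_apply', ← ih, List.replicate_succ, iterDirD_cons]

lemma iterDirD_flatMap (D : J → E) (s : J' → List J) (l : List J') (g : E → ℂ) :
    iterDirD D (l.flatMap s) g = l.foldr (fun i h => iterDirD D (s i) h) g := by
  induction l with
  | nil => rfl
  | cons i l ih => rw [List.flatMap_cons, iterDirD_append, ih, List.foldr_cons]

lemma exists_perm_map_inl_append_map_inr (l : List (J ⊕ J')) :
    ∃ (l₁ : List J) (l₂ : List J'), l.Perm (l₁.map Sum.inl ++ l₂.map Sum.inr) := by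
  induction l with
  | nil => exact ⟨[], [], .rfl⟩
  | cons c l ih =>
    obtain ⟨l₁, l₂, hl⟩ := ih
    rcases c with j | j
    · exact ⟨j :: l₁, l₂, hl.cons _⟩
    · exact ⟨l₁, j :: l₂, (hl.cons _).trans List.perm_middle.symm⟩

/-- The word of coordinates in which the coordinate `j` occurs as often as the multiindex `α`
says, in the order used by `mderiv2` and `mderiv3`. -/
def multiWord (α : MIdx d) : List (Coord d) :=
  List.replicate α.1 none ++ (List.finRange d).flatMap fun i => List.replicate (α.2 i) (some i)

lemma iterDirD_multiWord (D : Coord d → E) (α : MIdx d) (g : E → ℂ) :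
    iterDirD D (multiWord α) g = (dirD (D none))^[α.1]
      ((List.finRange d).foldr (fun i h => (dirD (D (some i)))^[α.2 i] h) g) := by
  simp only [multiWord, iterDirD_append, iterDirD_replicate, iterDirD_flatMap]

lemma prod_map_multiWord {R : Type*} [CommMonoid R] (α : MIdx d) (w : Coord d → R) :
    ((multiWord α).map w).prod = w none ^ α.1 * ∏ i, w (some i) ^ α.2 i := by
  have prod_flatMap (l : List (Fin d)) :
      ((l.flatMap fun i => List.replicate (α.2 i) (some i)).map w).prod =
        (l.map fun i => w (some i) ^ α.2 i).prod := by
    induction l with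
    | nil => rfl
    | cons i l ih => simp [ih]
  rw [multiWord, List.map_append, List.prod_append, prod_flatMap, ← Fin.prod_univ_def,
    List.map_replicate, List.prod_replicate]

lemma length_multiWord (α : MIdx d) : (multiWord α).length = deg α := by
  simp [multiWord, deg, List.length_flatMap, ← Fin.sum_univ_def]

lemma exists_perm_multiWord (l : List (Coord d)) : ∃ α, l.Perm (multiWord α) := by
  refine ⟨(l.count none, fun i => l.count (some i)), List.perm_iff_count.2 fun j => ?_⟩
  have hsum (j : Coord d) : ((List.finRange d).map fun i =>
      (List.replicate (l.count (some i)) (some i)).count j).sum =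
        ∑ i, if some i = j then l.count (some i) else 0 := by
    rw [Fin.sum_univ_def]
    simp [List.count_replicate]
  rw [multiWord, List.count_append, List.count_flatMap, Function.comp_def, hsum,
    List.count_replicate]
  cases j <;> simp

/-- The word of directions differentiated along in `mderiv2 α β`. -/
def symWord (α β : MIdx d) : List (Coord d ⊕ Coord d) :=
  (multiWord α).map Sum.inl ++ (multiWord β).map Sum.inr

/-- The word of directions differentiated along in `mderiv3 α β γ`. -/
def ampWord (α β γ : MIdx d) : List (Coord d ⊕ Coord d ⊕ Coord d) :=
  (multiWord α).map Sum.inl ++ (symWord β γ).map Sum.inr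

/-- The coordinate directions of `ℝⁿ × ℝⁿ × ℝⁿ`. -/
def tripleVec : Coord d ⊕ Coord d ⊕ Coord d → Q d × Q d × Q d :=
  Sum.elim (fun j => (coordVec j, 0)) fun c => (0, pairVec c)

lemma mderiv2_eq_iterDirD (α β : MIdx d) (g : Q d × Q d → ℂ) :
    mderiv2 α β g = iterDirD pairVec (symWord α β) g := by
  rw [symWord, iterDirD_append, iterDirD_map, iterDirD_map, iterDirD_multiWord,
    iterDirD_multiWord]
  rfl

lemma mderiv3_eq_iterDirD (α β γ : MIdx d) (g : Q d × Q d × Q d → ℂ) :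
    mderiv3 α β γ g = iterDirD tripleVec (ampWord α β γ) g := by
  rw [ampWord, symWord, iterDirD_append, iterDirD_map, iterDirD_map, iterDirD_append,
    iterDirD_map, iterDirD_map, iterDirD_multiWord, iterDirD_multiWord, iterDirD_multiWord]
  rfl

lemma length_symWord (α β : MIdx d) : (symWord α β).length = deg α + deg β := by
  simp [symWord, length_multiWord]

lemma length_ampWord (α β γ : MIdx d) : (ampWord α β γ).length = deg α + deg β + deg γ := by
  simp [ampWord, length_symWord, length_multiWord, add_assoc]

lemma exists_perm_ampWord (l : List (Coord d ⊕ Coord d ⊕ Coord d)) :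
    ∃ α β γ, l.Perm (ampWord α β γ) := by
  obtain ⟨l₁, l₂, hl⟩ := exists_perm_map_inl_append_map_inr l
  obtain ⟨l₃, l₄, hl₂⟩ := exists_perm_map_inl_append_map_inr l₂
  obtain ⟨α, hα⟩ := exists_perm_multiWord l₁
  obtain ⟨β, hβ⟩ := exists_perm_multiWord l₃
  obtain ⟨γ, hγ⟩ := exists_perm_multiWord l₄
  exact ⟨α, β, γ, hl.trans ((hα.map _).append
    ((hl₂.trans ((hβ.map _).append (hγ.map _))).map _))⟩

end Words

section Seminorms

variable {d : ℕ} {f : ℝ → ℝ} {m t : ℝ}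

/-- The scaling `(r, θ) ↦ (r, s θ)` in coordinates. -/
def coordScale (s : ℝ) : Coord d → ℝ
  | none => 1
  | some _ => s

lemma one_le_coordScale {s : ℝ} (hs : 1 ≤ s) : ∀ j : Coord d, 1 ≤ coordScale s j
  | none => le_rfl
  | some _ => hs

lemma coordScale_le {s : ℝ} (hs : 1 ≤ s) : ∀ j : Coord d, coordScale s j ≤ s
  | none => hs
  | some _ => le_rfl

lemma prod_coordScale_multiWord (s : ℝ) (α : MIdx d) :
    ((multiWord α).map (coordScale s)).prod = s ^ degA α := by
  simp [prod_map_multiWord, coordScale, degA, prod_pow_eq_pow_sum]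

lemma prod_momentumScale_multiWord (s b : ℝ) (β : MIdx d) :
    ((multiWord β).map fun j => (coordScale s j)⁻¹ * b⁻¹).prod =
      (s ^ degA β)⁻¹ * (b ^ deg β)⁻¹ := by
  simp only [prod_map_multiWord, coordScale, degA, deg, prod_pow_eq_pow_sum, mul_pow,
    prod_mul_distrib, pow_add, inv_one, one_mul, inv_pow, prod_inv_distrib]
  ring

/-- The cost of a differentiation in the symbol class `S^m_f`: an angular position derivative
costs `f(r)`, a momentum derivative gains `⟨ρ ⊕ f(r)⁻¹η⟩`, and `f(r)` more if angular. -/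
def symScale (f : ℝ → ℝ) : Coord d ⊕ Coord d → Q d × Q d → ℝ :=
  Sum.elim (fun j x => coordScale (f x.1.1) j)
    fun j x => (coordScale (f x.1.1) j)⁻¹ * (brF f x)⁻¹

/-- The point `t q + (1 - t) q'` at which the weights of the class `BS^m_{f,t}` are evaluated. -/
def basePoint (t : ℝ) (x : Q d × Q d × Q d) : Q d := t • x.1 + (1 - t) • x.2.2

/-- The cost of a differentiation in the amplitude class `BS^m_{f,t}`. -/
def ampScale (f : ℝ → ℝ) (t : ℝ) : Coord d ⊕ Coord d ⊕ Coord d → Q d × Q d × Q d → ℝ :=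
  Sum.elim (fun j x => coordScale (f (basePoint t x).1) j) <|
    Sum.elim (fun j x => symScale f (.inr j) (basePoint t x, x.2.1))
      fun j x => coordScale (f (basePoint t x).1) j

lemma one_le_brF (f : ℝ → ℝ) (x : Q d × Q d) : 1 ≤ brF f x :=
  Real.one_le_sqrt.2 (by rw [add_assoc]; exact le_add_of_nonneg_right (by positivity))

lemma brFA_eq_brF (f : ℝ → ℝ) (t : ℝ) (x : Q d × Q d × Q d) :
    brFA f t x = brF f (basePoint t x, x.2.1) := rfl

lemma mul_prod_symScale_symWord (hf : ∀ r, 1 ≤ f r) (α β : MIdx d) (x : Q d × Q d) :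
    brF f x ^ m * ((symWord α β).map fun c => symScale f c x).prod =
      f x.1.1 ^ ((degA α : ℝ) - (degA β : ℝ)) * brF f x ^ (m - (deg β : ℝ)) := by
  have hs : 0 < f x.1.1 := zero_lt_one.trans_le (hf _)
  have hb : 0 < brF f x := zero_lt_one.trans_le (one_le_brF f x)
  simp only [symWord, symScale, List.map_append, List.map_map, List.prod_append,
    Function.comp_def, Sum.elim_inl, Sum.elim_inr, prod_coordScale_multiWord,
    prod_momentumScale_multiWord, Real.rpow_sub hs, Real.rpow_sub hb, Real.rpow_natCast]
  ring

lemma mul_prod_ampScale_ampWord (hf : ∀ r, 1 ≤ f r) (α β γ : MIdx d) (x : Q d × Q d × Q d) :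
    brFA f t x ^ m * ((ampWord α β γ).map fun c => ampScale f t c x).prod =
      f (t * x.1.1 + (1 - t) * x.2.2.1) ^ ((degA α : ℝ) - (degA β : ℝ) + (degA γ : ℝ)) *
        brFA f t x ^ (m - (deg β : ℝ)) := by
  change _ = f (basePoint t x).1 ^ _ * _
  have hs : 0 < f (basePoint t x).1 := zero_lt_one.trans_le (hf _)
  have hb : 0 < brF f (basePoint t x, x.2.1) := zero_lt_one.trans_le (one_le_brF f _)
  simp only [ampWord, symWord, ampScale, symScale, List.map_append, List.map_map,
    List.prod_append, Function.comp_def, Sum.elim_inl, Sum.elim_inr, prod_coordScale_multiWord,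
    prod_momentumScale_multiWord, brFA_eq_brF, Real.rpow_add hs, Real.rpow_sub hs,
    Real.rpow_sub hb, Real.rpow_natCast]
  ring

lemma norm_le_iSup_inv_mul_norm_mul {X E : Type*} [SeminormedAddCommGroup E] {v : X → ℝ}
    {g : X → E} (hv : ∀ x, 0 < v x) (hg : ∃ C, ∀ x, ‖g x‖ ≤ C * v x) (x : X) :
    ‖g x‖ ≤ (⨆ x, (v x)⁻¹ * ‖g x‖) * v x := by
  obtain ⟨C, bound⟩ := hg
  have bdd : BddAbove (Set.range fun x => (v x)⁻¹ * ‖g x‖) :=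
    ⟨C, Set.forall_mem_range.2 fun x =>
      (inv_mul_le_iff₀ (hv x)).2 ((bound x).trans_eq (mul_comm _ _))⟩
  have hle := le_ciSup bdd x
  rwa [inv_mul_le_iff₀ (hv x), mul_comm] at hle

lemma mem_idxSet {α : MIdx d} {N : ℕ} : α ∈ idxSet d N ↔ deg α ≤ N := by
  rw [idxSet, mem_filter, and_iff_right_iff_imp]
  intro h
  rw [deg] at h
  have hle (i : Fin d) : α.2 i ≤ ∑ i, α.2 i :=
    single_le_sum (f := α.2) (fun _ _ => Nat.zero_le _) (mem_univ i)
  simp only [mem_product, mem_range, Fintype.mem_piFinset]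
  exact ⟨by omega, fun i => by have := hle i; omega⟩

lemma ampNorm_eq (hf : ∀ r, 1 ≤ f r) (N : ℕ) (a : Q d × Q d × Q d → ℂ) :
    ampNorm f m t N a = ∑ α ∈ idxSet d N, ∑ β ∈ idxSet d N, ∑ γ ∈ idxSet d N,
      if deg α + deg β + deg γ ≤ N then
        ⨆ x, (brFA f t x ^ m * ((ampWord α β γ).map fun c => ampScale f t c x).prod)⁻¹ *
          ‖mderiv3 α β γ a x‖
      else 0 := by
  simp_rw [mul_prod_ampScale_ampWord hf, mul_inv,
    ← Real.rpow_neg (zero_le_one.trans (hf _)), brFA_eq_brF,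
    ← Real.rpow_neg (zero_le_one.trans (one_le_brF f _)), ← brFA_eq_brF, ampNorm]
  ring_nf

lemma symNorm_eq (hf : ∀ r, 1 ≤ f r) (N : ℕ) (b : Q d × Q d → ℂ) :
    symNorm f m N b = ∑ α ∈ idxSet d N, ∑ β ∈ idxSet d N,
      if deg α + deg β ≤ N then
        ⨆ x, (brF f x ^ m * ((symWord α β).map fun c => symScale f c x).prod)⁻¹ *
          ‖mderiv2 α β b x‖
      else 0 := by
  simp_rw [mul_prod_symScale_symWord hf, mul_inv, ← Real.rpow_neg (zero_le_one.trans (hf _)),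
    ← Real.rpow_neg (zero_le_one.trans (one_le_brF f _)), symNorm]
  ring_nf

lemma ampWeight_pos (hf : ∀ r, 1 ≤ f r) (α β γ : MIdx d) (x : Q d × Q d × Q d) :
    0 < brFA f t x ^ m * ((ampWord α β γ).map fun c => ampScale f t c x).prod := by
  rw [mul_prod_ampScale_ampWord hf]
  exact mul_pos (Real.rpow_pos_of_pos (zero_lt_one.trans_le (hf _)) _)
    (Real.rpow_pos_of_pos (zero_lt_one.trans_le (one_le_brF f (basePoint t x, x.2.1))) _)

lemma symWeight_pos (hf : ∀ r, 1 ≤ f r) (α β : MIdx d) (x : Q d × Q d) :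
    0 < brF f x ^ m * ((symWord α β).map fun c => symScale f c x).prod := by
  rw [mul_prod_symScale_symWord hf]
  exact mul_pos (Real.rpow_pos_of_pos (zero_lt_one.trans_le (hf _)) _)
    (Real.rpow_pos_of_pos (zero_lt_one.trans_le (one_le_brF f x)) _)

lemma iSup_le_ampNorm (hf : ∀ r, 1 ≤ f r) {N : ℕ} (a : Q d × Q d × Q d → ℂ) {α β γ : MIdx d}
    (h : deg α + deg β + deg γ ≤ N) :
    ⨆ x, (brFA f t x ^ m * ((ampWord α β γ).map fun c => ampScale f t c x).prod)⁻¹ *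
      ‖mderiv3 α β γ a x‖ ≤ ampNorm f m t N a := by
  let T (α β γ : MIdx d) : ℝ := if deg α + deg β + deg γ ≤ N then
    ⨆ x, (brFA f t x ^ m * ((ampWord α β γ).map fun c => ampScale f t c x).prod)⁻¹ *
      ‖mderiv3 α β γ a x‖ else 0
  have hT (α β γ) : 0 ≤ T α β γ := by
    refine ite_nonneg (Real.iSup_nonneg fun x => ?_) le_rfl
    exact mul_nonneg (inv_nonneg.2 (ampWeight_pos hf α β γ x).le) (norm_nonneg _)
  rw [ampNorm_eq hf]
  calc _ = T α β γ := (if_pos h).symm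
    _ ≤ ∑ γ ∈ idxSet d N, T α β γ :=
      single_le_sum (f := T α β) (fun _ _ => hT _ _ _) (mem_idxSet.2 (by omega))
    _ ≤ ∑ β ∈ idxSet d N, ∑ γ ∈ idxSet d N, T α β γ :=
      single_le_sum (f := fun β => ∑ γ ∈ idxSet d N, T α β γ)
        (fun _ _ => sum_nonneg fun _ _ => hT _ _ _) (mem_idxSet.2 (by omega))
    _ ≤ ∑ α ∈ idxSet d N, ∑ β ∈ idxSet d N, ∑ γ ∈ idxSet d N, T α β γ :=
      single_le_sum (f := fun α => ∑ β ∈ idxSet d N, ∑ γ ∈ idxSet d N, T α β γ)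
        (fun _ _ => sum_nonneg fun _ _ => sum_nonneg fun _ _ => hT _ _ _)
        (mem_idxSet.2 (by omega))

lemma derivBound_of_isAmp (hf : ∀ r, 1 ≤ f r) {a : Q d × Q d × Q d → ℂ} (ha : IsAmp f m t a)
    (N : ℕ) :
    DerivBound tripleVec (ampScale f t) N (fun x => ampNorm f m t N a * brFA f t x ^ m) a := by
  intro l hl x
  obtain ⟨α, β, γ, hperm⟩ := exists_perm_ampWord l
  rw [hperm.length_eq, length_ampWord] at hl
  have hpos := ampWeight_pos (m := m) (t := t) hf α β γ
  rw [iterDirD_perm ha.1 hperm, ← mderiv3_eq_iterDirD, (hperm.map _).prod_eq, mul_assoc]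
  refine (norm_le_iSup_inv_mul_norm_mul hpos ?_ x).trans
    (mul_le_mul_of_nonneg_right (iSup_le_ampNorm hf a hl) (hpos x).le)
  obtain ⟨C, bound⟩ := ha.2 α β γ
  exact ⟨C, fun x => by rw [mul_prod_ampScale_ampWord hf, ← mul_assoc]; exact bound x⟩

lemma isSymbol_of_derivBound (hf : ∀ r, 1 ≤ f r) {b : Q d × Q d → ℂ} (hb : ContDiff ℝ ∞ b)
    (bound : ∀ N, ∃ C, DerivBound pairVec (symScale f) N (fun x => C * brF f x ^ m) b) :
    IsSymbol f m b := by
  refine ⟨hb, fun α β => ?_⟩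
  obtain ⟨C, hC⟩ := bound (symWord α β).length
  refine ⟨C, fun x => ?_⟩
  rw [mderiv2_eq_iterDirD, mul_assoc, ← mul_prod_symScale_symWord hf, ← mul_assoc]
  exact hC _ le_rfl x

lemma symNorm_le_of_derivBound (hf : ∀ r, 1 ≤ f r) {C : ℝ} {N : ℕ} {b : Q d × Q d → ℂ}
    (bound : DerivBound pairVec (symScale f) N (fun x => C * brF f x ^ m) b) :
    symNorm f m N b ≤ #(idxSet d N) ^ 2 * C := by
  have hC : 0 ≤ C := nonneg_of_mul_nonneg_left (bound.nonneg 0)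
    (Real.rpow_pos_of_pos (zero_lt_one.trans_le (one_le_brF f 0)) m)
  rw [symNorm_eq hf]
  have term_le (α β : MIdx d) : (if deg α + deg β ≤ N then
      ⨆ x, (brF f x ^ m * ((symWord α β).map fun c => symScale f c x).prod)⁻¹ *
        ‖mderiv2 α β b x‖ else 0) ≤ C := by
    split_ifs with h
    · refine ciSup_le fun x => (inv_mul_le_iff₀ (symWeight_pos hf α β x)).2 ?_
      rw [mderiv2_eq_iterDirD, mul_right_comm, mul_comm (brF f x ^ m)]
      exact bound _ ((length_symWord α β).trans_le h) x
    · exact hC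
  calc _ ≤ ∑ _ ∈ idxSet d N, ∑ _ ∈ idxSet d N, C :=
        sum_le_sum fun _ _ => sum_le_sum fun _ _ => term_le _ _
    _ = #(idxSet d N) ^ 2 * C := by simp only [sum_const, nsmul_eq_mul]; ring

end Seminorms

/-! ### Slowly varying weights -/

section SlowlyVarying

variable {d : ℕ} {f : ℝ → ℝ} {s : Q d → ℝ} {K K' : ℝ} {M M' : ℕ} {B B' : Q d × Q d → ℝ}

/-- A weight on phase space which grows at most polynomially in `z` when the momentum `p` is moved
to `p + ℏ (ζ, s(w) ξ)`, `z = (ζ, ξ)`, uniformly for `|ℏ| ≤ 1`. -/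
def IsSlowlyVarying (s : Q d → ℝ) (K : ℝ) (M : ℕ) (B : Q d × Q d → ℝ) : Prop :=
  ∀ w p z : Q d, ∀ ℏ : ℝ, |ℏ| ≤ 1 →
    B (w, p + ℏ • (z.1, s w • z.2)) ≤ K * prodBracket z ^ M * B (w, p)

lemma IsSlowlyVarying.mul (hB : IsSlowlyVarying s K M B) (hB' : IsSlowlyVarying s K' M' B')
    (hB0 : ∀ x, 0 ≤ B x) (hB0' : ∀ x, 0 ≤ B' x) :
    IsSlowlyVarying s (K * K') (M + M') fun x => B x * B' x := fun w p z ℏ hℏ =>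
  calc _ ≤ K * prodBracket z ^ M * B (w, p) * (K' * prodBracket z ^ M' * B' (w, p)) :=
        mul_le_mul (hB w p z ℏ hℏ) (hB' w p z ℏ hℏ) (hB0' _) ((hB0 _).trans (hB w p z ℏ hℏ))
    _ = K * K' * prodBracket z ^ (M + M') * (B (w, p) * B' (w, p)) := by ring

lemma prodBracket_add_smul_le {ℏ : ℝ} (hℏ : |ℏ| ≤ 1) (p z : Q d) :
    prodBracket (p + ℏ • z) ≤ 2 ^ (d + 1) * prodBracket z * prodBracket p := by
  have factor_le (j : Coord d) : ‖1 + Complex.I * (coordFun j (p + ℏ • z) : ℂ)‖ ≤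
      2 * ‖1 + Complex.I * (coordFun j z : ℂ)‖ * ‖1 + Complex.I * (coordFun j p : ℂ)‖ := by
    have hz : |coordFun j z| ≤ ‖1 + Complex.I * (coordFun j z : ℂ)‖ := by
      simpa using Complex.abs_im_le_norm (1 + Complex.I * (coordFun j z : ℂ))
    have hp := one_le_norm_one_add_I_mul (coordFun j p)
    have hz' := one_le_norm_one_add_I_mul (coordFun j z)
    calc ‖1 + Complex.I * (coordFun j (p + ℏ • z) : ℂ)‖
        = ‖1 + Complex.I * (coordFun j p : ℂ) + Complex.I * (ℏ * coordFun j z : ℂ)‖ := by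
          rw [map_add, map_smul, smul_eq_mul]
          push_cast
          ring_nf
      _ ≤ ‖1 + Complex.I * (coordFun j p : ℂ)‖ + |ℏ| * |coordFun j z| := by
          simpa using norm_add_le (1 + Complex.I * (coordFun j p : ℂ))
            (Complex.I * (ℏ * coordFun j z : ℂ))
      _ ≤ ‖1 + Complex.I * (coordFun j p : ℂ)‖ + ‖1 + Complex.I * (coordFun j z : ℂ)‖ :=
          add_le_add_right ((mul_le_of_le_one_left (abs_nonneg _) hℏ).trans hz) _
      _ ≤ _ := by nlinarith
  refine (prod_le_prod (fun j _ => norm_nonneg _) fun j _ => factor_le j).trans_eq ?_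
  simp only [prod_mul_distrib, prod_const, card_univ, Fintype.card_option, Fintype.card_fin,
    prodBracket]

lemma isSlowlyVarying_prodBracket_pow (φ : Q d → ℝ) (hφ : ∀ w, 0 ≤ φ w) (M : ℕ) :
    IsSlowlyVarying (fun _ : Q d => 1) ((2 ^ (d + 1)) ^ M) M
      fun x => φ x.1 * prodBracket x.2 ^ M := fun w p z ℏ hℏ => by
  have hz := prodBracket_add_smul_le hℏ p z
  calc φ w * prodBracket (p + ℏ • (z.1, (1 : ℝ) • z.2)) ^ M
      ≤ φ w * (2 ^ (d + 1) * prodBracket z * prodBracket p) ^ M := by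
        rw [one_smul]
        exact mul_le_mul_of_nonneg_left
          (pow_le_pow_left₀ (prodBracket_pos _).le hz M) (hφ w)
    _ = (2 ^ (d + 1)) ^ M * prodBracket z ^ M * (φ w * prodBracket p ^ M) := by ring

lemma one_add_sum_le_prod_one_add {ι : Type*} (s : Finset ι) {c : ι → ℝ} (hc : ∀ i, 0 ≤ c i) :
    1 + ∑ i ∈ s, c i ≤ ∏ i ∈ s, (1 + c i) := by
  classical
  induction s using Finset.induction_on with
  | empty => simp
  | insert i s hi ih =>
    rw [sum_insert hi, prod_insert hi]
    nlinarith [hc i, sum_nonneg fun i (_ : i ∈ s) => hc i]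

lemma brP_eq_sqrt_sum (p : Q d) : brP p = √(1 + ∑ j, coordFun j p ^ 2) := by
  rw [brP, Fintype.sum_option, add_assoc]
  rfl

lemma brP_le_prodBracket (p : Q d) : brP p ≤ prodBracket p := by
  rw [brP_eq_sqrt_sum, Real.sqrt_le_left (prodBracket_pos p).le, prodBracket, ← prod_pow]
  simp_rw [norm_one_add_I_mul, Real.sq_sqrt (add_nonneg zero_le_one (sq_nonneg _))]
  exact one_add_sum_le_prod_one_add univ fun j => sq_nonneg _

lemma brP_add_smul_le {ℏ : ℝ} (hℏ : |ℏ| ≤ 1) (p z : Q d) :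
    brP (p + ℏ • z) ≤ 2 * prodBracket z * brP p := by
  have hsq (q : Q d) : 0 ≤ ∑ j, coordFun j q ^ 2 := sum_nonneg fun j _ => sq_nonneg _
  have hsum : ∑ j, coordFun j (p + ℏ • z) ^ 2 ≤
      2 * ∑ j, coordFun j p ^ 2 + 2 * ∑ j, coordFun j z ^ 2 := by
    rw [mul_sum, mul_sum, ← sum_add_distrib]
    refine sum_le_sum fun j _ => ?_
    rw [map_add, map_smul, smul_eq_mul]
    have hℏ2 : ℏ ^ 2 ≤ 1 := (sq_le_one_iff_abs_le_one ℏ).2 hℏ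
    nlinarith [sq_nonneg (coordFun j p - ℏ * coordFun j z),
      mul_le_mul_of_nonneg_right hℏ2 (sq_nonneg (coordFun j z))]
  calc brP (p + ℏ • z) ≤ 2 * brP z * brP p := by
        simp only [brP_eq_sqrt_sum]
        rw [Real.sqrt_le_left (by positivity), mul_pow, mul_pow, Real.sq_sqrt (by positivity),
          Real.sq_sqrt (by positivity)]
        nlinarith [mul_nonneg (hsq p) (hsq z), hsq p, hsq z]
    _ ≤ 2 * prodBracket z * brP p := by
        have := brP_le_prodBracket z
        have : 0 ≤ brP p := Real.sqrt_nonneg _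
        gcongr

lemma rpow_le_pow_mul_rpow {a b c μ : ℝ} (ha : 0 < a) (hb : 0 < b) (hc : 1 ≤ c)
    (hab : a ≤ c * b) (hba : b ≤ c * a) (hM : |μ| ≤ M) : a ^ μ ≤ c ^ M * b ^ μ := by
  have hle : (a / b) ^ μ ≤ c ^ |μ| := by
    rcases le_total 0 μ with h | h
    · rw [abs_of_nonneg h]
      exact Real.rpow_le_rpow (div_pos ha hb).le ((div_le_iff₀ hb).2 hab) h
    · rw [abs_of_nonpos h, ← neg_neg μ, Real.rpow_neg (div_pos ha hb).le, neg_neg,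
        ← Real.inv_rpow (div_pos ha hb).le, inv_div]
      exact Real.rpow_le_rpow (div_pos hb ha).le ((div_le_iff₀ ha).2 hba) (neg_nonneg.2 h)
  rw [Real.div_rpow ha.le hb.le, div_le_iff₀ (Real.rpow_pos_of_pos hb μ)] at hle
  refine hle.trans (mul_le_mul_of_nonneg_right ?_ (Real.rpow_pos_of_pos hb μ).le)
  exact (Real.rpow_le_rpow_of_exponent_le hc hM).trans_eq (Real.rpow_natCast c M)

lemma brF_eq_brP (f : ℝ → ℝ) (x : Q d × Q d) :
    brF f x = brP ((x.2.1, (f x.1.1)⁻¹ • x.2.2) : Q d) := by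
  simp [brF, brP, div_eq_inv_mul]

lemma brF_pos (f : ℝ → ℝ) (x : Q d × Q d) : 0 < brF f x := zero_lt_one.trans_le (one_le_brF f x)

lemma brF_le_prodBracket (hf : ∀ r, 1 ≤ f r) (x : Q d × Q d) : brF f x ≤ prodBracket x.2 := by
  refine (Real.sqrt_le_sqrt (add_le_add_right (sum_le_sum fun i _ => ?_) _)).trans
    (brP_le_prodBracket x.2)
  rw [div_pow]
  exact div_le_self (sq_nonneg _) (one_le_pow₀ (hf _))

lemma isSlowlyVarying_brF_rpow (hf : ∀ r, 1 ≤ f r) {m : ℝ} (hM : |m| ≤ M) :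
    IsSlowlyVarying (d := d) (fun w => f w.1) (2 ^ M) M fun x => brF f x ^ m := fun w p z ℏ hℏ => by
  have hf0 : f w.1 ≠ 0 := (zero_lt_one.trans_le (hf _)).ne'
  have brF_add (p : Q d) (ℏ : ℝ) : brF f (w, p + ℏ • (z.1, f w.1 • z.2)) =
      brP ((p.1, (f w.1)⁻¹ • p.2) + ℏ • z) := by
    rw [brF_eq_brP]
    congr 1
    ext i
    · rfl
    · simp [mul_add, mul_left_comm ℏ, hf0]
  have shift_le (p : Q d) {ℏ : ℝ} (hℏ : |ℏ| ≤ 1) :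
      brF f (w, p + ℏ • (z.1, f w.1 • z.2)) ≤ 2 * prodBracket z * brF f (w, p) := by
    rw [brF_add, brF_eq_brP]
    exact brP_add_smul_le hℏ _ z
  have shift_back := shift_le (p + ℏ • (z.1, f w.1 • z.2)) ((abs_neg ℏ).trans_le hℏ)
  rw [neg_smul, add_neg_cancel_right] at shift_back
  rw [← mul_pow]
  exact rpow_le_pow_mul_rpow (brF_pos _ _) (brF_pos _ _) (by linarith [one_le_prodBracket z])
    (shift_le p hℏ) shift_back hM

end SlowlyVarying

/-! ### The symbol of an amplitude -/

section SymbolOf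

variable {d M : ℕ} {g h : Q d × (Q d × Q d) → ℂ} {ℏ : ℝ}

/-- The linear map `((w, p), (v, z)) ↦ (w, (v, p + ℏ z))`. -/
def shiftMap (d : ℕ) (ℏ : ℝ) : (Q d × Q d) × (Q d × Q d) →L[ℝ] Q d × (Q d × Q d) :=
  ((ContinuousLinearMap.fst ℝ _ _).comp (ContinuousLinearMap.fst ℝ _ _)).prod <|
    ((ContinuousLinearMap.fst ℝ _ _).comp (ContinuousLinearMap.snd ℝ _ _)).prod <|
      (ContinuousLinearMap.snd ℝ _ _).comp (ContinuousLinearMap.fst ℝ _ _) +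
        ℏ • (ContinuousLinearMap.snd ℝ _ _).comp (ContinuousLinearMap.snd ℝ _ _)

lemma shiftMap_apply (ℏ : ℝ) (x y : Q d × Q d) :
    shiftMap d ℏ (x, y) = (x.1, (y.1, x.2 + ℏ • y.2)) := rfl

lemma IsTempered.comp_shiftMap (hg : IsTempered M g) (hℏ : |ℏ| ≤ 1) :
    IsTempered M (g ∘ shiftMap d ℏ) where
  contDiff := hg.contDiff.comp (shiftMap d ℏ).contDiff
  exists_bound l := by
    obtain ⟨φ, hφ, bound⟩ := hg.exists_bound (l.map (shiftMap d ℏ))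
    refine ⟨fun x => φ x.1 * (2 ^ (d + 1) * prodBracket x.2) ^ M,
      (hφ.comp continuous_fst).mul
        ((continuous_const.mul (continuous_prodBracket.comp continuous_snd)).pow M), fun x y => ?_⟩
    have hφ0 : 0 ≤ φ x.1 :=
      nonneg_of_mul_nonneg_left ((norm_nonneg _).trans (bound x.1 0))
        (pow_pos (prodBracket_pos _) M)
    have chain := iterDirD_comp_affine hg.contDiff id (shiftMap d ℏ) 0 l
    simp only [zero_add, id_eq] at chain
    calc ‖iterDirD id l (g ∘ shiftMap d ℏ) (x, y)‖
        ≤ φ x.1 * prodBracket (x.2 + ℏ • y.2) ^ M := by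
          rw [Function.comp_def, chain]
          exact bound x.1 _
      _ ≤ φ x.1 * (2 ^ (d + 1) * prodBracket y.2 * prodBracket x.2) ^ M := by
          have := (prodBracket_pos (x.2 + ℏ • y.2)).le
          have := prodBracket_add_smul_le hℏ x.2 y.2
          gcongr
      _ = φ x.1 * (2 ^ (d + 1) * prodBracket x.2) ^ M * prodBracket y.2 ^ M := by ring

/-- The symbol of the amplitude `g(w, v, p)`, written in terms of `v = q - q'` and
`w = t q + (1 - t) q'`: the oscillatory integral
`(2π)⁻ⁿ ∫∫ exp(i z·v) g(w, v, p + ℏ z) dv dz`. -/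
def symbolOf (ℏ : ℝ) (g : Q d × (Q d × Q d) → ℂ) (x : Q d × Q d) : ℂ :=
  ((2 * Real.pi) ^ (d + 1) : ℝ)⁻¹ • oscInt fun y => g (shiftMap d ℏ (x, y))

lemma symbolOf_eq_smul (ℏ : ℝ) (g : Q d × (Q d × Q d) → ℂ) : symbolOf ℏ g =
    ((((2 * Real.pi) ^ (d + 1) : ℝ)⁻¹ : ℝ) : ℂ) •
      fun x => oscInt fun y => (g ∘ shiftMap d ℏ) (x, y) := by
  funext x
  rw [symbolOf, ← Complex.coe_smul]
  rfl

lemma symbolOf_add (hg : IsTempered M g) (hh : IsTempered M h) (hℏ : |ℏ| ≤ 1) :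
    symbolOf ℏ (g + h) = symbolOf ℏ g + symbolOf ℏ h := by
  funext x
  simp only [symbolOf, Pi.add_apply, ← smul_add]
  congr 1
  exact ((hg.comp_shiftMap hℏ).isOscAmplitude_slice x).oscInt_add
    ((hh.comp_shiftMap hℏ).isOscAmplitude_slice x)

lemma symbolOf_const_smul (hg : IsTempered M g) (hℏ : |ℏ| ≤ 1) (c : ℂ) :
    symbolOf ℏ (c • g) = c • symbolOf ℏ g := by
  funext x
  simp only [symbolOf, Pi.smul_apply]
  rw [smul_comm]
  congr 1
  exact ((hg.comp_shiftMap hℏ).isOscAmplitude_slice x).oscInt_const_smul c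

lemma contDiff_symbolOf (hg : IsTempered M g) (hℏ : |ℏ| ≤ 1) : ContDiff ℝ ∞ (symbolOf ℏ g) := by
  rw [symbolOf_eq_smul]
  exact contDiff_const.smul (hg.comp_shiftMap hℏ).contDiff_oscInt

lemma dirD_symbolOf (hg : IsTempered M g) (hℏ : |ℏ| ≤ 1) (v : Q d × Q d) :
    dirD v (symbolOf ℏ g) = symbolOf ℏ (dirD (v.1, (0, v.2)) g) := by
  have chain : dirD (v, (0 : Q d × Q d)) (g ∘ shiftMap d ℏ) =
      dirD (v.1, (0, v.2)) g ∘ shiftMap d ℏ := by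
    have := dirD_comp_affine hg.contDiff (shiftMap d ℏ) 0 (v, (0 : Q d × Q d))
    simpa [shiftMap_apply, Function.comp_def] using this
  rw [symbolOf_eq_smul, symbolOf_eq_smul, dirD_const_smul (hg.comp_shiftMap hℏ).contDiff_oscInt,
    (hg.comp_shiftMap hℏ).dirD_oscInt, chain]

/-- The cost of a differentiation of an amplitude `g(w, v, p)` whose symbol is to satisfy bounds
with costs `κ`, for weights slowly varying along `s`. -/
def tripleScale (s : Q d → ℝ) (κ : Coord d ⊕ Coord d → Q d × Q d → ℝ) :
    Coord d ⊕ Coord d ⊕ Coord d → Q d × (Q d × Q d) → ℝ :=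
  Sum.elim (fun j x => κ (.inl j) (x.1, x.2.2)) <|
    Sum.elim (fun j x => coordScale (s x.1) j) fun j x => κ (.inr j) (x.1, x.2.2)

lemma tripleVec_inl_or_inr (c : Coord d ⊕ Coord d) : ∃ c' : Coord d ⊕ Coord d ⊕ Coord d,
    tripleVec c' = ((pairVec c).1, (0, (pairVec c).2)) ∧
      ∀ s κ x, tripleScale s κ c' x = κ c (x.1, x.2.2) := by
  rcases c with j | j
  · exact ⟨.inl j, rfl, fun _ _ _ => rfl⟩
  · exact ⟨.inr (.inr j), rfl, fun _ _ _ => rfl⟩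

variable {s : Q d → ℝ} {κ : Coord d ⊕ Coord d → Q d × Q d → ℝ} {B : Q d × Q d → ℝ}
  {K : ℝ}

lemma angularScale_pairVec (l : ℝˣ) (c : Coord d ⊕ Coord d) : angularScale d l (pairVec c) =
    Sum.elim (fun j => (coordScale l j)⁻¹) (coordScale l) c • pairVec c := by
  rcases c with (_ | i) | (_ | i) <;>
    simp [angularScale_apply, pairVec, coordVec, eR, eTh, coordScale]

lemma shiftMap_pairVec (ℏ : ℝ) (c : Coord d ⊕ Coord d) : shiftMap d ℏ (0, pairVec c) =
    Sum.elim (fun _ => (1 : ℝ)) (fun _ => ℏ) c • tripleVec (.inr c) := by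
  rcases c with j | j <;> simp [shiftMap_apply, pairVec, tripleVec]

/-- Rescaling by `s(w)` in the angular variables turns the costs of the differentiations in `v`
and `z` into bounded ones. -/
lemma derivBound_comp_shiftMap_angularScale {N : ℕ} (hs : ∀ w, 0 < s w)
    (hκ : ∀ j x, κ (.inr j) x ≤ (coordScale (s x.1) j)⁻¹) (hB : IsSlowlyVarying s K M B)
    (hℏ : |ℏ| ≤ 1) (hg : ContDiff ℝ ∞ g)
    (bg : DerivBound tripleVec (tripleScale s κ) N (fun x => B (x.1, x.2.2)) g) (x : Q d × Q d) :
    DerivBound pairVec 1 N (fun y => K * B x * prodBracket y.2 ^ M)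
      ((fun y => g (shiftMap d ℏ (x, y))) ∘ angularScale d (Units.mk0 (s x.1) (hs x.1).ne')) := by
  set l := Units.mk0 (s x.1) (hs x.1).ne'
  have coord_pos (j : Coord d) : 0 < coordScale (s x.1) j := by
    cases j
    exacts [one_pos, hs x.1]
  let L : Q d × Q d →L[ℝ] Q d × (Q d × Q d) :=
    (shiftMap d ℏ).comp ((ContinuousLinearMap.inr ℝ _ _).comp (angularScale d l : _ →L[ℝ] _))
  have hL (y : Q d × Q d) :
      shiftMap d ℏ (x, 0) + L y = shiftMap d ℏ (x, angularScale d l y) := by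
    simp [L, shiftMap_apply]
  have bound := bg.comp_affine_of_smul (D := pairVec) (κ := 1) (fun _ _ => zero_le_one) L
    (shiftMap d ℏ (x, 0)) (Sum.elim (fun j => (coordScale l j)⁻¹) (fun j => coordScale l j * ℏ))
    .inr (fun c => ?_) (fun c y => ?_) hg
  · simp only [hL] at bound
    refine bound.mono (fun _ _ => zero_le_one) fun y => ?_
    simp only [shiftMap_apply, angularScale_apply]
    exact (hB x.1 x.2 y.2 ℏ hℏ).trans_eq (by ring)
  · change shiftMap d ℏ (0, angularScale d l (pairVec c)) = _
    rw [angularScale_pairVec, ← smul_zero (M := ℝ) (A := Q d × Q d), ← Prod.smul_mk, map_smul,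
      shiftMap_pairVec, smul_smul]
    cases c <;> simp
  · rw [hL]
    rcases c with j | j
    · change |(coordScale (s x.1) j)⁻¹| * coordScale (s x.1) j ≤ 1
      rw [abs_of_pos (inv_pos.2 (coord_pos j)), inv_mul_cancel₀ (coord_pos j).ne']
    · change |coordScale (s x.1) j * ℏ| * κ (.inr j) (x.1, x.2 + ℏ • (angularScale d l y).2) ≤ 1
      rw [abs_mul, abs_of_pos (coord_pos j)]
      refine (mul_le_mul_of_nonneg_left (hκ j _)
        (mul_nonneg (coord_pos j).le (abs_nonneg ℏ))).trans ?_
      change coordScale (s x.1) j * |ℏ| * (coordScale (s x.1) j)⁻¹ ≤ 1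
      rwa [mul_right_comm, mul_inv_cancel₀ (coord_pos j).ne', one_mul]

lemma exists_norm_symbolOf_le (d : ℕ) {K : ℝ} (hK : 0 ≤ K) (M : ℕ) : ∃ C, 0 ≤ C ∧
    ∀ (s : Q d → ℝ) (κ : Coord d ⊕ Coord d → Q d × Q d → ℝ) (B : Q d × Q d → ℝ), (∀ w, 0 < s w) →
    (∀ j x, κ (.inr j) x ≤ (coordScale (s x.1) j)⁻¹) → IsSlowlyVarying s K M B →
    ∀ (ℏ : ℝ) (g : Q d × (Q d × Q d) → ℂ), |ℏ| ≤ 1 → ContDiff ℝ ∞ g →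
    DerivBound tripleVec (tripleScale s κ) (numSteps d (M + 2)) (fun x => B (x.1, x.2.2)) g →
    ∀ x, ‖symbolOf ℏ g x‖ ≤ C * B x := by
  obtain ⟨C, hC, oscInt_le⟩ := exists_norm_oscInt_le d M
  refine ⟨((2 * Real.pi) ^ (d + 1))⁻¹ * (C * K), by positivity,
    fun s κ B hs hκ hB ℏ g hℏ hg bg x => ?_⟩
  have hB0 : 0 ≤ B x := bg.nonneg (x.1, (0, x.2))
  have bound := derivBound_comp_shiftMap_angularScale hs hκ hB hℏ hg bg x
  have hG : ContDiff ℝ ∞ ((fun y => g (shiftMap d ℏ (x, y))) ∘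
      angularScale d (Units.mk0 (s x.1) (hs x.1).ne')) :=
    (hg.comp ((shiftMap d ℏ).contDiff.comp (contDiff_prodMk_right x))).comp
      (angularScale d _).contDiff
  rw [symbolOf, norm_smul, Real.norm_of_nonneg (by positivity), mul_assoc, mul_assoc,
    ← oscInt_comp_angularScale _ ⟨hG, M, K * B x, mul_nonneg hK hB0, bound⟩]
  exact mul_le_mul_of_nonneg_left (oscInt_le _ _ (mul_nonneg hK hB0) hG bound) (by positivity)

lemma exists_derivBound_symbolOf {K' : ℝ} {M' : ℕ} (hs : ∀ w, 0 < s w) (hκ0 : ∀ c x, 0 ≤ κ c x)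
    (hκ : ∀ j x, κ (.inr j) x ≤ (coordScale (s x.1) j)⁻¹) (hK' : 0 ≤ K')
    (hκs : ∀ c, IsSlowlyVarying s K' M' (κ c)) (N : ℕ) {K : ℝ} (hK : 0 ≤ K) (M : ℕ) :
    ∃ C N', 0 ≤ C ∧ ∀ B : Q d × Q d → ℝ, IsSlowlyVarying s K M B →
      ∀ (ℏ : ℝ) (g : Q d × (Q d × Q d) → ℂ) (M₀ : ℕ), |ℏ| ≤ 1 → IsTempered M₀ g →
      DerivBound tripleVec (tripleScale s κ) N' (fun x => B (x.1, x.2.2)) g →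
      DerivBound pairVec κ N (fun x => C * B x) (symbolOf ℏ g) := by
  induction N generalizing K M with
  | zero =>
    obtain ⟨C, hC, norm_le⟩ := exists_norm_symbolOf_le d hK M
    exact ⟨C, numSteps d (M + 2), hC, fun B hB ℏ g M₀ hℏ hg bg =>
      DerivBound.zero_iff.2 (norm_le s κ B hs hκ hB ℏ g hℏ hg.contDiff bg)⟩
  | succ N ih =>
    obtain ⟨C, hC, norm_le⟩ := exists_norm_symbolOf_le d hK M
    obtain ⟨C', N', -, bound⟩ := ih (mul_nonneg hK hK') (M + M')
    refine ⟨max C C', max (numSteps d (M + 2)) (N' + 1), le_max_of_le_left hC,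
      fun B hB ℏ g M₀ hℏ hg bg => DerivBound.succ_iff.2 ⟨fun x => ?_, fun c => ?_⟩⟩
    all_goals have hB0 (x : Q d × Q d) : 0 ≤ B x := bg.nonneg (x.1, (0, x.2))
    · exact (norm_le s κ B hs hκ hB ℏ g hℏ hg.contDiff (bg.of_le (le_max_left _ _)) x).trans
        (mul_le_mul_of_nonneg_right (le_max_left _ _) (hB0 x))
    · obtain ⟨c', hc', hκc'⟩ := tripleVec_inl_or_inr c
      rw [dirD_symbolOf hg hℏ, ← hc']
      refine (bound _ (hB.mul (hκs c) hB0 (hκ0 c)) ℏ _ M₀ hℏ (hg.dirD _) ?_).mono hκ0 fun x => ?_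
      · simpa only [hκc'] using (bg.of_le (le_max_right _ _)).dirD c'
      · rw [← mul_assoc]
        have := hB0 x
        have := hκ0 c x
        gcongr
        exact le_max_right _ _

end SymbolOf

/-! ### Tempered amplitudes -/

section TemperedWith

variable {d M : ℕ} {φ : ℕ → Q d → ℝ} {g : Q d × (Q d × Q d) → ℂ}

/-- Smooth functions `g(w, v, p)` whose derivatives of order at most `N` are bounded by
`φ_N(w) ⟨p⟩ ^ M`. The weights are part of the data, so that the same `φ` can serve a whole family
of functions. -/
structure IsTemperedWith (M : ℕ) (φ : ℕ → Q d → ℝ) (g : Q d × (Q d × Q d) → ℂ) : Prop where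
  continuous_weight : ∀ N, Continuous (φ N)
  contDiff : ContDiff ℝ ∞ g
  derivBound : ∀ N, DerivBound tripleVec 1 N (fun x => φ N x.1 * prodBracket x.2.2 ^ M) g

lemma tripleScale_one : tripleScale (fun _ : Q d => 1) 1 = 1 := by
  funext c x
  rcases c with j | (_ | _) | j <;> rfl

/-- The projection `(w, (v, p)) ↦ (w, p)`. -/
def forgetDisplacement (d : ℕ) : Q d × (Q d × Q d) →L[ℝ] Q d × Q d :=
  (ContinuousLinearMap.fst ℝ _ _).prod
    ((ContinuousLinearMap.snd ℝ _ _).comp (ContinuousLinearMap.snd ℝ _ _))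

lemma exists_sum_smul_tripleVec (v : Q d × Q d × Q d) :
    ∃ c : Coord d ⊕ Coord d ⊕ Coord d → ℝ, v = ∑ k, c k • tripleVec k := by
  refine ⟨Sum.elim (fun j => coordFun j v.1)
    (Sum.elim (fun j => coordFun j v.2.1) fun j => coordFun j v.2.2), ?_⟩
  conv_lhs => rw [← Prod.mk.eta (p := v), ← Prod.mk.eta (p := v.2),
    ← sum_coordFun_smul_coordVec v.1, ← sum_coordFun_smul_coordVec v.2.1,
    ← sum_coordFun_smul_coordVec v.2.2]
  simp [tripleVec, pairVec, Fintype.sum_sum_type, Prod.ext_iff, Prod.fst_sum, Prod.snd_sum]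

namespace IsTemperedWith

lemma weight_nonneg (hg : IsTemperedWith M φ g) (N : ℕ) (w : Q d) : 0 ≤ φ N w :=
  nonneg_of_mul_nonneg_left ((hg.derivBound N).nonneg (w, (0, 0))) (pow_pos (prodBracket_pos _) M)

lemma isTempered (hg : IsTemperedWith M φ g) : IsTempered M g where
  contDiff := hg.contDiff
  exists_bound l := by
    choose c hc using exists_sum_smul_tripleVec (d := d)
    have bound := (hg.derivBound l.length).comp_affine (D := id) (κ := fun v _ => ∑ k, |c v k|)
      (fun v _ => sum_nonneg fun k _ => abs_nonneg _) (ContinuousLinearMap.id ℝ _) 0 c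
      hc (fun v x => by simp) hg.contDiff
    refine ⟨fun w => φ l.length w * (l.map fun v => ∑ k, |c v k|).prod,
      (hg.continuous_weight _).mul_const _, fun w y => ?_⟩
    simpa [mul_right_comm] using bound l le_rfl (w, y)

lemma comp_forgetDisplacement {b : Q d × Q d → ℂ} (hφ : ∀ N, Continuous (φ N))
    (hb : ContDiff ℝ ∞ b)
    (bound : ∀ N, DerivBound pairVec 1 N (fun x => φ N x.1 * prodBracket x.2 ^ M) b) :
    IsTemperedWith M φ (b ∘ forgetDisplacement d) where
  continuous_weight := hφ
  contDiff := hb.comp (forgetDisplacement d).contDiff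
  derivBound N := by
    have h := (bound N).comp_affine_of_smul (D := tripleVec) (κ := 1) (fun _ _ => zero_le_one)
      (forgetDisplacement d) 0 (Sum.elim (fun _ => 1) (Sum.elim (fun _ => 0) fun _ => 1))
      (Sum.elim .inl (Sum.elim .inl .inr)) ?_ ?_ hb
    · simpa [forgetDisplacement, Function.comp_def] using h
    · rintro (j | j | j) <;> simp [forgetDisplacement, tripleVec, pairVec]
    · rintro (j | j | j) x <;> simp

end IsTemperedWith

lemma exists_isTemperedWith_symbolOf (M : ℕ) (hφ : ∀ N, Continuous (φ N)) :
    ∃ φ', ∀ g, IsTemperedWith M φ g →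
      IsTemperedWith M φ' (symbolOf 1 g ∘ forgetDisplacement d) := by
  choose C N' _ bound using fun N => exists_derivBound_symbolOf (d := d) (s := fun _ => 1)
    (κ := 1) (K' := 1) (M' := 0) (fun _ => one_pos) (fun _ _ => zero_le_one)
    (by rintro (_ | _) _ <;> simp [coordScale]) zero_le_one (fun _ _ _ _ _ _ => by simp) N
    (K := (2 ^ (d + 1)) ^ M) (by positivity) M
  refine ⟨fun N w => C N * φ (N' N) w, fun g hg =>
    .comp_forgetDisplacement (fun N => continuous_const.mul (hφ _))
      (contDiff_symbolOf hg.isTempered abs_one.le) fun N => ?_⟩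
  have h := bound N _ (isSlowlyVarying_prodBracket_pow (φ (N' N)) (hg.weight_nonneg _) M) 1 g M
    abs_one.le hg.isTempered
  rw [tripleScale_one] at h
  simpa only [mul_assoc] using h (hg.derivBound _)

end TemperedWith

section MidpointCoordinates

variable {d : ℕ} {f : ℝ → ℝ} {m t : ℝ} {a : Q d × Q d × Q d → ℂ}

/-- The linear change of variables `(w, (v, p)) ↦ (q, p, q')` inverse to `v = q - q'`,
`w = t q + (1 - t) q'`. -/
def midpointMap (d : ℕ) (t : ℝ) : Q d × (Q d × Q d) →L[ℝ] Q d × Q d × Q d :=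
  let w := ContinuousLinearMap.fst ℝ (Q d) (Q d × Q d)
  let v := (ContinuousLinearMap.fst ℝ _ _).comp (ContinuousLinearMap.snd ℝ (Q d) (Q d × Q d))
  let p := (ContinuousLinearMap.snd ℝ _ _).comp (ContinuousLinearMap.snd ℝ (Q d) (Q d × Q d))
  (w + (1 - t) • v).prod (p.prod (w - t • v))

lemma midpointMap_apply (t : ℝ) (x : Q d × (Q d × Q d)) :
    midpointMap d t x = (x.1 + (1 - t) • x.2.1, (x.2.2, x.1 - t • x.2.1)) := rfl

lemma basePoint_midpointMap (t : ℝ) (x : Q d × (Q d × Q d)) :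
    basePoint t (midpointMap d t x) = x.1 := by
  simp only [basePoint, midpointMap_apply]
  module

lemma ampScale_midpointMap (t : ℝ) (c : Coord d ⊕ Coord d ⊕ Coord d) (x : Q d × (Q d × Q d)) :
    ampScale f t c (midpointMap d t x) = Sum.elim (coordScale (f x.1.1))
      (Sum.elim (fun j => symScale f (.inr j) (x.1, x.2.2)) (coordScale (f x.1.1))) c := by
  rcases c with j | j | j
  · simp only [ampScale, Sum.elim_inl, basePoint_midpointMap]
  · simp only [ampScale, Sum.elim_inl, Sum.elim_inr, basePoint_midpointMap]
    rfl
  · simp only [ampScale, Sum.elim_inr, basePoint_midpointMap]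

lemma symScale_nonneg (hf : ∀ r, 1 ≤ f r) (c : Coord d ⊕ Coord d) (x : Q d × Q d) :
    0 ≤ symScale f c x := by
  have hs (j : Coord d) : 0 ≤ coordScale (f x.1.1) j :=
    zero_le_one.trans (one_le_coordScale (hf _) j)
  rcases c with j | j
  · exact hs j
  · exact mul_nonneg (inv_nonneg.2 (hs j)) (inv_nonneg.2 (brF_pos f x).le)

lemma symScale_inr_le (hf : ∀ r, 1 ≤ f r) (j : Coord d) (x : Q d × Q d) :
    symScale f (.inr j) x ≤ (coordScale (f x.1.1) j)⁻¹ :=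
  mul_le_of_le_one_right (inv_nonneg.2 (zero_le_one.trans (one_le_coordScale (hf _) j)))
    (inv_le_one_of_one_le₀ (one_le_brF f x))

lemma isSlowlyVarying_symScale (hf : ∀ r, 1 ≤ f r) (c : Coord d ⊕ Coord d) :
    IsSlowlyVarying (fun w => f w.1) 2 1 (symScale f c) := fun w p z ℏ hℏ => by
  have hs (j : Coord d) : 0 ≤ coordScale (f w.1) j := zero_le_one.trans (one_le_coordScale (hf _) j)
  rcases c with j | j
  · exact le_mul_of_one_le_left (hs j) (by linarith [one_le_prodBracket z])
  · have h := isSlowlyVarying_brF_rpow hf (m := -1) (M := 1) (by simp) w p z ℏ hℏ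
    simp only [Real.rpow_neg_one, pow_one] at h ⊢
    calc _ ≤ (coordScale (f w.1) j)⁻¹ * (2 * prodBracket z * (brF f (w, p))⁻¹) :=
          mul_le_mul_of_nonneg_left h (inv_nonneg.2 (hs j))
      _ = _ := by simp only [symScale, Sum.elim_inr]; ring

lemma tripleScale_symScale_nonneg (hf : ∀ r, 1 ≤ f r) (c : Coord d ⊕ Coord d ⊕ Coord d)
    (x : Q d × (Q d × Q d)) : 0 ≤ tripleScale (fun w => f w.1) (symScale f) c x := by
  rcases c with j | j | j
  exacts [symScale_nonneg hf (.inl j) (x.1, x.2.2),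
    zero_le_one.trans (one_le_coordScale (hf _) j), symScale_nonneg hf (.inr j) (x.1, x.2.2)]

lemma tripleScale_symScale_le (hf : ∀ r, 1 ≤ f r) (c : Coord d ⊕ Coord d ⊕ Coord d)
    (x : Q d × (Q d × Q d)) : tripleScale (fun w => f w.1) (symScale f) c x ≤ f x.1.1 := by
  rcases c with j | j | j
  exacts [coordScale_le (hf _) j, coordScale_le (hf _) j,
    (symScale_inr_le hf j _).trans
      ((inv_le_one_of_one_le₀ (one_le_coordScale (hf _) j)).trans (hf _))]

lemma ampNorm_nonneg (hf : ∀ r, 1 ≤ f r) (ha : IsAmp f m t a) (N : ℕ) :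
    0 ≤ ampNorm f m t N a :=
  nonneg_of_mul_nonneg_left ((derivBound_of_isAmp hf ha N).nonneg 0) <| by
    rw [brFA_eq_brF]
    exact Real.rpow_pos_of_pos (brF_pos f _) m

lemma derivBound_comp_midpointMap (hf : ∀ r, 1 ≤ f r) (ha : IsAmp f m t a) (N : ℕ) :
    DerivBound tripleVec (tripleScale (fun w => f w.1) (symScale f)) N
      (fun x => (|1 - t| + |t| + 2) ^ N * (ampNorm f m t N a * brF f (x.1, x.2.2) ^ m))
      (a ∘ midpointMap d t) := by
  have scale_nonneg := tripleScale_symScale_nonneg (d := d) hf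
  have bound := (derivBound_of_isAmp hf ha N).comp_affine (D := tripleVec)
    (κ := fun c x => (|1 - t| + |t| + 2) * tripleScale (fun w => f w.1) (symScale f) c x)
    (fun c x => mul_nonneg (by positivity) (scale_nonneg c x)) (midpointMap d t) 0
    (Sum.elim (fun j => Sum.elim (Pi.single j 1) (Sum.elim 0 (Pi.single j 1))) <|
      Sum.elim (fun j => Sum.elim (Pi.single j (1 - t)) (Sum.elim 0 (Pi.single j (-t))))
        fun j => Sum.elim 0 (Sum.elim (Pi.single j 1) 0)) ?_ ?_ ha.1
  · simp only [zero_add, brFA_eq_brF, basePoint_midpointMap] at bound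
    exact bound.weight_mono (fun c x => mul_nonneg (by positivity) (scale_nonneg c x))
      scale_nonneg (fun _ => by linarith [abs_nonneg (1 - t), abs_nonneg t]) fun _ _ => le_rfl
  · rintro (j | j | j) <;>
      simp [midpointMap_apply, tripleVec, pairVec, Fintype.sum_sum_type, Pi.single_apply]
  · intro c x
    have h0 := scale_nonneg c x
    rcases c with j | j | j <;>
      simp only [tripleScale, symScale, zero_add, ampScale_midpointMap, Fintype.sum_sum_type,
        Sum.elim_inl, Sum.elim_inr, Pi.single_apply, Pi.zero_apply, apply_ite abs, abs_one,
        abs_zero, abs_neg, ite_mul, one_mul, zero_mul, sum_ite_eq', sum_const_zero, mem_univ,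
        if_true] at h0 ⊢ <;>
      nlinarith [abs_nonneg (1 - t), abs_nonneg t]

lemma exists_isTemperedWith_comp_midpointMap (hfc : Continuous f) (hf : ∀ r, 1 ≤ f r)
    (ha : IsAmp f m t a) : ∃ φ, IsTemperedWith ⌈|m|⌉₊ φ (a ∘ midpointMap d t) := by
  refine ⟨fun N w => f w.1 ^ N * ((|1 - t| + |t| + 2) ^ N * ampNorm f m t N a),
    fun N => ((hfc.comp continuous_fst).pow N).mul_const _,
    ha.1.comp (midpointMap d t).contDiff, fun N => ?_⟩
  have ampNorm_nonneg := ampNorm_nonneg hf ha N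
  refine ((derivBound_comp_midpointMap hf ha N).weight_mono (κ' := 1) (A := fun x => f x.1.1)
    (tripleScale_symScale_nonneg hf) (fun _ _ => zero_le_one) (fun _ => hf _) fun c x =>
      (tripleScale_symScale_le hf c x).trans_eq (mul_one _).symm).mono
    (fun _ _ => zero_le_one) fun x => ?_
  have brF_rpow_le : brF f (x.1, x.2.2) ^ m ≤ prodBracket x.2.2 ^ ⌈|m|⌉₊ :=
    calc brF f (x.1, x.2.2) ^ m ≤ brF f (x.1, x.2.2) ^ (⌈|m|⌉₊ : ℝ) :=
          Real.rpow_le_rpow_of_exponent_le (one_le_brF f _) ((le_abs_self m).trans (Nat.le_ceil _))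
      _ ≤ prodBracket x.2.2 ^ ⌈|m|⌉₊ := by
          rw [Real.rpow_natCast]
          exact pow_le_pow_left₀ (brF_pos f _).le (brF_le_prodBracket hf _) _
  have := (zero_le_one.trans (hf x.1.1))
  calc f x.1.1 ^ N * ((|1 - t| + |t| + 2) ^ N * (ampNorm f m t N a * brF f (x.1, x.2.2) ^ m))
      ≤ f x.1.1 ^ N * ((|1 - t| + |t| + 2) ^ N *
          (ampNorm f m t N a * prodBracket x.2.2 ^ ⌈|m|⌉₊)) := by gcongr
    _ = _ := by ring

lemma exists_derivBound_symbolOf_comp_midpointMap (hfc : Continuous f) (hf : ∀ r, 1 ≤ f r)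
    (d : ℕ) (m t : ℝ) (N : ℕ) : ∃ C N', 0 ≤ C ∧ ∀ (ℏ : ℝ) (a : Q d × Q d × Q d → ℂ),
      |ℏ| ≤ 1 → IsAmp f m t a → DerivBound pairVec (symScale f) N
        (fun x => C * ampNorm f m t N' a * brF f x ^ m) (symbolOf ℏ (a ∘ midpointMap d t)) := by
  obtain ⟨C, N', hC, bound⟩ := exists_derivBound_symbolOf (s := fun w : Q d => f w.1)
    (κ := symScale f) (fun w => zero_lt_one.trans_le (hf _)) (symScale_nonneg hf)
    (symScale_inr_le hf) zero_le_two (isSlowlyVarying_symScale hf) N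
    (K := 2 ^ ⌈|m|⌉₊) (by positivity) ⌈|m|⌉₊
  refine ⟨C * (|1 - t| + |t| + 2) ^ N', N', by positivity, fun ℏ a hℏ ha => ?_⟩
  obtain ⟨φ, hφ⟩ := exists_isTemperedWith_comp_midpointMap hfc hf ha
  have slow : IsSlowlyVarying (fun w => f w.1) (2 ^ ⌈|m|⌉₊) ⌈|m|⌉₊ fun x : Q d × Q d =>
      (|1 - t| + |t| + 2) ^ N' * (ampNorm f m t N' a * brF f x ^ m) := fun w p z ℏ hℏ => by
    have hA : 0 ≤ (|1 - t| + |t| + 2) ^ N' * ampNorm f m t N' a :=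
      mul_nonneg (by positivity) (ampNorm_nonneg hf ha N')
    have := mul_le_mul_of_nonneg_left
      (isSlowlyVarying_brF_rpow hf (Nat.le_ceil |m|) w p z ℏ hℏ) hA
    linarith
  have h := bound _ slow ℏ _ _ hℏ hφ.isTempered (derivBound_comp_midpointMap hf ha N')
  simpa only [mul_assoc] using h

end MidpointCoordinates

/-! ### The operator of an amplitude -/

section FiberDecay

variable {d k : ℕ} {z : Q d}

/-- The integrations by parts in `v` gaining `k` powers of decay of `∫ e^{i z·v} G(v) dv` in each
coordinate of `z`. -/
def fiberSteps (k : ℕ) (z : Q d) : List (ℂ × Coord d) :=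
  (List.replicate k
    (univ.toList.map fun j => ((1 + Complex.I * (coordFun j z : ℂ))⁻¹, j))).flatten

lemma length_fiberSteps (k : ℕ) (z : Q d) : (fiberSteps k z).length = k * (d + 1) := by
  simp [fiberSteps]

lemma prod_norm_fiberSteps (k : ℕ) (z : Q d) :
    ((fiberSteps k z).map fun s => ‖s.1‖).prod = (prodBracket z ^ k)⁻¹ := by
  simp only [fiberSteps, List.map_flatten, List.map_replicate, List.prod_flatten,
    List.prod_replicate, List.map_map]
  exact (congrArg (· ^ k) (prod_norm_inv_one_add_I_mul z)).trans (inv_pow _ _)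

lemma contDiff_phase_slice (z : Q d) : ContDiff ℝ ∞ fun v => phase (v, z) :=
  contDiff_phase.comp (contDiff_prodMk_left z)

lemma dirD_phase_slice (j : Coord d) (z : Q d) : dirD (coordVec j) (fun v => phase (v, z)) =
    fun v => Complex.I * (coordFun j z : ℂ) * phase (v, z) := by
  have chain := dirD_comp_affine contDiff_phase (ContinuousLinearMap.inl ℝ (Q d) (Q d)) (0, z)
    (coordVec j)
  simp only [ContinuousLinearMap.inl_apply, Prod.mk_add_mk, zero_add, add_zero] at chain
  rw [chain]
  exact funext fun v => dirD_phase (.inl j) (v, z)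

lemma isPhaseStep_of_mem_constSteps_fiberSteps :
    ∀ s ∈ constSteps coordVec (fiberSteps k z), IsPhaseStep (fun v => phase (v, z)) s := by
  intro s hs
  obtain ⟨j, rfl⟩ : ∃ j, s = (fun _ => (1 + Complex.I * (coordFun j z : ℂ))⁻¹, coordVec j) := by
    obtain ⟨s, hj, rfl⟩ := List.mem_map.1 hs
    simp only [fiberSteps, List.mem_flatten, List.mem_replicate] at hj
    obtain ⟨_, ⟨_, rfl⟩, hj⟩ := hj
    obtain ⟨j, _, rfl⟩ := List.mem_map.1 hj
    exact ⟨j, rfl⟩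
  refine ⟨contDiff_const, dirD_const _ _, funext fun v => ?_⟩
  have := one_add_I_mul_ne_zero (coordFun j z)
  simp only [Pi.mul_apply, Pi.add_apply, dirD_phase_slice]
  field_simp

lemma norm_integral_phase_mul_le {S : Set (Q d)} (hS : IsCompact S) {B : Q d → ℝ}
    (hB : Continuous B) {G : Q d → ℂ} (hG : ContDiff ℝ ∞ G) (hGS : tsupport G ⊆ S)
    (bG : DerivBound coordVec 1 (k * (d + 1)) B G) (z : Q d) :
    ‖∫ v, phase (v, z) * G v‖ ≤
      2 ^ (k * (d + 1)) * (prodBracket z ^ k)⁻¹ * ∫ v in S, B v := by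
  set R := regularize (constSteps coordVec (fiberSteps k z)) G
  have norm_le (v : Q d) : ‖R v‖ ≤ 2 ^ (k * (d + 1)) * (prodBracket z ^ k)⁻¹ * B v := by
    have h := derivBound_regularize_constSteps (fiberSteps k z) hG (N := 0)
      (by rwa [length_fiberSteps, zero_add])
    rw [length_fiberSteps, prod_norm_fiberSteps] at h
    exact h.norm_le v
  have vanish : ∀ v ∉ S, phase (v, z) * R v = 0 := fun v hv =>
    mul_eq_zero_of_right _ <| image_eq_zero_of_notMem_tsupport fun h =>
      hv (hGS (tsupport_regularize_subset _ _ h))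
  rw [← integral_mul_regularize (contDiff_phase_slice z) isPhaseStep_of_mem_constSteps_fiberSteps
    hG (hS.of_isClosed_subset (isClosed_tsupport G) hGS),
    ← setIntegral_eq_integral_of_forall_compl_eq_zero vanish, ← integral_const_mul]
  refine norm_integral_le_of_norm_le
    ((continuous_const.mul hB).continuousOn.integrableOn_compact hS) (.of_forall fun v => ?_)
  rw [norm_mul, norm_phase, one_mul]
  exact norm_le v

end FiberDecay

section DisplacedOp

variable {d M : ℕ} {t : ℝ} {φ : ℕ → Q d → ℝ} {g : Q d × (Q d × Q d) → ℂ} {u : Q d → ℂ}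

/-- The integrand `g(q - (1 - t) v, v, z) u(q - v)` of `displacedOp`, the phase factor excluded. -/
def displacedIntegrand (t : ℝ) (g : Q d × (Q d × Q d) → ℂ) (u : Q d → ℂ) (q : Q d)
    (y : Q d × Q d) : ℂ :=
  g (q - (1 - t) • y.1, y) * u (q - y.1)

/-- The operator with amplitude `g(w, v, p)`, at `ℏ = 1` and without its normalizing constant,
written in terms of the displacement `v = q - q'`, so that `w = t q + (1 - t) q'` becomes
`q - (1 - t) v`. -/
def displacedOp (t : ℝ) (g : Q d × (Q d × Q d) → ℂ) (u : Q d → ℂ) (q : Q d) : ℂ :=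
  ∫ z, ∫ v, phase (v, z) * displacedIntegrand t g u q (v, z)

lemma continuous_displacedIntegrand (t : ℝ) (hg : Continuous g) (hu : Continuous u) (q : Q d) :
    Continuous (displacedIntegrand t g u q) := by
  unfold displacedIntegrand
  fun_prop

lemma displacedIntegrand_eq_zero {q v : Q d} (z : Q d)
    (hv : v ∉ tsupport fun v => u (q - v)) : displacedIntegrand t g u q (v, z) = 0 := by
  rw [displacedIntegrand]
  exact mul_eq_zero_of_right _ (image_eq_zero_of_notMem_tsupport (f := fun v => u (q - v)) hv)

lemma IsCc.comp_sub_left (hu : IsCc u) (q : Q d) : IsCc fun v => u (q - v) :=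
  ⟨hu.1.comp (contDiff_const.sub contDiff_id), hu.2.comp_homeomorph (Homeomorph.subLeft q)⟩

lemma contDiff_displacedIntegrand_slice (t : ℝ) (hg : ContDiff ℝ ∞ g) (hu : IsCc u) (q z : Q d) :
    ContDiff ℝ ∞ fun v => displacedIntegrand t g u q (v, z) :=
  (hg.comp (by fun_prop)).mul (hu.comp_sub_left q).1

lemma exists_derivBound_displacedIntegrand (t : ℝ) (φ : ℕ → Q d → ℝ) (M : ℕ) (hu : IsCc u)
    (q : Q d) (N : ℕ) :
    ∃ K, 0 ≤ K ∧ ∀ g, IsTemperedWith M φ g → ∀ z, DerivBound coordVec 1 N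
      (fun v => K * φ N (q - (1 - t) • v) * prodBracket z ^ M)
      (fun v => displacedIntegrand t g u q (v, z)) := by
  obtain ⟨K, hK, bu⟩ := exists_derivBound_of_hasCompactSupport coordVec (hu.comp_sub_left q).1
    (hu.comp_sub_left q).2 N
  let L : Q d →L[ℝ] Q d × (Q d × Q d) :=
    (-((1 - t) • ContinuousLinearMap.id ℝ (Q d))).prod (ContinuousLinearMap.inl ℝ (Q d) (Q d))
  have hL (z v : Q d) : (q, ((0 : Q d), z)) + L v = (q - (1 - t) • v, (v, z)) := by
    simp [L, sub_eq_add_neg (b := (1 - t) • v)]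
  choose c hc using fun j : Coord d => exists_sum_smul_tripleVec (L (coordVec j))
  set A := 1 + ∑ j, ∑ k, |c j k|
  have sum_le (j : Coord d) : ∑ k, |c j k| ≤ A :=
    (single_le_sum (f := fun j => ∑ k, |c j k|) (fun j _ => sum_nonneg fun k _ => abs_nonneg _)
      (mem_univ j)).trans (le_add_of_nonneg_left zero_le_one)
  have one_le : 1 ≤ A := le_add_of_nonneg_right <|
    sum_nonneg fun j _ => sum_nonneg fun k _ => abs_nonneg _
  refine ⟨2 ^ N * (A ^ N * K), by positivity, fun g hg z => ?_⟩
  have bg := (hg.derivBound N).comp_affine (D := coordVec) (κ := fun _ _ => A)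
    (fun _ _ => zero_le_one.trans one_le) L (q, (0, z)) c hc
    (fun j v => by simpa using sum_le j) hg.contDiff
  have bg' := bg.weight_mono (κ' := 1) (fun _ _ => zero_le_one.trans one_le)
    (fun _ _ => zero_le_one) (A := fun _ => A) (fun _ => one_le) fun _ _ => (mul_one A).ge
  simp only [hL] at bg'
  have hg' : ContDiff ℝ ∞ fun v => g (q - (1 - t) • v, (v, z)) := hg.contDiff.comp (by fun_prop)
  refine (bg'.mul (fun _ _ => zero_le_one) hg' (hu.comp_sub_left q).1 bu).mono
    (fun _ _ => zero_le_one) fun v => le_of_eq ?_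
  ring

lemma exists_norm_integral_displacedIntegrand_le (t : ℝ) (φ : ℕ → Q d → ℝ) (M : ℕ) (hu : IsCc u)
    (q : Q d) : ∃ K, ∀ g, IsTemperedWith M φ g → ∀ z,
      ‖∫ v, phase (v, z) * displacedIntegrand t g u q (v, z)‖ ≤ K * (prodBracket z ^ 2)⁻¹ := by
  obtain ⟨K, -, bound⟩ := exists_derivBound_displacedIntegrand t φ M hu q ((M + 2) * (d + 1))
  set S := tsupport fun v => u (q - v)
  refine ⟨2 ^ ((M + 2) * (d + 1)) *
    ∫ v in S, K * φ ((M + 2) * (d + 1)) (q - (1 - t) • v), fun g hg z => ?_⟩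
  have support_subset : tsupport (fun v => displacedIntegrand t g u q (v, z)) ⊆ S :=
    closure_minimal (fun v hv => by_contra fun h => hv (displacedIntegrand_eq_zero z h))
      (isClosed_tsupport _)
  have continuous_bound : Continuous fun v =>
      K * φ ((M + 2) * (d + 1)) (q - (1 - t) • v) * prodBracket z ^ M :=
    (continuous_const.mul ((hg.continuous_weight _).comp (by fun_prop))).mul continuous_const
  refine (norm_integral_phase_mul_le (S := S) (hu.comp_sub_left q).2 continuous_bound
    (contDiff_displacedIntegrand_slice t hg.contDiff hu q z) support_subset
    (bound g hg z) z).trans_eq ?_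
  have := (prodBracket_pos z).ne'
  rw [integral_mul_const, pow_add]
  field_simp

lemma continuous_phase_mul_displacedIntegrand (t : ℝ) (hg : Continuous g) (hu : Continuous u)
    (q : Q d) : Continuous fun y => phase y * displacedIntegrand t g u q y :=
  contDiff_phase.continuous.mul (continuous_displacedIntegrand t hg hu q)

lemma aestronglyMeasurable_integral_displacedIntegrand (t : ℝ) (hg : Continuous g)
    (hu : Continuous u) (q : Q d) :
    AEStronglyMeasurable fun z => ∫ v, phase (v, z) * displacedIntegrand t g u q (v, z) :=
  (((continuous_phase_mul_displacedIntegrand t hg hu q).comp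
    continuous_swap).stronglyMeasurable.integral_prod_right').aestronglyMeasurable

lemma IsTemperedWith.integrable_integral_displacedIntegrand (hg : IsTemperedWith M φ g)
    (t : ℝ) (hu : IsCc u) (q : Q d) :
    Integrable fun z => ∫ v, phase (v, z) * displacedIntegrand t g u q (v, z) := by
  obtain ⟨K, bound⟩ := exists_norm_integral_displacedIntegrand_le t φ M hu q
  exact (integrable_prodBracket_sq_inv.const_mul K).mono'
    (aestronglyMeasurable_integral_displacedIntegrand t hg.contDiff.continuous hu.1.continuous q)
    (.of_forall (bound g hg))

lemma tendsto_displacedOp {G : ℕ → Q d × (Q d × Q d) → ℂ} (hG : ∀ n, IsTemperedWith M φ (G n))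
    (lim : ∀ x, Tendsto (fun n => G n x) atTop (𝓝 (g x))) (t : ℝ) (hu : IsCc u) (q : Q d) :
    Tendsto (fun n => displacedOp t (G n) u q) atTop (𝓝 (displacedOp t g u q)) := by
  obtain ⟨K, bound⟩ := exists_norm_integral_displacedIntegrand_le t φ M hu q
  refine tendsto_integral_of_dominated_convergence (fun z => K * (prodBracket z ^ 2)⁻¹)
    (fun n => aestronglyMeasurable_integral_displacedIntegrand t (hG n).contDiff.continuous
      hu.1.continuous q) (integrable_prodBracket_sq_inv.const_mul K)
    (fun n => .of_forall (bound _ (hG n))) (.of_forall fun z => ?_)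
  have hu' := hu.comp_sub_left q
  refine tendsto_integral_of_dominated_convergence
    (fun v => φ 0 (q - (1 - t) • v) * prodBracket z ^ M * ‖u (q - v)‖) (fun n => ?_) ?_
    (fun n => .of_forall fun v => ?_) (.of_forall fun v => ((lim _).mul_const _).const_mul _)
  · exact ((continuous_phase_mul_displacedIntegrand t (hG n).contDiff.continuous hu.1.continuous
      q).comp (Continuous.prodMk_left z)).aestronglyMeasurable
  · have := (hG 0).continuous_weight 0
    exact Continuous.integrable_of_hasCompactSupport
      (((this.comp (by fun_prop)).mul continuous_const).mul hu'.1.continuous.norm)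
      hu'.2.norm.mul_left
  · rw [norm_mul, norm_phase, one_mul, displacedIntegrand, norm_mul]
    exact mul_le_mul_of_nonneg_right (((hG n).derivBound 0).norm_le _) (norm_nonneg _)

end DisplacedOp

/-! ### Fourier inversion and compactly supported amplitudes -/

section FourierInversion

variable {d : ℕ}

lemma phase_add_left (v v' z : Q d) : phase (v + v', z) = phase (v, z) * phase (v', z) := by
  simp only [phase, qdot_eq_sum, map_add, mul_add, sum_add_distrib, Complex.ofReal_add,
    Complex.exp_add]

lemma phase_add_right (v z z' : Q d) : phase (v, z + z') = phase (v, z) * phase (v, z') := by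
  simp only [phase, qdot_eq_sum, map_add, add_mul, mul_add, sum_add_distrib, Complex.ofReal_add,
    Complex.exp_add]

/-- `ℝⁿ` with its Euclidean inner product, to which Mathlib's Fourier inversion applies. -/
abbrev EuclideanQ (d : ℕ) : Type := WithLp 2 (ℝ × EuclideanSpace ℝ (Fin d))

/-- The identity map from the Euclidean model of `ℝⁿ`. -/
def euclideanHomeomorph (d : ℕ) : EuclideanQ d ≃ₜ Q d :=
  (WithLp.homeomorphProd 2 ℝ (EuclideanSpace ℝ (Fin d))).trans
    ((Homeomorph.refl ℝ).prodCongr (PiLp.homeomorph 2 fun _ : Fin d => ℝ))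

lemma measurePreserving_euclideanHomeomorph (d : ℕ) :
    MeasurePreserving (euclideanHomeomorph d) :=
  ((MeasurePreserving.id volume).prod (PiLp.volume_preserving_ofLp (Fin d))).comp
    (WithLp.volume_preserving_ofLp ℝ (EuclideanSpace ℝ (Fin d)))

lemma inner_eq_qdot (v w : EuclideanQ d) :
    inner ℝ v w = qdot (euclideanHomeomorph d v) (euclideanHomeomorph d w) := by
  simp only [WithLp.prod_inner_apply, PiLp.inner_apply, RCLike.inner_apply, conj_trivial, mul_comm]
  rfl

lemma finrank_Q : Module.finrank ℝ (Q d) = d + 1 := by simp [add_comm]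

open scoped FourierTransform in
lemma fourier_comp_euclideanHomeomorph (F : Q d → ℂ) (w : EuclideanQ d) :
    𝓕 (F ∘ euclideanHomeomorph d) w =
      ∫ y, phase (y, (-(2 * Real.pi)) • euclideanHomeomorph d w) * F y := by
  rw [Real.fourier_eq', ← (measurePreserving_euclideanHomeomorph d).integral_comp
    (euclideanHomeomorph d).measurableEmbedding]
  refine integral_congr_ae (.of_forall fun v => ?_)
  simp only [phase, inner_eq_qdot, Function.comp_apply, smul_eq_mul, qdot_eq_sum, map_smul,
    mul_sum, Complex.ofReal_sum, sum_mul]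
  congr 3
  funext j
  push_cast
  ring

lemma integral_integral_phase_mul {F : Q d → ℂ} (hF : Continuous F) (hFi : Integrable F)
    (hFi' : Integrable fun p : Q d => ∫ y, phase (y, p) * F y) :
    ∫ p : Q d, ∫ y, phase (y, p) * F y = ((2 * Real.pi) ^ (d + 1) : ℝ) * F 0 := by
  set F' : Q d → ℂ := fun p => ∫ y, phase (y, p) * F y
  have e_mp := measurePreserving_euclideanHomeomorph d
  have e_emb := (euclideanHomeomorph d).measurableEmbedding
  have fourier_eq := funext (fourier_comp_euclideanHomeomorph F)
  have inversion := ((e_mp.integrable_comp_emb e_emb).2 hFi).fourierInv_fourier_eq (v := 0)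
    (by
      rw [fourier_eq]
      exact (e_mp.integrable_comp_emb e_emb).2 ((integrable_comp_smul_iff volume F'
        (neg_ne_zero.2 Real.two_pi_pos.ne')).2 hFi'))
    (hF.comp (euclideanHomeomorph d).continuous).continuousAt
  rw [Real.fourierInv_eq', fourier_eq] at inversion
  simp only [inner_zero_right, mul_zero, Complex.ofReal_zero, zero_mul, Complex.exp_zero,
    one_smul] at inversion
  rw [e_mp.integral_comp e_emb fun p => F' (-(2 * Real.pi) • p), Measure.integral_comp_smul,
    finrank_Q, abs_inv, abs_pow, abs_neg, abs_of_pos Real.two_pi_pos] at inversion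
  change _ = F 0 at inversion
  rw [← inversion, ← Complex.real_smul, smul_inv_smul₀ (pow_pos Real.two_pi_pos _).ne']

end FourierInversion

section CompactSupport

variable {d M : ℕ} {t : ℝ} {φ : ℕ → Q d → ℝ} {g : Q d × (Q d × Q d) → ℂ} {u : Q d → ℂ}
  {S : Set (Q d × Q d)}

/-- The partial Fourier transform `∫ e^{i ζ·v} g(w, v, ζ) dζ`. -/
def fiberFourier (g : Q d × (Q d × Q d) → ℂ) (x : Q d × Q d) : ℂ :=
  ∫ ζ, phase (x.2, ζ) * g (x.1, (x.2, ζ))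

lemma continuous_fiberFourier (hg : Continuous g) (hS : IsCompact S)
    (vanish : ∀ w, ∀ y ∉ S, g (w, y) = 0) : Continuous (fiberFourier g) := by
  have hphase := (contDiff_phase (d := d)).continuous
  rw [← continuousOn_univ]
  refine continuousOn_integral_of_compact_support (k := Prod.snd '' S) (hS.image continuous_snd)
    ?_ fun x ζ _ hζ => ?_
  · exact Continuous.continuousOn (by fun_prop)
  · rw [vanish _ _ fun h => hζ (Set.mem_image_of_mem _ h), mul_zero]

lemma fiberFourier_eq_zero (vanish : ∀ w, ∀ y ∉ S, g (w, y) = 0) (w : Q d) {v : Q d}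
    (hv : v ∉ Prod.fst '' S) : fiberFourier g (w, v) = 0 := by
  refine integral_eq_zero_of_ae (.of_forall fun ζ => ?_)
  simp [vanish w (v, ζ) fun h => hv (Set.mem_image_of_mem _ h)]

lemma symbolOf_one_eq_integral (hg : ContDiff ℝ ∞ g) (hS : IsCompact S)
    (vanish : ∀ w, ∀ y ∉ S, g (w, y) = 0) (w p : Q d) : symbolOf 1 g (w, p) =
      ((2 * Real.pi) ^ (d + 1) : ℝ)⁻¹ • ∫ v, phase (-v, p) * fiberFourier g (w, v) := by
  have hG : ContDiff ℝ ∞ fun y => g (shiftMap d 1 ((w, p), y)) := hg.comp (by fun_prop)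
  have hGc : HasCompactSupport fun y => g (shiftMap d 1 ((w, p), y)) :=
    .intro (hS.image (f := fun y => (y.1, y.2 - p)) (by fun_prop)) fun y hy => by
      refine vanish _ _ fun h => hy ⟨_, h, ?_⟩
      simp
  rw [symbolOf, oscInt_eq_integral_of_hasCompactSupport hG hGc]
  congr 1
  refine (integral_prod _ ((contDiff_phase.continuous.mul
    hG.continuous).integrable_of_hasCompactSupport hGc.mul_left)).trans ?_
  refine integral_congr_ae (.of_forall fun v => ?_)
  simp only [fiberFourier, ← integral_const_mul]
  rw [← integral_add_left_eq_self (fun ζ => phase (-v, p) * (phase (v, ζ) * g (w, (v, ζ)))) p]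
  refine integral_congr_ae (.of_forall fun z => ?_)
  have phase_eq : phase (v, z) = phase (-v, p) * phase (v, p + z) := by
    rw [phase_add_right, ← mul_assoc, ← phase_add_left, neg_add_cancel]
    simp [phase, qdot_eq_sum]
  simp only [Pi.mul_apply, shiftMap_apply, one_smul]
  rw [phase_eq, mul_assoc]

/-- The integrand in `v` of `displacedKernel` at `y`. -/
def displacedKernelIntegrand (t : ℝ) (g : Q d × (Q d × Q d) → ℂ) (u : Q d → ℂ) (q y v : Q d) :
    ℂ :=
  fiberFourier g (q - (1 - t) • v, v - y) * u (q - v)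

/-- The function of `y` whose Fourier transform is, up to a constant, the integrand in `p` of the
operator of the symbol of `g`, and whose value at `0` is the operator of `g`. -/
def displacedKernel (t : ℝ) (g : Q d × (Q d × Q d) → ℂ) (u : Q d → ℂ) (q y : Q d) : ℂ :=
  ∫ v, displacedKernelIntegrand t g u q y v

lemma continuous_displacedKernelIntegrand (t : ℝ) (hg : Continuous g) (hS : IsCompact S)
    (vanish : ∀ w, ∀ y ∉ S, g (w, y) = 0) (hu : Continuous u) (q : Q d) :
    Continuous (displacedKernelIntegrand t g u q).uncurry := by
  have := continuous_fiberFourier hg hS vanish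
  unfold displacedKernelIntegrand Function.uncurry
  fun_prop

lemma hasCompactSupport_displacedKernelIntegrand (t : ℝ) (hS : IsCompact S)
    (vanish : ∀ w, ∀ y ∉ S, g (w, y) = 0) (hu : IsCc u) (q : Q d) :
    HasCompactSupport (displacedKernelIntegrand t g u q).uncurry := by
  refine .intro (K := (fun x : Q d × Q d => (x.2 - x.1, x.2)) ''
    ((Prod.fst '' S) ×ˢ tsupport fun v => u (q - v)))
    (((hS.image continuous_fst).prod (hu.comp_sub_left q).2).image (by fun_prop)) ?_
  rintro ⟨y, v⟩ hyv
  refine mul_eq_zero.2 (or_iff_not_imp_right.2 fun hv => fiberFourier_eq_zero vanish _ fun h => ?_)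
  exact hyv ⟨(v - y, v), ⟨h, subset_tsupport (fun v => u (q - v)) hv⟩, by simp⟩

lemma continuous_displacedKernel (t : ℝ) (hg : Continuous g) (hS : IsCompact S)
    (vanish : ∀ w, ∀ y ∉ S, g (w, y) = 0) (hu : IsCc u) (q : Q d) :
    Continuous (displacedKernel t g u q) := by
  rw [← continuousOn_univ]
  refine continuousOn_integral_of_compact_support (k := tsupport fun v => u (q - v))
    (hu.comp_sub_left q).2
    (continuous_displacedKernelIntegrand t hg hS vanish hu.1.continuous q).continuousOn
    fun y v _ hv => mul_eq_zero_of_right _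
      (image_eq_zero_of_notMem_tsupport (f := fun v => u (q - v)) hv)

lemma hasCompactSupport_displacedKernel (t : ℝ) (hS : IsCompact S)
    (vanish : ∀ w, ∀ y ∉ S, g (w, y) = 0) (hu : IsCc u) (q : Q d) :
    HasCompactSupport (displacedKernel t g u q) := by
  have h := hasCompactSupport_displacedKernelIntegrand t hS vanish hu q
  refine .intro (h.isCompact.image continuous_fst) fun y hy =>
    integral_eq_zero_of_ae (.of_forall fun v => ?_)
  exact image_eq_zero_of_notMem_tsupport (f := (displacedKernelIntegrand t g u q).uncurry)
    (x := (y, v)) fun h => hy (Set.mem_image_of_mem _ h)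

lemma phase_mul_displacedIntegrand_symbolOf (t : ℝ) (hg : ContDiff ℝ ∞ g) (hS : IsCompact S)
    (vanish : ∀ w, ∀ y ∉ S, g (w, y) = 0) (u : Q d → ℂ) (q p v : Q d) :
    phase (v, p) * displacedIntegrand t (symbolOf 1 g ∘ forgetDisplacement d) u q (v, p) =
      ((2 * Real.pi) ^ (d + 1) : ℝ)⁻¹ •
        ∫ y, phase (y, p) * displacedKernelIntegrand t g u q y v := by
  change phase (v, p) * (symbolOf 1 g (q - (1 - t) • v, p) * u (q - v)) = _
  rw [symbolOf_one_eq_integral hg hS vanish, ← integral_sub_left_eq_self _ _ v, smul_mul_assoc,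
    mul_smul_comm, ← integral_mul_const, ← integral_const_mul]
  congr 2 with y
  have phase_eq : phase (y, p) = phase (v, p) * phase (-(v - y), p) := by
    rw [← phase_add_left, neg_sub, add_sub_cancel]
  rw [phase_eq, displacedKernelIntegrand]
  ring

lemma integral_displacedIntegrand_symbolOf (t : ℝ) (hg : ContDiff ℝ ∞ g) (hS : IsCompact S)
    (vanish : ∀ w, ∀ y ∉ S, g (w, y) = 0) (hu : IsCc u) (q p : Q d) :
    ∫ v, phase (v, p) * displacedIntegrand t (symbolOf 1 g ∘ forgetDisplacement d) u q (v, p) =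
      ((2 * Real.pi) ^ (d + 1) : ℝ)⁻¹ • ∫ y, phase (y, p) * displacedKernel t g u q y := by
  have integrand_continuous : Continuous fun x : Q d × Q d =>
      phase (x.1, p) * displacedKernelIntegrand t g u q x.1 x.2 :=
    ((contDiff_phase_slice p).continuous.comp continuous_fst).mul
      (continuous_displacedKernelIntegrand t hg.continuous hS vanish hu.1.continuous q)
  have integrand_compact : HasCompactSupport fun x : Q d × Q d =>
      phase (x.1, p) * displacedKernelIntegrand t g u q x.1 x.2 :=
    (hasCompactSupport_displacedKernelIntegrand t hS vanish hu q).mul_left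
  have swap := integral_integral_swap_of_hasCompactSupport (μ := volume) (ν := volume)
    (f := fun y v => phase (y, p) * displacedKernelIntegrand t g u q y v)
    integrand_continuous integrand_compact
  calc ∫ v, phase (v, p) * displacedIntegrand t (symbolOf 1 g ∘ forgetDisplacement d) u q (v, p)
    _ = ∫ v, ((2 * Real.pi) ^ (d + 1) : ℝ)⁻¹ •
          ∫ y, phase (y, p) * displacedKernelIntegrand t g u q y v :=
      integral_congr_ae (.of_forall (phase_mul_displacedIntegrand_symbolOf t hg hS vanish u q p))
    _ = ((2 * Real.pi) ^ (d + 1) : ℝ)⁻¹ •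
          ∫ v, ∫ y, phase (y, p) * displacedKernelIntegrand t g u q y v := integral_smul _ _
    _ = ((2 * Real.pi) ^ (d + 1) : ℝ)⁻¹ • ∫ y, phase (y, p) * displacedKernel t g u q y := by
      rw [← swap]
      simp only [displacedKernel, integral_const_mul]

lemma displacedKernel_zero (t : ℝ) (hg : Continuous g) (hS : IsCompact S)
    (vanish : ∀ w, ∀ y ∉ S, g (w, y) = 0) (hu : IsCc u) (q : Q d) :
    displacedKernel t g u q 0 = displacedOp t g u q := by
  simp only [displacedKernel, displacedKernelIntegrand, fiberFourier, displacedOp, sub_zero,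
    ← integral_mul_const]
  refine (integral_integral_swap_of_hasCompactSupport ?_ ?_).trans ?_
  · have hphase := (contDiff_phase (d := d)).continuous
    have := hu.1.continuous
    unfold Function.uncurry
    fun_prop
  · refine .intro hS fun y hy => ?_
    simp [Function.uncurry, vanish _ y hy]
  · simp only [displacedIntegrand, mul_assoc]

lemma displacedOp_symbolOf_of_compact (t : ℝ) (hg : IsTemperedWith M φ g) (hS : IsCompact S)
    (vanish : ∀ w, ∀ y ∉ S, g (w, y) = 0) (hu : IsCc u) (q : Q d) :
    displacedOp t (symbolOf 1 g ∘ forgetDisplacement d) u q = displacedOp t g u q := by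
  have hgc := hg.contDiff.continuous
  obtain ⟨φ', hφ'⟩ := exists_isTemperedWith_symbolOf M hg.continuous_weight
  have two_pi_ne : ((2 * Real.pi) ^ (d + 1) : ℝ) ≠ 0 := (pow_pos Real.two_pi_pos _).ne'
  have hint := (hφ' g hg).integrable_integral_displacedIntegrand t hu q
  simp only [integral_displacedIntegrand_symbolOf t hg.contDiff hS vanish hu] at hint
  have hker := continuous_displacedKernel t hgc hS vanish hu q
  simp only [displacedOp, integral_displacedIntegrand_symbolOf t hg.contDiff hS vanish hu]
  rw [integral_smul, integral_integral_phase_mul hker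
    (hker.integrable_of_hasCompactSupport (hasCompactSupport_displacedKernel t hS vanish hu q))
    ((integrable_smul_iff (inv_ne_zero two_pi_ne) _).1 hint), ← Complex.real_smul,
    inv_smul_smul₀ two_pi_ne, displacedKernel_zero t hgc hS vanish hu q]
  rfl

end CompactSupport

/-! ### Truncation and rescaling of the momentum -/

section Truncation

variable {d M : ℕ} {φ : ℕ → Q d → ℝ} {g : Q d × (Q d × Q d) → ℂ} {u : Q d → ℂ}

/-- The amplitude `g(w, v, p)` cut off in `(v, p)`. -/
def truncate (n : ℕ) (g : Q d × (Q d × Q d) → ℂ) : Q d × (Q d × Q d) → ℂ :=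
  (fun x => cutoff (Q d × Q d) n x.2) * g

lemma exists_isTemperedWith_truncate (φ : ℕ → Q d → ℝ) (M : ℕ) :
    ∃ φ', ∀ g, IsTemperedWith M φ g → ∀ n, IsTemperedWith M φ' (truncate n g) := by
  have hχ := isCutoffSeq_cutoff (Q d × Q d)
  have bound (l : List (Coord d ⊕ Coord d ⊕ Coord d)) : ∃ K, ∀ n x,
      ‖iterDirD tripleVec l (fun x : Q d × (Q d × Q d) => cutoff (Q d × Q d) n x.2) x‖ ≤ K := by
    obtain ⟨K, hK⟩ := hχ.exists_bound (l.map fun c => (tripleVec c).2)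
    refine ⟨K, fun n x => ?_⟩
    have := iterDirD_comp_affine (hχ.contDiff n) (tripleVec (d := d))
      (ContinuousLinearMap.snd ℝ (Q d) (Q d × Q d)) 0 l
    simp only [zero_add, ContinuousLinearMap.coe_snd'] at this
    rw [this]
    exact hK n x.2
  choose K _ bχ using exists_derivBound_of_forall_bound bound
  refine ⟨fun N w => 2 ^ N * (K N * φ N w), fun g hg n =>
    ⟨fun N => ((hg.continuous_weight N).const_mul _).const_mul _,
      ((hχ.contDiff n).comp contDiff_snd).mul hg.contDiff, fun N => ?_⟩⟩
  refine ((bχ N n).mul (fun _ _ => zero_le_one) ((hχ.contDiff n).comp contDiff_snd) hg.contDiff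
    (hg.derivBound N)).mono (fun _ _ => zero_le_one) fun x => le_of_eq ?_
  ring

lemma tendsto_truncate (g : Q d × (Q d × Q d) → ℂ) (x : Q d × (Q d × Q d)) :
    Tendsto (fun n => truncate n g x) atTop (𝓝 (g x)) :=
  tendsto_const_nhds.congr' <| ((isCutoffSeq_cutoff _).eventually_eq_one x.2).mono fun n hn => by
    simp [truncate, hn.self_of_nhds]

lemma tendsto_symbolOf_truncate (hg : IsTempered M g) (x : Q d × Q d) :
    Tendsto (fun n => symbolOf 1 (truncate n g) x) atTop (𝓝 (symbolOf 1 g x)) := by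
  set χ : ℕ → Q d × Q d → ℂ := fun n y => cutoff (Q d × Q d) n ((0, x.2) + y)
  have hχ : IsCutoffSeq χ :=
    (isCutoffSeq_cutoff (Q d × Q d)).comp_affineEquiv (.refl ℝ _) (0, x.2)
  have hg' := hg.comp_shiftMap (ℏ := 1) (by simp)
  have symbolOf_eq (n : ℕ) : symbolOf 1 (truncate n g) x = ((2 * Real.pi) ^ (d + 1) : ℝ)⁻¹ •
      ∫ y, phase y * (χ n * fun y => g (shiftMap d 1 (x, y))) y := by
    have slice_eq : (fun y => truncate n g (shiftMap d 1 (x, y))) =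
        χ n * fun y => g (shiftMap d 1 (x, y)) := by
      funext y
      simp [truncate, shiftMap_apply, χ, Prod.add_def]
    rw [symbolOf, slice_eq]
    exact congrArg _ (oscInt_eq_integral_of_hasCompactSupport
      ((hχ.contDiff n).mul (hg'.contDiff_slice x)) (hχ.hasCompactSupport n).mul_right)
  simp only [symbolOf_eq]
  exact ((hg'.isOscAmplitude_slice x).tendsto_oscInt hχ).const_smul _

lemma displacedOp_symbolOf (hg : IsTemperedWith M φ g) (t : ℝ) (hu : IsCc u) (q : Q d) :
    displacedOp t (symbolOf 1 g ∘ forgetDisplacement d) u q = displacedOp t g u q := by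
  obtain ⟨φ₁, hφ₁⟩ := exists_isTemperedWith_truncate φ M
  obtain ⟨φ₂, hφ₂⟩ := exists_isTemperedWith_symbolOf M (hφ₁ g hg 0).continuous_weight
  have trunc_eq (n : ℕ) : displacedOp t (symbolOf 1 (truncate n g) ∘ forgetDisplacement d) u q =
      displacedOp t (truncate n g) u q :=
    displacedOp_symbolOf_of_compact t (hφ₁ g hg n)
      ((isCutoffSeq_cutoff (Q d × Q d)).hasCompactSupport n).isCompact
      (fun w y hy => mul_eq_zero_of_left (image_eq_zero_of_notMem_tsupport hy) _) hu q
  refine tendsto_nhds_unique (tendsto_displacedOp (fun n => hφ₂ _ (hφ₁ g hg n))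
    (fun x => tendsto_symbolOf_truncate hg.isTempered _) t hu q) ?_
  simp only [trunc_eq]
  exact tendsto_displacedOp (hφ₁ g hg) (tendsto_truncate g) t hu q

end Truncation

section Rescaling

variable {d M : ℕ} {t ℏ : ℝ} {φ : ℕ → Q d → ℝ} {g : Q d × (Q d × Q d) → ℂ}
  {a : Q d × Q d × Q d → ℂ} {u : Q d → ℂ}

/-- The map `(w, v, z) ↦ (w, v, ℏ z)`, reducing quantization with parameter `ℏ` to `ℏ = 1`. -/
def scaleMomentum (d : ℕ) (ℏ : ℝ) : Q d × (Q d × Q d) →L[ℝ] Q d × (Q d × Q d) :=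
  (ContinuousLinearMap.id ℝ _).prodMap
    ((ContinuousLinearMap.id ℝ _).prodMap (ℏ • ContinuousLinearMap.id ℝ _))

lemma scaleMomentum_apply (ℏ : ℝ) (x : Q d × (Q d × Q d)) :
    scaleMomentum d ℏ x = (x.1, (x.2.1, ℏ • x.2.2)) :=
  rfl

lemma scaleMomentum_tripleVec (ℏ : ℝ) (c : Coord d ⊕ Coord d ⊕ Coord d) :
    scaleMomentum d ℏ (tripleVec c) =
      Sum.elim (fun _ => (1 : ℝ)) (Sum.elim (fun _ => 1) fun _ => ℏ) c • tripleVec c := by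
  rcases c with j | j | j <;> simp [scaleMomentum_apply, tripleVec, pairVec]

lemma IsTemperedWith.comp_scaleMomentum (hg : IsTemperedWith M φ g) (hℏ : |ℏ| ≤ 1) :
    IsTemperedWith M (fun N w => φ N w * (2 ^ (d + 1)) ^ M) (g ∘ scaleMomentum d ℏ) where
  continuous_weight N := (hg.continuous_weight N).mul_const _
  contDiff := hg.contDiff.comp (scaleMomentum d ℏ).contDiff
  derivBound N := by
    have bound := (hg.derivBound N).comp_affine_of_smul (κ := 1) (fun _ _ => zero_le_one)
      (scaleMomentum d ℏ) 0 _ id (scaleMomentum_tripleVec ℏ)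
      (fun c x => by rcases c with j | j | j <;> simp [hℏ]) hg.contDiff
    simp only [zero_add, scaleMomentum_apply] at bound
    refine bound.mono (fun _ _ => zero_le_one) fun x => ?_
    have prodBracket_le := prodBracket_add_smul_le hℏ 0 x.2.2
    have prodBracket_zero : prodBracket (0 : Q d) = 1 := by simp [prodBracket]
    rw [zero_add, prodBracket_zero, mul_one] at prodBracket_le
    have := hg.weight_nonneg N x.1
    have := (prodBracket_pos (ℏ • x.2.2)).le
    rw [mul_assoc, ← mul_pow]
    gcongr

lemma symbolOf_comp_scaleMomentum (ℏ : ℝ) (g : Q d × (Q d × Q d) → ℂ) :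
    symbolOf 1 (g ∘ scaleMomentum d ℏ) ∘ forgetDisplacement d =
      (symbolOf ℏ g ∘ forgetDisplacement d) ∘ scaleMomentum d ℏ := by
  funext x
  simp only [symbolOf, Function.comp_apply, shiftMap_apply, scaleMomentum_apply, one_smul,
    smul_add]
  rfl

lemma ephase_smul (hℏ : ℏ ≠ 0) (z v : Q d) : ephase ℏ (ℏ • z) v = phase (v, z) := by
  have : (ℏ : ℂ) ≠ 0 := Complex.ofReal_ne_zero.2 hℏ
  simp only [ephase, phase, qdot_eq_sum, map_smul, smul_eq_mul, mul_assoc, ← mul_sum,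
    Complex.ofReal_mul]
  congr 1
  field_simp

lemma opAmp_eq_smul_displacedOp (hℏ : 0 < ℏ) (t : ℝ) (a : Q d × Q d × Q d → ℂ) (u : Q d → ℂ)
    (q : Q d) : OpAmp ℏ a u q = ((2 * Real.pi) ^ (d + 1) : ℝ)⁻¹ •
      displacedOp t ((a ∘ midpointMap d t) ∘ scaleMomentum d ℏ) u q := by
  set F : Q d → ℂ := fun p => ∫ q', a (q, p, q') * ephase ℏ p (q - q') * u q'
  have fiber (z : Q d) : ∫ v, phase (v, z) *
      displacedIntegrand t ((a ∘ midpointMap d t) ∘ scaleMomentum d ℏ) u q (v, z) = F (ℏ • z) := by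
    refine .trans ?_ (integral_sub_left_eq_self
      (fun q' => a (q, ℏ • z, q') * ephase ℏ (ℏ • z) (q - q') * u q') volume q)
    refine integral_congr_ae (.of_forall fun v => ?_)
    have point_eq : midpointMap d t (scaleMomentum d ℏ (q - (1 - t) • v, (v, z))) =
        (q, (ℏ • z, q - v)) := by
      simp only [midpointMap_apply, scaleMomentum_apply, Prod.mk.injEq, true_and]
      constructor <;> module
    simp only [displacedIntegrand, Function.comp_apply, point_eq, ephase_smul hℏ.ne',
      sub_sub_cancel]
    ring
  rw [displacedOp, integral_congr_ae (.of_forall fiber), Measure.integral_comp_smul, finrank_Q,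
    abs_of_pos (by positivity), smul_smul, ← mul_inv, ← mul_pow]
  rfl

lemma op_eq_smul_displacedOp (hℏ : 0 < ℏ) (t : ℝ) (b : Q d × Q d → ℂ) (u : Q d → ℂ)
    (q : Q d) : Op ℏ t b u q = ((2 * Real.pi) ^ (d + 1) : ℝ)⁻¹ •
      displacedOp t ((b ∘ forgetDisplacement d) ∘ scaleMomentum d ℏ) u q := by
  have comp_eq : (fun x : Q d × Q d × Q d => b (basePoint t x, x.2.1)) ∘ midpointMap d t =
      b ∘ forgetDisplacement d := by
    funext x
    simp only [Function.comp_apply, basePoint_midpointMap]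
    rfl
  rw [← comp_eq, ← opAmp_eq_smul_displacedOp hℏ]
  rfl

lemma abs_le_one_of_mem_Ioc (hℏ : ℏ ∈ Set.Ioc (0 : ℝ) 1) : |ℏ| ≤ 1 := by
  rw [abs_of_pos hℏ.1]
  exact hℏ.2

lemma opAmp_eq_op_symbolOf (ha : IsTemperedWith M φ (a ∘ midpointMap d t)) (hℏ : ℏ ∈ Set.Ioc 0 1)
    (hu : IsCc u) (q : Q d) : OpAmp ℏ a u q = Op ℏ t (symbolOf ℏ (a ∘ midpointMap d t)) u q := by
  rw [opAmp_eq_smul_displacedOp hℏ.1 t, op_eq_smul_displacedOp hℏ.1,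
    ← symbolOf_comp_scaleMomentum,
    displacedOp_symbolOf (ha.comp_scaleMomentum (abs_le_one_of_mem_Ioc hℏ)) t hu]

end Rescaling

lemma isSymbol_symbolOf_comp_midpointMap {d : ℕ} {f : ℝ → ℝ} (hfc : Continuous f)
    (hf : ∀ r, 1 ≤ f r) {m t ℏ : ℝ} (hℏ : |ℏ| ≤ 1) {a : Q d × Q d × Q d → ℂ}
    (ha : IsAmp f m t a) :
    IsSymbol f m (symbolOf ℏ (a ∘ midpointMap d t)) := by
  obtain ⟨φ, hφ⟩ := exists_isTemperedWith_comp_midpointMap hfc hf ha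
  refine isSymbol_of_derivBound hf (contDiff_symbolOf hφ.isTempered hℏ) fun N => ?_
  obtain ⟨C, N', -, bound⟩ := exists_derivBound_symbolOf_comp_midpointMap hfc hf d m t N
  exact ⟨_, bound ℏ a hℏ ha⟩

lemma exists_symNorm_symbolOf_comp_midpointMap_le {f : ℝ → ℝ} (hfc : Continuous f)
    (hf : ∀ r, 1 ≤ f r) (d : ℕ) (m t : ℝ) (N : ℕ) :
    ∃ C > (0 : ℝ), ∃ N' : ℕ, ∀ ℏ (a : Q d × Q d × Q d → ℂ), |ℏ| ≤ 1 → IsAmp f m t a →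
      symNorm f m N (symbolOf ℏ (a ∘ midpointMap d t)) ≤ C * ampNorm f m t N' a := by
  obtain ⟨C, N', C_nonneg, bound⟩ := exists_derivBound_symbolOf_comp_midpointMap hfc hf d m t N
  refine ⟨#(idxSet d N) ^ 2 * C + 1, by positivity, N', fun ℏ a hℏ ha => ?_⟩
  have := symNorm_le_of_derivBound hf (bound ℏ a hℏ ha)
  linarith [ampNorm_nonneg hf ha N']

theorem statement4_general (d : ℕ) (f : ℝ → ℝ) (hfc : Continuous f) (hf : ∀ r, 1 ≤ f r)
    (m t : ℝ) :
    ∃ T : ℝ → (Q d × Q d × Q d → ℂ) → (Q d × Q d → ℂ),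
      (∀ ℏ ∈ Set.Ioc (0 : ℝ) 1, ∀ a : Q d × Q d × Q d → ℂ, IsAmp f m t a →
        IsSymbol f m (T ℏ a) ∧ ∀ u : Q d → ℂ, IsCc u → ∀ q : Q d,
          OpAmp ℏ a u q = Op ℏ t (T ℏ a) u q) ∧
      (∀ ℏ ∈ Set.Ioc (0 : ℝ) 1, ∀ a b : Q d × Q d × Q d → ℂ,
        IsAmp f m t a → IsAmp f m t b → T ℏ (a + b) = T ℏ a + T ℏ b) ∧
      (∀ ℏ ∈ Set.Ioc (0 : ℝ) 1, ∀ (c : ℂ) (a : Q d × Q d × Q d → ℂ),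
        IsAmp f m t a → T ℏ (c • a) = c • T ℏ a) ∧
      (∀ N : ℕ, ∃ C > (0 : ℝ), ∃ N' : ℕ, ∀ ℏ ∈ Set.Ioc (0 : ℝ) 1,
        ∀ a : Q d × Q d × Q d → ℂ, IsAmp f m t a →
          symNorm f m N (T ℏ a) ≤ C * ampNorm f m t N' a) := by
  have tempered (a : Q d × Q d × Q d → ℂ) (ha : IsAmp f m t a) :=
    exists_isTemperedWith_comp_midpointMap hfc hf ha
  refine ⟨fun ℏ a => symbolOf ℏ (a ∘ midpointMap d t), fun ℏ hℏ a ha => ⟨?_, fun u hu q => ?_⟩,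
    fun ℏ hℏ a b ha hb => ?_, fun ℏ hℏ c a ha => ?_, fun N => ?_⟩
  · exact isSymbol_symbolOf_comp_midpointMap hfc hf (abs_le_one_of_mem_Ioc hℏ) ha
  · obtain ⟨φ, hφ⟩ := tempered a ha
    exact opAmp_eq_op_symbolOf hφ hℏ hu q
  · obtain ⟨φ, hφ⟩ := tempered a ha
    obtain ⟨ψ, hψ⟩ := tempered b hb
    exact symbolOf_add hφ.isTempered hψ.isTempered (abs_le_one_of_mem_Ioc hℏ)
  · obtain ⟨φ, hφ⟩ := tempered a ha
    exact symbolOf_const_smul hφ.isTempered (abs_le_one_of_mem_Ioc hℏ) c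
  · obtain ⟨C, C_pos, N', bound⟩ :=
      exists_symNorm_symbolOf_comp_midpointMap_le hfc hf d m t N
    exact ⟨C, C_pos, N', fun ℏ hℏ a ha => bound ℏ a (abs_le_one_of_mem_Ioc hℏ) ha⟩

/-- every amplitude can be quantized by a symbol, with a linear continuous
assignment `a ↦ b^t`, uniformly in `ℏ ∈ (0, 1]`. -/
theorem statement4 (d : ℕ) (f : ℝ → ℝ) (hf : GoodF f) (m t : ℝ)
    (ht : t ∈ Set.Icc (0 : ℝ) 1) :
    ∃ T : ℝ → (Q d × Q d × Q d → ℂ) → (Q d × Q d → ℂ),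
      (∀ ℏ ∈ Set.Ioc (0 : ℝ) 1, ∀ a : Q d × Q d × Q d → ℂ, IsAmp f m t a →
        IsSymbol f m (T ℏ a) ∧ ∀ u : Q d → ℂ, IsCc u → ∀ q : Q d,
          OpAmp ℏ a u q = Op ℏ t (T ℏ a) u q) ∧
      (∀ ℏ ∈ Set.Ioc (0 : ℝ) 1, ∀ a b : Q d × Q d × Q d → ℂ,
        IsAmp f m t a → IsAmp f m t b → T ℏ (a + b) = T ℏ a + T ℏ b) ∧
      (∀ ℏ ∈ Set.Ioc (0 : ℝ) 1, ∀ (c : ℂ) (a : Q d × Q d × Q d → ℂ),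
        IsAmp f m t a → T ℏ (c • a) = c • T ℏ a) ∧
      (∀ N : ℕ, ∃ C > (0 : ℝ), ∃ N' : ℕ, ∀ ℏ ∈ Set.Ioc (0 : ℝ) 1,
        ∀ a : Q d × Q d × Q d → ℂ, IsAmp f m t a →
          symNorm f m N (T ℏ a) ≤ C * ampNorm f m t N' a) :=
  statement4_general d f hf.1.continuous hf.2.1 m t

end
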